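/- arXiv:1801.09789 — 6 statements merged into one kernel-verified Lean document; each statement's English description precedes it below -/
import Mathlib

section
/- Let T be a self-adjoint operator in a complex Hilbert space H whose spectrum lies inside pairwise disjoint intervals Δ_k = [α_{2k−1}, α_{2k}] ⊂ ℝ, k ∈ ℤ, such that inf_{k∈ℤ} (α_{2k+1} − α_{2k}) = d > 0 (i.e., the gaps between consecutive intervals have length at least d). Let B be a bounded (in general non-self-adjoint) operator on H with ‖B‖ = b* < d/2. Then for every ε ∈ (b*, d/2) the spectrum of the perturbed operator A = T + B lies in the union ⋃_k U_ε(Δ_k), where the U_ε(Δ_k) are the mutually disjoint ε-neighborhoods of the intervals Δ_k in ℂ; and if Q_k = −(1/2πi)∮_{Γ_k} (A − λ)^{−1} dλ with Γ_k = ∂U_ε(Δ_k) are the Riesz projections onto the invariant subspaces of A corresponding to the parts of the spectrum in U_ε(Δ_k), then the subspaces L_k = Q_k(H), k ∈ ℤ, form an unconditional basis of subspaces of H. -/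
noncomputable section

variable {H : Type*} [NormedAddCommGroup H] [InnerProductSpace ℂ H] [CompleteSpace H]

/-- `R` is a two-sided bounded inverse of `T - z` (so `z` is in the resolvent set of `T`). -/
def IsResolventOf (T : H →ₗ.[ℂ] H) (z : ℂ) (R : H →L[ℂ] H) : Prop :=
  (∀ x : T.domain, R (T x - z • (x : H)) = (x : H)) ∧
  (∀ y : H, ∃ hy : R y ∈ T.domain, T ⟨R y, hy⟩ - z • (R y) = y)

/-- The resolvent set of the (in general unbounded) operator `T`. -/
def pmResolventSet (T : H →ₗ.[ℂ] H) : Set ℂ := {z | ∃ R, IsResolventOf T z R}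

/-- The spectrum of the (in general unbounded) operator `T`. -/
def pmSpectrum (T : H →ₗ.[ℂ] H) : Set ℂ := (pmResolventSet T)ᶜ

/-- The operator sum `A = T + B` of an unbounded operator `T` and a bounded operator `B`,
defined on the domain of `T`. -/
def pmSumCLM (T : H →ₗ.[ℂ] H) (B : H →L[ℂ] H) : H →ₗ.[ℂ] H :=
  ⟨T.domain, T.toFun + B.toLinearMap.comp T.domain.subtype⟩

/-- `A - z` restricts to a bijection (with bounded inverse `R` preserving `V`) of the part
of `A` in the `A`-invariant subspace `V`. -/
def MapsResolvently (A : H →ₗ.[ℂ] H) (V : Submodule ℂ H) (z : ℂ) : Prop :=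
  ∃ R : H →L[ℂ] H, (∀ y ∈ V, R y ∈ V) ∧
    (∀ x : A.domain, (x : H) ∈ V → R (A x - z • (x : H)) = (x : H)) ∧
    (∀ y ∈ V, ∃ hy : R y ∈ A.domain, A ⟨R y, hy⟩ - z • (R y) = y)

/-- `Q` is the Riesz projection of `A` associated with the part of the spectrum of `A` in `U`:
`Q` is a bounded projection commuting with `A` such that the spectrum of the part of `A` in the
invariant subspace `ran Q` lies in `U` and the spectrum of the part of `A` in `ker Q` lies
outside `U`.  (This characterizes the contour-integral Riesz projection
`Q = −(2πi)⁻¹ ∮_{∂U} (A−λ)⁻¹ dλ`.) -/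
def IsRieszProjFor (A : H →ₗ.[ℂ] H) (U : Set ℂ) (Q : H →L[ℂ] H) : Prop :=
  Q.comp Q = Q ∧
  (∀ x : A.domain, ∃ hQx : Q (x : H) ∈ A.domain, A ⟨Q (x : H), hQx⟩ = Q (A x)) ∧
  (∀ z ∉ U, MapsResolvently A (LinearMap.range (Q : H →ₗ[ℂ] H)) z) ∧
  (∀ z ∈ U, MapsResolvently A (LinearMap.ker (Q : H →ₗ[ℂ] H)) z)

set_option linter.unusedSectionVars false
open Metric

section BanachAlg
variable {𝔄 : Type*} [NormedRing 𝔄] [NormedAlgebra ℂ 𝔄]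

/-- the pencil `1 - (z-c) S` -/
def pcl (S : 𝔄) (c z : ℂ) : 𝔄 := 1 - (z - c) • S

/-- resolvent built from the resolvent `S` at `c` -/
def rsv (S : 𝔄) (c z : ℂ) : 𝔄 := S * Ring.inverse (pcl S c z)

/-- `z` is a regular point -/
def Gd (S : 𝔄) (c z : ℂ) : Prop := IsUnit (pcl S c z)

lemma commute_pcl {X S : 𝔄} (h : Commute X S) (c z : ℂ) : Commute X (pcl S c z) :=
  (Commute.one_right X).sub_right (h.smul_right _)

lemma commute_inverse {X Y : 𝔄} (h : Commute X Y) : Commute X (Ring.inverse Y) := by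
  by_cases hY : IsUnit Y
  · obtain ⟨u, rfl⟩ := hY
    rw [Ring.inverse_unit]
    exact h.units_inv_right
  · rw [Ring.inverse_non_unit _ hY]; exact Commute.zero_right _

lemma commute_rsv {X S : 𝔄} (h : Commute X S) (c z : ℂ) : Commute X (rsv S c z) :=
  h.mul_right (commute_inverse (commute_pcl h c z))

lemma rsv_mul_pcl {S : 𝔄} {c z : ℂ} (h : Gd S c z) : rsv S c z * pcl S c z = S := by
  rw [rsv, mul_assoc, Ring.inverse_mul_cancel _ h, mul_one]

lemma pcl_mul_rsv {S : 𝔄} {c z : ℂ} (h : Gd S c z) : pcl S c z * rsv S c z = S := by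
  rw [← (commute_rsv (commute_pcl (Commute.refl S) c z).symm c z).eq.symm, rsv_mul_pcl h]

lemma rsv_unique {S R : 𝔄} {c z : ℂ} (h : Gd S c z) {Y : 𝔄} (hR : pcl S c z * R = S * Y) :
    R = rsv S c z * Y := by
  have h1 : pcl S c z * (rsv S c z * Y) = S * Y := by rw [← mul_assoc, pcl_mul_rsv h]
  exact h.mul_left_cancel (hR.trans h1.symm)

lemma pcl_mul_rsv' {S : 𝔄} {c z : ℂ} (w : ℂ) (h : Gd S c z) :
    pcl S c w * rsv S c z = S + (z - w) • (S * rsv S c z) := by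
  have : pcl S c w = pcl S c z + (z - w) • S := by
    simp only [pcl]; module
  rw [this, add_mul, pcl_mul_rsv h, smul_mul_assoc]

/-- invertibility of `A - w` on the range of the projection `G`. -/
def RInv (S : 𝔄) (c : ℂ) (G : 𝔄) (w : ℂ) : Prop :=
  ∃ K : 𝔄, pcl S c w * K = S * G ∧ K * pcl S c w = S * G

lemma RInv.of_gd {S : 𝔄} {c w : ℂ} (h : Gd S c w) {G : 𝔄} (hG : Commute G S) : RInv S c G w := by
  refine ⟨rsv S c w * G, by rw [← mul_assoc, pcl_mul_rsv h], ?_⟩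
  rw [mul_assoc, (commute_pcl hG c w).eq, ← mul_assoc, rsv_mul_pcl h]

lemma RInv.mono {S : 𝔄} {c w : ℂ} {G G' : 𝔄} (h : RInv S c G w) (hG' : Commute G' S)
    (h2 : G' * G' = G') (h3 : G * G' = G') :
    RInv S c G' w := by
  obtain ⟨K, h5, h6⟩ := h
  have hc := commute_pcl hG' c w
  have e : G' * (S * G) * G' = S * G' := by
    rw [mul_assoc, mul_assoc S, h3, ← mul_assoc, hG'.eq, mul_assoc, h2]
  refine ⟨G' * K * G', ?_, ?_⟩
  · rw [← mul_assoc, ← mul_assoc, ← hc.eq, mul_assoc G' _ K, h5, e]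
  · rw [mul_assoc, hc.eq, ← mul_assoc, mul_assoc G' K, h6, e]

variable [CompleteSpace 𝔄]

lemma quasi {G a : 𝔄} (h1 : G * G = G) (h2 : a * G = a) (h3 : G * a = a)
    (h : ∀ w : ℂ, ∃ K, (a - w • G) * K = G ∧ K * (a - w • G) = G) : G = 0 := by
  have key : ∀ w : ℂ, ∃ K, (a - w • G) * K = G ∧ K * (a - w • G) = G ∧ K * G = K ∧ G * K = K := by
    intro w
    obtain ⟨K, k1, k2⟩ := h w
    have e1 : (a - w • G) * G = a - w • G := by rw [sub_mul, h2, smul_mul_assoc, h1]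
    have e2 : G * (a - w • G) = a - w • G := by rw [mul_sub, h3, mul_smul_comm, h1]
    refine ⟨G * K * G, ?_, ?_, by rw [mul_assoc, h1], by rw [← mul_assoc, ← mul_assoc, h1]⟩
    · rw [← mul_assoc, ← mul_assoc, e1, k1, h1]
    · rw [mul_assoc, e2, mul_assoc, k2, h1]
  have hsp : ∀ w : ℂ, w ≠ 0 → w ∉ spectrum ℂ a := by
    intro w hw hmem
    apply hmem
    obtain ⟨K, k1, k2, k3, k4⟩ := key w
    have hsub : a - w • G = (a - w • 1) * G := by rw [sub_mul, h2, smul_mul_assoc, one_mul]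
    have hsub' : a - w • G = G * (a - w • 1) := by rw [mul_sub, h3, mul_smul_comm, mul_one]
    have f1 : (a - w • 1) * K = G := by rw [← k4, ← mul_assoc, ← hsub, k1]
    have f2 : K * (a - w • 1) = G := by rw [← k3, mul_assoc, ← hsub', k2]
    have f3 : (a - w • (1:𝔄)) * (1 - G) = -(w • (1 - G)) := by
      rw [mul_sub, mul_one, sub_mul, h2, smul_mul_assoc, one_mul, smul_sub]; abel
    have f4 : (1 - G) * (a - w • (1:𝔄)) = -(w • (1 - G)) := by
      rw [sub_mul, one_mul, mul_sub, h3, mul_smul_comm, mul_one, smul_sub]; abel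
    have hu : IsUnit (a - w • (1:𝔄)) := by
      refine ⟨⟨a - w • 1, K - w⁻¹ • (1 - G), ?_, ?_⟩, rfl⟩
      · rw [mul_sub, f1, mul_smul_comm, f3, smul_neg, smul_smul, inv_mul_cancel₀ hw, one_smul]; abel
      · rw [sub_mul, f2, smul_mul_assoc, f4, smul_neg, smul_smul, inv_mul_cancel₀ hw, one_smul]; abel
    have : algebraMap ℂ 𝔄 w - a = -(a - w • 1) := by rw [Algebra.algebraMap_eq_smul_one]; abel
    rw [spectrum.mem_resolventSet_iff, this]; exact hu.neg
  have hr : spectralRadius ℂ a = 0 := by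
    rw [spectralRadius]
    simp only [ENNReal.iSup_eq_zero]
    intro w hw
    by_contra hne
    exact hsp w (by simpa using hne) hw
  have ht := spectrum.pow_norm_pow_one_div_tendsto_nhds_spectralRadius a
  rw [hr] at ht
  obtain ⟨K, k1, k2, k3, k4⟩ := key 0
  simp only [zero_smul, sub_zero] at k1 k2
  have hcom : Commute a K := k1.trans k2.symm
  have hpow : ∀ n : ℕ, a ^ (n+1) * K ^ (n+1) = G := by
    intro n
    rw [← hcom.mul_pow, k1]
    exact (show IsIdempotentElem G from h1).pow_succ_eq n
  set δ : ℝ := (2 * (‖K‖ + 1))⁻¹ with hδ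
  have hδpos : 0 < δ := by positivity
  have hev : ∀ᶠ n : ℕ in Filter.atTop, ENNReal.ofReal (‖a ^ n‖ ^ (1 / n : ℝ)) < ENNReal.ofReal δ :=
    ht.eventually_lt_const (by simpa using hδpos)
  have hb : ∀ᶠ n : ℕ in Filter.atTop, ‖G‖ ≤ (1/2 : ℝ) ^ n := by
    filter_upwards [hev, Filter.eventually_gt_atTop 0] with n hn hn0
    obtain ⟨m, rfl⟩ : ∃ m, n = m + 1 := ⟨n - 1, by omega⟩
    rw [ENNReal.ofReal_lt_ofReal_iff hδpos] at hn
    have hna : ‖a ^ (m+1)‖ ≤ δ ^ (m+1) := by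
      have h0 : (0:ℝ) ≤ ‖a ^ (m+1)‖ ^ (1 / ((m+1 : ℕ):ℝ)) := by positivity
      have := pow_le_pow_left₀ h0 hn.le (m+1)
      rwa [one_div, Real.rpow_inv_natCast_pow (norm_nonneg _) (by omega)] at this
    calc ‖G‖ = ‖a ^ (m+1) * K ^ (m+1)‖ := by rw [hpow]
      _ ≤ ‖a ^ (m+1)‖ * ‖K ^ (m+1)‖ := norm_mul_le _ _
      _ ≤ δ ^ (m+1) * ‖K‖ ^ (m+1) := by
          gcongr
          exact norm_pow_le' _ (by omega)
      _ = (δ * ‖K‖) ^ (m+1) := by rw [mul_pow]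
      _ ≤ (1/2) ^ (m+1) := by
          gcongr
          rw [hδ, inv_mul_le_iff₀ (by positivity)]
          linarith [norm_nonneg K]
  have : ‖G‖ ≤ 0 := by
    refine ge_of_tendsto (tendsto_pow_atTop_nhds_zero_of_lt_one (by norm_num) (by norm_num : (1/2:ℝ) < 1)) hb
  simpa using this

lemma empty_spec {S G M : 𝔄} {c : ℂ} (h1 : G * G = G) (hG : Commute G S) (hM : Commute M S)
    (hSM : S * M = G) (h : ∀ w, RInv S c G w) : G = 0 := by
  set a := G * M * G with ha
  have aS : a * S = G := by
    rw [ha, mul_assoc, hG.eq, ← mul_assoc, mul_assoc G M S, hM.eq, hSM, h1, h1]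
  have Sa : S * a = G := by
    rw [ha, ← mul_assoc, ← mul_assoc, ← hG.eq, mul_assoc G S M, hSM, h1, h1]
  refine quasi (a := a) h1 (by rw [ha, mul_assoc, h1]) (by rw [ha, ← mul_assoc, ← mul_assoc, h1]) ?_
  intro w
  obtain ⟨K, k1, k2⟩ := h (w + c)
  have e1 : a * pcl S c (w + c) = a - w • G := by
    rw [pcl, mul_sub, mul_one, mul_smul_comm, aS]; congr 2; ring
  have e2 : pcl S c (w + c) * a = a - w • G := by
    rw [pcl, sub_mul, one_mul, smul_mul_assoc, Sa]; congr 2; ring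
  refine ⟨K, ?_, ?_⟩
  · rw [← e1, mul_assoc, k1, ← mul_assoc, aS, h1]
  · rw [← e2, ← mul_assoc, k2, mul_assoc,
      show G * a = a by rw [ha, ← mul_assoc, ← mul_assoc, h1], Sa]

lemma differentiableAt_rsv {S : 𝔄} {c z : ℂ} (h : Gd S c z) :
    DifferentiableAt ℂ (rsv S c) z := by
  have h1 : DifferentiableAt ℂ (pcl S c) z := by
    unfold pcl; fun_prop
  have h2 := (differentiableAt_inverse (𝕜 := ℂ) h).comp z h1
  exact (differentiableAt_const S).mul h2

end BanachAlg

section Contour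

lemma clm_circleIntegral {E F : Type*} [NormedAddCommGroup E] [NormedSpace ℂ E] [CompleteSpace E]
    [NormedAddCommGroup F] [NormedSpace ℂ F] [CompleteSpace F] (L : E →L[ℂ] F) {f : ℂ → E} {m : ℂ}
    {ρ : ℝ} (hf : CircleIntegrable f m ρ) :
    (∮ z in C(m, ρ), L (f z)) = L (∮ z in C(m, ρ), f z) := by
  simp only [circleIntegral]
  rw [← ContinuousLinearMap.intervalIntegral_comp_comm L hf.out]
  simp

variable {𝔄 : Type*} [NormedRing 𝔄] [NormedAlgebra ℂ 𝔄] [CompleteSpace 𝔄]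

/-- contour integral of the resolvent with a weight -/
def rzW (S : 𝔄) (c m : ℂ) (ρ : ℝ) (g : ℂ → ℂ) : 𝔄 :=
  -((2 * Real.pi * Complex.I : ℂ)⁻¹ • ∮ z in C(m, ρ), g z • rsv S c z)

/-- Riesz projection -/
def rzQ (S : 𝔄) (c m : ℂ) (ρ : ℝ) : 𝔄 := rzW S c m ρ (fun _ => 1)

/-- partial resolvent -/
def rzK (S : 𝔄) (c m : ℂ) (ρ : ℝ) (w : ℂ) : 𝔄 := rzW S c m ρ (fun z => (z - w)⁻¹)

lemma continuousOn_rsv {S : 𝔄} {c : ℂ} {s : Set ℂ} (hg : ∀ z ∈ s, Gd S c z) :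
    ContinuousOn (rsv S c) s := fun z hz =>
  (differentiableAt_rsv (hg z hz)).continuousAt.continuousWithinAt

lemma circleIntegrable_w {S : 𝔄} {c m : ℂ} {ρ : ℝ} (hρ : 0 < ρ)
    (hg : ∀ z ∈ sphere m ρ, Gd S c z) {g : ℂ → ℂ} (hgc : ContinuousOn g (sphere m ρ)) :
    CircleIntegrable (fun z => g z • rsv S c z) m ρ :=
  ContinuousOn.circleIntegrable hρ.le (hgc.smul (continuousOn_rsv hg))

lemma commute_rzW {S X : 𝔄} (hX : Commute X S) {c m : ℂ} {ρ : ℝ} (hρ : 0 < ρ)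
    (hg : ∀ z ∈ sphere m ρ, Gd S c z) {g : ℂ → ℂ} (hgc : ContinuousOn g (sphere m ρ)) :
    Commute X (rzW S c m ρ g) := by
  have hi := circleIntegrable_w hρ hg hgc
  have h1 := clm_circleIntegral (ContinuousLinearMap.mul ℂ 𝔄 X) hi
  have h2 := clm_circleIntegral ((ContinuousLinearMap.mul ℂ 𝔄).flip X) hi
  simp only [ContinuousLinearMap.mul_apply', ContinuousLinearMap.flip_apply] at h1 h2
  unfold rzW
  refine Commute.neg_right (Commute.smul_right ?_ _)
  rw [Commute, SemiconjBy, ← h1, ← h2]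
  congr 1
  ext z
  rw [mul_smul_comm, smul_mul_assoc, (commute_rsv hX c z).eq]

lemma contOn_inv {m w : ℂ} {ρ : ℝ} (hw : w ∉ sphere m ρ) :
    ContinuousOn (fun z : ℂ => (z - w)⁻¹) (sphere m ρ) := by
  refine ContinuousOn.inv₀ (by fun_prop) ?_
  intro z hz h
  rw [sub_eq_zero] at h; subst h; exact hw hz

lemma pcl_rzK {S : 𝔄} {c m w : ℂ} {ρ : ℝ} (hρ : 0 < ρ)
    (hg : ∀ z ∈ sphere m ρ, Gd S c z) (hw : w ∉ sphere m ρ) :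
    pcl S c w * rzK S c m ρ w =
      S * (rzQ S c m ρ) - ((2 * Real.pi * Complex.I : ℂ)⁻¹ * ∮ z in C(m, ρ), (z - w)⁻¹) • S := by
  have hi := circleIntegrable_w hρ hg (contOn_inv hw)
  have hi1 := circleIntegrable_w hρ hg (continuousOn_const (c := (1:ℂ)))
  have h1 := clm_circleIntegral (ContinuousLinearMap.mul ℂ 𝔄 (pcl S c w)) hi
  have h2 := clm_circleIntegral (ContinuousLinearMap.mul ℂ 𝔄 S) hi1
  simp only [ContinuousLinearMap.mul_apply'] at h1 h2
  have h3 : (∮ z in C(m, ρ), pcl S c w * ((z - w)⁻¹ • rsv S c z)) =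
      ∮ z in C(m, ρ), ((z - w)⁻¹ • S + S * ((1:ℂ) • rsv S c z)) := by
    refine circleIntegral.integral_congr hρ.le ?_
    intro z hz
    have hzw : z - w ≠ 0 := by
      intro h; rw [sub_eq_zero] at h; subst h; exact hw hz
    simp only
    rw [mul_smul_comm, pcl_mul_rsv' w (hg z hz), smul_add, smul_smul, inv_mul_cancel₀ hzw,
      mul_smul_comm]
  rw [circleIntegral.integral_add] at h3
  · rw [circleIntegral.integral_smul_const, h2] at h3
    rw [rzK, rzQ, rzW, rzW, mul_neg, mul_smul_comm, ← h1, h3, mul_neg, mul_smul_comm, smul_add,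
      smul_smul]
    abel
  · exact ContinuousOn.circleIntegrable hρ.le ((contOn_inv hw).smul continuousOn_const)
  · exact ContinuousOn.circleIntegrable hρ.le
      (continuousOn_const.mul (continuousOn_const.smul (continuousOn_rsv hg)))

lemma two_pi_I_ne : (2 * Real.pi * Complex.I : ℂ) ≠ 0 := by
  simp [Real.pi_ne_zero]

lemma pcl_rzK_in {S : 𝔄} {c m w : ℂ} {ρ : ℝ} (hρ : 0 < ρ)
    (hg : ∀ z ∈ sphere m ρ, Gd S c z) (hw : w ∈ ball m ρ) :
    pcl S c w * rzK S c m ρ w = S * (rzQ S c m ρ - 1) := by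
  rw [pcl_rzK hρ hg, circleIntegral.integral_sub_inv_of_mem_ball hw, inv_mul_cancel₀ two_pi_I_ne,
    one_smul, mul_sub, mul_one]
  intro h; rw [mem_sphere] at h; rw [mem_ball] at hw; linarith

lemma integral_sub_inv_out {m w : ℂ} {ρ : ℝ} (hρ : 0 < ρ) (hw : ρ < dist w m) :
    (∮ z in C(m, ρ), (z - w)⁻¹) = 0 := by
  refine DiffContOnCl.circleIntegral_eq_zero hρ.le ?_
  refine DifferentiableOn.diffContOnCl (s := ball m ρ) (fun z hz => ?_)
  refine (DifferentiableAt.inv (by fun_prop) ?_).differentiableWithinAt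
  intro h; rw [sub_eq_zero] at h; subst h
  have := closure_ball_subset_closedBall hz
  rw [mem_closedBall] at this; linarith

lemma pcl_rzK_out {S : 𝔄} {c m w : ℂ} {ρ : ℝ} (hρ : 0 < ρ)
    (hg : ∀ z ∈ sphere m ρ, Gd S c z) (hw : ρ < dist w m) :
    pcl S c w * rzK S c m ρ w = S * rzQ S c m ρ := by
  rw [pcl_rzK hρ hg, integral_sub_inv_out hρ hw, mul_zero, zero_smul, sub_zero]
  intro h; rw [mem_sphere] at h; linarith

lemma commute_rzQ {S X : 𝔄} (hX : Commute X S) {c m : ℂ} {ρ : ℝ} (hρ : 0 < ρ)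
    (hg : ∀ z ∈ sphere m ρ, Gd S c z) : Commute X (rzQ S c m ρ) :=
  commute_rzW hX hρ hg continuousOn_const

lemma RInv_out {S : 𝔄} {c m w : ℂ} {ρ : ℝ} (hρ : 0 < ρ)
    (hg : ∀ z ∈ sphere m ρ, Gd S c z) (hw : w ∉ ball m ρ) :
    RInv S c (rzQ S c m ρ) w := by
  by_cases h : w ∈ sphere m ρ
  · exact RInv.of_gd (hg w h) (commute_rzQ (Commute.refl S) hρ hg).symm
  have hw' : ρ < dist w m := by
    rw [mem_sphere] at h; rw [mem_ball] at hw
    exact lt_of_le_of_ne (not_lt.1 hw) (Ne.symm h)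
  refine ⟨rzK S c m ρ w, pcl_rzK_out hρ hg hw', ?_⟩
  rw [← pcl_rzK_out hρ hg hw']
  exact ((commute_rzW (commute_pcl (Commute.refl S) c w).symm hρ hg (contOn_inv h)).eq).symm

lemma RInv_in {S : 𝔄} {c m w : ℂ} {ρ : ℝ} (hρ : 0 < ρ)
    (hg : ∀ z ∈ sphere m ρ, Gd S c z) (hw : w ∈ ball m ρ) :
    RInv S c (1 - rzQ S c m ρ) w := by
  have h : w ∉ sphere m ρ := by
    intro h; rw [mem_sphere] at h; rw [mem_ball] at hw; linarith
  have e : pcl S c w * (-rzK S c m ρ w) = S * (1 - rzQ S c m ρ) := by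
    rw [mul_neg, pcl_rzK_in hρ hg hw, ← mul_neg, neg_sub]
  refine ⟨-rzK S c m ρ w, e, ?_⟩
  rw [← e]
  exact ((commute_rzW (commute_pcl (Commute.refl S) c w).symm hρ hg (contOn_inv h)).neg_right.eq).symm

lemma rzQ_factor {S : 𝔄} {c m : ℂ} {ρ : ℝ} (hρ : 0 < ρ)
    (hg : ∀ z ∈ sphere m ρ, Gd S c z) : ∃ M : 𝔄, S * M = rzQ S c m ρ ∧
      ∀ X, Commute X S → Commute X M := by
  refine ⟨rzW S c m ρ (fun z => z - c), ?_, fun X hX => commute_rzW hX hρ hg (by fun_prop)⟩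
  have hi := circleIntegrable_w hρ hg (g := fun z => z - c) (by fun_prop)
  have h1 := clm_circleIntegral (ContinuousLinearMap.mul ℂ 𝔄 S) hi
  simp only [ContinuousLinearMap.mul_apply'] at h1
  rw [rzQ, rzW, rzW, mul_neg, mul_smul_comm, ← h1]
  congr 2
  have : (∮ z in C(m, ρ), S * ((z - c) • rsv S c z)) = ∮ z in C(m, ρ), ((1:ℂ) • rsv S c z - S) := by
    refine circleIntegral.integral_congr hρ.le ?_
    intro z hz
    have := pcl_mul_rsv (hg z hz)
    rw [pcl, sub_mul, one_mul, smul_mul_assoc] at this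
    simp only
    rw [mul_smul_comm, one_smul, eq_sub_iff_add_eq, add_comm]
    exact (sub_eq_iff_eq_add.1 this).symm
  rw [this, circleIntegral.integral_sub (circleIntegrable_w hρ hg continuousOn_const)
    (circleIntegrable_const _ _ _)]
  have h0 : (∮ z in C(m, ρ), S) = 0 :=
    DiffContOnCl.circleIntegral_eq_zero hρ.le diffContOnCl_const
  rw [h0, sub_zero]

lemma rzQ_radius {S : 𝔄} {c m : ℂ} {ρ ρ' : ℝ} (hρ' : 0 < ρ') (hle : ρ' ≤ ρ)
    (hg : ∀ z, ρ' ≤ dist z m → dist z m ≤ ρ → Gd S c z) : rzQ S c m ρ = rzQ S c m ρ' := by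
  rw [rzQ, rzQ, rzW, rzW]
  congr 2
  simp only [one_smul]
  refine Complex.circleIntegral_eq_of_differentiable_on_annulus_off_countable hρ' hle
    Set.countable_empty (continuousOn_rsv ?_) ?_
  · rintro z ⟨h1, h2⟩
    rw [mem_closedBall] at h1; rw [mem_ball, not_lt] at h2
    exact hg z h2 h1
  · rintro z ⟨⟨h1, h2⟩, -⟩
    rw [mem_closedBall, not_le] at h2; rw [mem_ball] at h1
    exact differentiableAt_rsv (hg z h2.le h1.le)

lemma rzQ_idem {S : 𝔄} {c m : ℂ} {ρ ρ' : ℝ} (hρ' : 0 < ρ') (hlt : ρ' < ρ)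
    (hg : ∀ z, ρ' ≤ dist z m → dist z m ≤ ρ → Gd S c z) :
    rzQ S c m ρ * rzQ S c m ρ = rzQ S c m ρ := by
  have hρ : 0 < ρ := hρ'.trans hlt
  have hgs : ∀ z ∈ sphere m ρ, Gd S c z := fun z hz => by
    rw [mem_sphere] at hz; exact hg z (by linarith) hz.le
  have hgs' : ∀ z ∈ sphere m ρ', Gd S c z := fun z hz => by
    rw [mem_sphere] at hz; exact hg z hz.ge (by linarith)
  set q := rzQ S c m ρ with hq
  have hi := circleIntegrable_w hρ' hgs' (continuousOn_const (c := (1:ℂ)))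
  have h1 := clm_circleIntegral ((ContinuousLinearMap.mul ℂ 𝔄).flip (q - 1)) hi
  simp only [ContinuousLinearMap.mul_apply', ContinuousLinearMap.flip_apply] at h1
  have h2 : (∮ z in C(m, ρ'), ((1:ℂ) • rsv S c z) * (q - 1)) = ∮ z in C(m, ρ'), rzK S c m ρ z := by
    refine circleIntegral.integral_congr hρ'.le ?_
    intro z hz
    simp only
    rw [one_smul, ← rsv_unique (hgs' z hz) (pcl_rzK_in hρ hgs ?_)]
    rw [mem_sphere] at hz; rw [mem_ball]; linarith
  have h3 : (∮ z in C(m, ρ'), rzK S c m ρ z) = 0 := by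
    refine DiffContOnCl.circleIntegral_eq_zero hρ'.le ?_
    refine DifferentiableOn.diffContOnCl (s := ball m ρ') ?_
    have hR : ((ρ.toNNReal : NNReal) : ℝ) = ρ := Real.coe_toNNReal _ hρ.le
    have hp := hasFPowerSeriesOn_cauchy_integral (f := rsv S c) (c := m) (R := ρ.toNNReal)
      (by rw [hR]; exact ContinuousOn.circleIntegrable hρ.le (continuousOn_rsv hgs))
      (Real.toNNReal_pos.2 hρ)
    have hd := hp.differentiableOn.neg
    rw [Metric.eball_coe, hR] at hd
    refine hd.mono ?_
    intro z hz
    have := closure_ball_subset_closedBall hz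
    rw [mem_closedBall] at this
    rw [mem_ball]
    linarith
  have h4 : rzQ S c m ρ' * (q - 1) = 0 := by
    rw [rzQ, rzW, neg_mul, smul_mul_assoc, ← h1, h2, h3, smul_zero, neg_zero]
  rw [← rzQ_radius hρ' hlt.le hg, ← hq, mul_sub, mul_one, sub_eq_zero] at h4
  exact h4

end Contour

section Combi

/-- Discs `ball (mid p n) ra`, `ball (mid p n) rb` isolating the sets `U k`, `p ≤ k ≤ n`. -/
structure Geo (U : ℤ → Set ℂ) (mid : ℤ → ℤ → ℂ) (ra rb : ℤ → ℤ → ℝ) : Prop where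
  pos : ∀ p n, p ≤ n → 0 < ra p n
  lt : ∀ p n, p ≤ n → ra p n < rb p n
  inn : ∀ p n k z, p ≤ k → k ≤ n → z ∈ U k → dist z (mid p n) < ra p n
  out : ∀ p n k z, p ≤ n → ¬ (p ≤ k ∧ k ≤ n) → z ∈ U k → rb p n < dist z (mid p n)

variable {𝔄 : Type*} [NormedRing 𝔄] [NormedAlgebra ℂ 𝔄] [CompleteSpace 𝔄]
variable {U : ℤ → Set ℂ} {mid : ℤ → ℤ → ℂ} {ra rb : ℤ → ℤ → ℝ} {S : 𝔄} {c : ℂ}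

/-- `S` is regular off the `U k`. -/
def RegOff (U : ℤ → Set ℂ) (S : 𝔄) (c : ℂ) : Prop := ∀ z, (∀ k, z ∉ U k) → Gd S c z

lemma Geo.gd (g : Geo U mid ra rb) (hS : RegOff U S c) {p n : ℤ} (h : p ≤ n) {z : ℂ}
    (h1 : ra p n ≤ dist z (mid p n)) (h2 : dist z (mid p n) ≤ rb p n) : Gd S c z := by
  refine hS z fun k hk => ?_
  by_cases hkk : p ≤ k ∧ k ≤ n
  · exact absurd (g.inn p n k z hkk.1 hkk.2 hk) (not_lt.2 h1)
  · exact absurd (g.out p n k z h hkk hk) (not_lt.2 h2)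

lemma Geo.gds (g : Geo U mid ra rb) (hS : RegOff U S c) {p n : ℤ} (h : p ≤ n) :
    ∀ z ∈ sphere (mid p n) (rb p n), Gd S c z := fun z hz => by
  rw [mem_sphere] at hz
  exact g.gd hS h (hz ▸ (g.lt p n h).le) hz.le

lemma Geo.posb (g : Geo U mid ra rb) {p n : ℤ} (h : p ≤ n) : 0 < rb p n :=
  (g.pos p n h).trans (g.lt p n h)

variable (mid rb S c) in
/-- Riesz projection for the group `p..n`. -/
def Qd (p n : ℤ) : 𝔄 := rzQ S c (mid p n) (rb p n)

lemma Geo.idem (g : Geo U mid ra rb) (hS : RegOff U S c) {p n : ℤ} (h : p ≤ n) :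
    Qd mid rb S c p n * Qd mid rb S c p n = Qd mid rb S c p n :=
  rzQ_idem (g.pos p n h) (g.lt p n h) (fun _ h1 h2 => g.gd hS h h1 h2)

lemma Geo.comm (g : Geo U mid ra rb) (hS : RegOff U S c) {p n : ℤ} (h : p ≤ n) {X : 𝔄}
    (hX : Commute X S) : Commute X (Qd mid rb S c p n) :=
  commute_rzQ hX (g.posb h) (g.gds hS h)

lemma Geo.commS (g : Geo U mid ra rb) (hS : RegOff U S c) {p n : ℤ} (h : p ≤ n) :
    Commute (Qd mid rb S c p n) S := (g.comm hS h (Commute.refl S)).symm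

lemma Geo.rout (g : Geo U mid ra rb) (hS : RegOff U S c) {p n k : ℤ} (h : p ≤ n)
    (hk : ¬ (p ≤ k ∧ k ≤ n)) {w : ℂ} (hw : w ∈ U k) : RInv S c (Qd mid rb S c p n) w := by
  refine RInv_out (g.posb h) (g.gds hS h) ?_
  rw [mem_ball, not_lt]; exact (g.out p n k w h hk hw).le

lemma Geo.rin (g : Geo U mid ra rb) (hS : RegOff U S c) {p n k : ℤ} (h1 : p ≤ k)
    (h2 : k ≤ n) {w : ℂ} (hw : w ∈ U k) : RInv S c (1 - Qd mid rb S c p n) w := by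
  refine RInv_in (g.posb (h1.trans h2)) (g.gds hS (h1.trans h2)) ?_
  rw [mem_ball]; exact (g.inn p n k w h1 h2 hw).trans (g.lt p n (h1.trans h2))

/-- main vanishing principle for projections under some `Qd p n`. -/
lemma Geo.vanish (g : Geo U mid ra rb) (hS : RegOff U S c) {p n : ℤ} (h : p ≤ n) {G : 𝔄}
    (hG : Commute G S) (h2 : G * G = G) (hle : Qd mid rb S c p n * G = G)
    (hw : ∀ k w, w ∈ U k → RInv S c G w) : G = 0 := by
  obtain ⟨M, hM, hMc⟩ := rzQ_factor (g.posb h) (g.gds hS h)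
  refine empty_spec (M := M * G) (c := c) h2 hG ?_ ?_ ?_
  · exact (hMc S (Commute.refl S)).symm.mul_left hG
  · rw [← mul_assoc, hM]; exact hle
  · intro w
    by_cases hk : ∃ k, w ∈ U k
    · obtain ⟨k, hk⟩ := hk; exact hw k w hk
    · push Not at hk
      exact RInv.of_gd (hS w hk) hG

lemma idem_mul {X Y : 𝔄} (hX : X * X = X) (hY : Y * Y = Y) (h : Commute X Y) :
    (X * Y) * (X * Y) = X * Y := by
  rw [mul_assoc, ← mul_assoc Y, ← h.eq, mul_assoc X Y Y, hY, ← mul_assoc, hX]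

lemma idem_one_sub {X : 𝔄} (hX : X * X = X) : (1 - X) * (1 - X) = 1 - X := by
  rw [mul_sub, mul_one, sub_mul, one_mul, hX]; abel

/-- abstract Riesz projection conditions -/
structure RProj (S : 𝔄) (c : ℂ) (V : Set ℂ) (X : 𝔄) : Prop where
  idem : X * X = X
  comm : Commute X S
  out : ∀ z ∉ V, RInv S c X z
  inn : ∀ z ∈ V, RInv S c (1 - X) z

lemma Geo.rproj (g : Geo U mid ra rb) (hS : RegOff U S c) (k : ℤ) :
    RProj S c (U k) (Qd mid rb S c k k) where
  idem := g.idem hS le_rfl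
  comm := g.commS hS le_rfl
  out := fun z hz => by
    by_cases hk : ∃ i, z ∈ U i
    · obtain ⟨i, hi⟩ := hk
      refine g.rout hS le_rfl ?_ hi
      rintro ⟨h1, h2⟩
      have : i = k := le_antisymm h2 h1
      subst this; exact hz hi
    · push Not at hk
      exact RInv.of_gd (hS z hk) (g.commS hS le_rfl)
  inn := fun z hz => g.rin hS le_rfl le_rfl hz

lemma Geo.uniq_ne (g : Geo U mid ra rb) (hS : RegOff U S c) {k j : ℤ} (hjk : j ≠ k) {X : 𝔄}
    (hX : RProj S c (U k) X) : Qd mid rb S c j j * X = 0 := by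
  have hc : Commute X (Qd mid rb S c j j) := g.comm hS le_rfl hX.comm
  have hi := g.idem (c := c) hS (le_refl j)
  have hGS := (g.commS (c := c) hS (le_refl j)).mul_left hX.comm
  have hGG := idem_mul hi hX.idem hc.symm
  have hl : Qd mid rb S c j j * (Qd mid rb S c j j * X) = Qd mid rb S c j j * X := by
    rw [← mul_assoc, hi]
  refine g.vanish hS (le_refl j) hGS hGG hl ?_
  intro i w hw
  by_cases hwk : w ∈ U k
  · refine (g.rout hS (le_refl j) (k := k) ?_ hwk).mono hGS hGG hl
    rintro ⟨h1, h2⟩; exact hjk (le_antisymm h1 h2)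
  · refine (hX.out w hwk).mono hGS hGG ?_
    rw [← mul_assoc, hc.eq, mul_assoc, hX.idem]

lemma Geo.uniq_eq (g : Geo U mid ra rb) (hS : RegOff U S c) {k : ℤ} {X : 𝔄}
    (hX : RProj S c (U k) X) : Qd mid rb S c k k * X = Qd mid rb S c k k := by
  have h1X : Commute (1 - X) S := (Commute.one_left S).sub_left hX.comm
  have hc : Commute (1 - X) (Qd mid rb S c k k) := g.comm hS le_rfl h1X
  have hi := g.idem (c := c) hS (le_refl k)
  have hGS := (g.commS (c := c) hS (le_refl k)).mul_left h1X
  have hGG := idem_mul hi (idem_one_sub hX.idem) hc.symm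
  have hl : Qd mid rb S c k k * (Qd mid rb S c k k * (1 - X)) = Qd mid rb S c k k * (1 - X) := by
    rw [← mul_assoc, hi]
  have := g.vanish hS (le_refl k) hGS hGG hl ?_
  · rw [mul_sub, mul_one, sub_eq_zero] at this; exact this.symm
  intro i w hw
  by_cases hwk : w ∈ U k
  · refine (hX.inn w hwk).mono hGS hGG ?_
    rw [← mul_assoc, hc.eq, mul_assoc, idem_one_sub hX.idem]
  · exact ((g.rproj hS k).out w hwk).mono hGS hGG hl

lemma Geo.orth (g : Geo U mid ra rb) (hS : RegOff U S c) {k j : ℤ} (hjk : j ≠ k) :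
    Qd mid rb S c j j * Qd mid rb S c k k = 0 := g.uniq_ne hS hjk (g.rproj hS k)

lemma Geo.sub (g : Geo U mid ra rb) (hS : RegOff U S c) {p n k : ℤ} (h1 : p ≤ k) (h2 : k ≤ n) :
    Qd mid rb S c k k * Qd mid rb S c p n = Qd mid rb S c k k := by
  have hp := h1.trans h2
  have hX := g.idem (c := c) hS hp
  have h1X : Commute (1 - Qd mid rb S c p n) S := (Commute.one_left S).sub_left (g.commS hS hp)
  have hc : Commute (1 - Qd mid rb S c p n) (Qd mid rb S c k k) := g.comm hS le_rfl h1X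
  have hi := g.idem (c := c) hS (le_refl k)
  have hGS := (g.commS (c := c) hS (le_refl k)).mul_left h1X
  have hGG := idem_mul hi (idem_one_sub hX) hc.symm
  have hl : Qd mid rb S c k k * (Qd mid rb S c k k * (1 - Qd mid rb S c p n)) =
      Qd mid rb S c k k * (1 - Qd mid rb S c p n) := by
    rw [← mul_assoc, hi]
  have := g.vanish hS (le_refl k) hGS hGG hl ?_
  · rw [mul_sub, mul_one, sub_eq_zero] at this; exact this.symm
  intro i w hw
  by_cases hwk : w ∈ U k
  · refine (g.rin hS h1 h2 hwk).mono hGS hGG ?_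
    rw [← mul_assoc, hc.eq, mul_assoc, idem_one_sub hX]
  · exact ((g.rproj hS k).out w hwk).mono hGS hGG hl

lemma Geo.disj (g : Geo U mid ra rb) (hS : RegOff U S c) {p n k : ℤ} (hp : p ≤ n)
    (hk : ¬ (p ≤ k ∧ k ≤ n)) :
    Qd mid rb S c k k * Qd mid rb S c p n = 0 := by
  have hX := g.idem (c := c) hS hp
  have h1X := g.commS (c := c) hS hp
  have hc : Commute (Qd mid rb S c p n) (Qd mid rb S c k k) := g.comm hS le_rfl h1X
  have hi := g.idem (c := c) hS (le_refl k)
  have hGS := (g.commS (c := c) hS (le_refl k)).mul_left h1X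
  have hGG := idem_mul hi hX hc.symm
  have hl : Qd mid rb S c k k * (Qd mid rb S c k k * Qd mid rb S c p n) =
      Qd mid rb S c k k * Qd mid rb S c p n := by
    rw [← mul_assoc, hi]
  refine g.vanish hS (le_refl k) hGS hGG hl ?_
  intro i w hw
  by_cases hwk : w ∈ U k
  · refine (g.rout hS hp hk hwk).mono hGS hGG ?_
    rw [← mul_assoc, hc.eq, mul_assoc, hX]
  · exact ((g.rproj hS k).out w hwk).mono hGS hGG hl

lemma Geo.sum_mul (g : Geo U mid ra rb) (hS : RegOff U S c) (F : Finset ℤ) {i : ℤ} :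
    (∑ k ∈ F, Qd mid rb S c k k) * Qd mid rb S c i i = if i ∈ F then Qd mid rb S c i i else 0 := by
  rw [Finset.sum_mul]
  have : ∀ k ∈ F, Qd mid rb S c k k * Qd mid rb S c i i =
      if k = i then Qd mid rb S c i i else 0 := by
    intro k _
    split_ifs with h
    · subst h; exact g.idem hS le_rfl
    · exact g.orth hS h
  rw [Finset.sum_congr rfl this, Finset.sum_ite_eq']

lemma Geo.sum_idem (g : Geo U mid ra rb) (hS : RegOff U S c) (F : Finset ℤ) :
    (∑ k ∈ F, Qd mid rb S c k k) * (∑ k ∈ F, Qd mid rb S c k k) = ∑ k ∈ F, Qd mid rb S c k k := by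
  rw [Finset.mul_sum]
  refine Finset.sum_congr rfl fun i hi => ?_
  rw [g.sum_mul hS, if_pos hi]

lemma Geo.sum_eq (g : Geo U mid ra rb) (hS : RegOff U S c) {p n : ℤ} (hp : p ≤ n) :
    ∑ k ∈ Finset.Icc p n, Qd mid rb S c k k = Qd mid rb S c p n := by
  set Sg := ∑ k ∈ Finset.Icc p n, Qd mid rb S c k k with hs
  set E := Qd mid rb S c p n with hE
  have hEE : E * E = E := g.idem hS hp
  have hss : Sg * Sg = Sg := g.sum_idem hS _
  have hES : Commute E S := g.commS hS hp
  have hsS : Commute Sg S := Commute.sum_left _ _ _ fun k _ => g.commS hS le_rfl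
  have hsE : Sg * E = Sg := by
    rw [hs, Finset.sum_mul]
    refine Finset.sum_congr rfl fun k hk => ?_
    rw [Finset.mem_Icc] at hk
    exact g.sub hS hk.1 hk.2
  have hEs : E * Sg = Sg := by
    rw [← (g.comm hS hp hsS).eq]; exact hsE
  have hGG : (E - Sg) * (E - Sg) = E - Sg := by
    rw [mul_sub, sub_mul, sub_mul, hEE, hsE, hEs, hss]; abel
  have hl : E * (E - Sg) = E - Sg := by rw [mul_sub, hEE, hEs]
  have hGS : Commute (E - Sg) S := hES.sub_left hsS
  have := g.vanish hS hp hGS hGG hl ?_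
  · exact (sub_eq_zero.1 this).symm
  intro i w hw
  by_cases hi : p ≤ i ∧ i ≤ n
  · refine (g.rin hS (le_refl i) (le_refl i) hw).mono hGS hGG ?_
    have h1 : Qd mid rb S c i i * E = Qd mid rb S c i i := g.sub hS hi.1 hi.2
    have h2 : Qd mid rb S c i i * Sg = Qd mid rb S c i i := by
      rw [← (g.comm hS le_rfl hsS).eq, hs, g.sum_mul hS, if_pos (Finset.mem_Icc.2 hi)]
    rw [sub_mul, one_mul, mul_sub, h1, h2]; abel
  · exact (g.rout hS hp hi hw).mono hGS hGG hl

end Combi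

section Translate

variable {A : H →ₗ.[ℂ] H} {S : H →L[ℂ] H} {c : ℂ}

lemma resolv_S_mem (hS : IsResolventOf A c S) (y : H) : S y ∈ A.domain := (hS.2 y).1

lemma resolv_A_S (hS : IsResolventOf A c S) (y : H) (h : S y ∈ A.domain) :
    A ⟨S y, h⟩ = y + c • S y := by
  obtain ⟨h', e⟩ := hS.2 y
  exact sub_eq_iff_eq_add.1 e

lemma resolv_A_of_eq (hS : IsResolventOf A c S) {x y : H} (hxy : S y = x) (h : x ∈ A.domain) :
    A ⟨x, h⟩ = y + c • x := by
  subst hxy; exact resolv_A_S hS y h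

lemma resolv_exists (hS : IsResolventOf A c S) (x : A.domain) :
    ∃ y, S y = (x : H) ∧ A x = y + c • (x : H) := by
  refine ⟨A x - c • (x:H), hS.1 x, by abel⟩

lemma pcl_apply (S : H →L[ℂ] H) (c z : ℂ) (y : H) : pcl S c z y = y - (z - c) • S y := by
  simp [pcl]

lemma resolv_pcl (hS : IsResolventOf A c S) (z : ℂ) (y : H) (h : S y ∈ A.domain) :
    A ⟨S y, h⟩ - z • S y = pcl S c z y := by
  rw [resolv_A_S hS, pcl_apply]; module

lemma resolv_mul_pcl {R : H →L[ℂ] H} {z : ℂ} (hS : IsResolventOf A c S)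
    (hR : IsResolventOf A z R) : R * pcl S c z = S := by
  ext y
  have := hR.1 ⟨S y, resolv_S_mem hS y⟩
  rw [resolv_pcl hS z y] at this
  exact this

lemma resolv_gd {R : H →L[ℂ] H} {z : ℂ} (hS : IsResolventOf A c S)
    (hR : IsResolventOf A z R) : Gd S c z := by
  have h1 := resolv_mul_pcl hS hR
  have h2 := resolv_mul_pcl hR hS
  refine ⟨⟨pcl S c z, pcl R z c, ?_, ?_⟩, rfl⟩
  · nth_rewrite 1 [pcl]
    rw [sub_mul, one_mul, smul_mul_assoc, h2, pcl]
    module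
  · nth_rewrite 1 [pcl]
    rw [sub_mul, one_mul, smul_mul_assoc, h1, pcl]
    module

lemma resolv_eq {R : H →L[ℂ] H} {z : ℂ} (hS : IsResolventOf A c S)
    (hR : IsResolventOf A z R) : R = rsv S c z := by
  have hg := resolv_gd hS hR
  have h1 := resolv_mul_pcl hS hR
  exact hg.mul_right_cancel (h1.trans (rsv_mul_pcl hg).symm)

lemma resolv_rsv {z : ℂ} (hS : IsResolventOf A c S) (hz : z ∈ pmResolventSet A) :
    Gd S c z ∧ IsResolventOf A z (rsv S c z) := by
  obtain ⟨R, hR⟩ := hz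
  exact ⟨resolv_gd hS hR, resolv_eq hS hR ▸ hR⟩

lemma rinv_iff (hS : IsResolventOf A c S) {G : H →L[ℂ] H} (hG : G * G = G) (hGS : Commute G S)
    (V : Submodule ℂ H) (hV : ∀ y, y ∈ V ↔ G y = y) (z : ℂ) :
    RInv S c G z ↔ MapsResolvently A V z := by
  have hGS' : ∀ y, G (S y) = S (G y) := fun y => congrArg (fun L : H →L[ℂ] H => L y) hGS.eq
  have hGG : ∀ y, G (G y) = G y := fun y => congrArg (fun L : H →L[ℂ] H => L y) hG
  constructor
  · rintro ⟨K, k1, k2⟩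
    have hc := commute_pcl hGS c z
    have e : G * (S * G) * G = S * G := by
      rw [mul_assoc, mul_assoc S, hG, ← mul_assoc, hGS.eq, mul_assoc, hG]
    have e1 : pcl S c z * (G * K * G) = S * G := by
      rw [← mul_assoc, ← mul_assoc, ← hc.eq, mul_assoc G _ K, k1, e]
    have e2 : (G * K * G) * pcl S c z = S * G := by
      rw [mul_assoc, hc.eq, ← mul_assoc, mul_assoc G K, k2, e]
    have e1' : ∀ y, pcl S c z ((G * K * G) y) = S (G y) :=
      fun y => congrArg (fun L : H →L[ℂ] H => L y) e1
    have e2' : ∀ y, (G * K * G) (pcl S c z y) = S (G y) :=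
      fun y => congrArg (fun L : H →L[ℂ] H => L y) e2
    refine ⟨G * K * G, ?_, ?_, ?_⟩
    · intro y _
      rw [hV]
      exact hGG _
    · intro x hx
      obtain ⟨y, hy, hA⟩ := resolv_exists hS x
      have : A x - z • (x : H) = pcl S c z y := by
        rw [hA, pcl_apply, hy]; module
      rw [this, e2', ← hGS', hy]
      exact (hV _).1 hx
    · intro y hy
      have hGy := (hV _).1 hy
      have h1 : S (y + (z - c) • (G * K * G) y) = (G * K * G) y := by
        have := e1' y
        rw [pcl_apply, hGy, sub_eq_iff_eq_add] at this
        rw [map_add, map_smul]; exact this.symm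
      refine ⟨h1 ▸ resolv_S_mem hS _, ?_⟩
      rw [resolv_A_of_eq hS h1]; module
  · rintro ⟨R, r1, r2, r3⟩
    refine ⟨R * G, ?_, ?_⟩
    · ext y
      have hGy : G y ∈ V := (hV _).2 (hGG y)
      obtain ⟨h1, h2⟩ := r3 _ hGy
      have h3 := hS.1 ⟨R (G y), h1⟩
      change pcl S c z (R (G y)) = S (G y)
      rw [pcl_apply, sub_eq_iff_eq_add, ← map_smul, ← map_add]
      refine h3.symm.trans ?_
      congr 1
      rw [sub_eq_iff_eq_add] at h2
      rw [h2]; module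
    · ext y
      change R (G (pcl S c z y)) = S (G y)
      have hc : G (pcl S c z y) = pcl S c z (G y) :=
        congrArg (fun L : H →L[ℂ] H => L y) (commute_pcl hGS c z).eq
      rw [hc, ← resolv_pcl hS z (G y) (resolv_S_mem hS _)]
      refine r2 ⟨S (G y), resolv_S_mem hS _⟩ ?_
      rw [hV]; change G (S (G y)) = S (G y); rw [hGS', hGG]

lemma rproj_iff (hS : IsResolventOf A c S) (U : Set ℂ) (Q : H →L[ℂ] H) :
    RProj S c U Q ↔ IsRieszProjFor A U Q := by
  have hr : Q * Q = Q → ∀ y, y ∈ LinearMap.range (Q : H →ₗ[ℂ] H) ↔ Q y = y := by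
    intro h y
    constructor
    · rintro ⟨x, rfl⟩
      exact congrArg (fun L : H →L[ℂ] H => L x) h
    · intro h; exact ⟨y, h⟩
  have hk : ∀ y, y ∈ LinearMap.ker (Q : H →ₗ[ℂ] H) ↔ (1 - Q) y = y := by
    intro y
    simp
  constructor
  · rintro ⟨h1, h2, h3, h4⟩
    have hQS' : ∀ y, Q (S y) = S (Q y) := fun y => congrArg (fun L : H →L[ℂ] H => L y) h2.eq
    refine ⟨h1, ?_, ?_, ?_⟩
    · intro x
      obtain ⟨y, hy, hA⟩ := resolv_exists hS x
      have e : S (Q y) = Q x := by rw [← hQS', hy]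
      refine ⟨e ▸ resolv_S_mem hS _, ?_⟩
      rw [resolv_A_of_eq hS e, hA, map_add, map_smul]
    · intro z hz
      exact (rinv_iff hS h1 h2 _ (hr h1) z).1 (h3 z hz)
    · intro z hz
      exact (rinv_iff hS (idem_one_sub h1) ((Commute.one_left S).sub_left h2) _ hk z).1 (h4 z hz)
  · rintro ⟨h1, h2, h3, h4⟩
    have h1' : Q * Q = Q := h1
    have hc : Commute Q S := by
      ext y
      obtain ⟨h5, h6⟩ := h2 ⟨S y, resolv_S_mem hS y⟩
      rw [resolv_A_S hS] at h6
      have h7 := hS.1 ⟨Q (S y), h5⟩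
      rw [h6, map_add, map_smul] at h7
      change Q (S y) = S (Q y)
      simpa using h7.symm
    refine ⟨h1, hc, ?_, ?_⟩
    · intro z hz
      exact (rinv_iff hS h1' hc _ (hr h1') z).2 (h3 z hz)
    · intro z hz
      exact (rinv_iff hS (idem_one_sub h1') ((Commute.one_left S).sub_left hc) _ hk z).2 (h4 z hz)

lemma pmSum_apply (T : H →ₗ.[ℂ] H) (B : H →L[ℂ] H) (x : H) (h : x ∈ T.domain)
    (h' : x ∈ (pmSumCLM T B).domain) :
    (pmSumCLM T B) ⟨x, h'⟩ = T ⟨x, h⟩ + B x := rfl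

lemma resolv_sum {T : H →ₗ.[ℂ] H} {z : ℂ} {R : H →L[ℂ] H} (hR : IsResolventOf T z R)
    (B : H →L[ℂ] H) (hu : IsUnit (1 + B * R)) : z ∈ pmResolventSet (pmSumCLM T B) := by
  have i1 := Ring.mul_inverse_cancel _ hu
  have i2 := Ring.inverse_mul_cancel _ hu
  set J := Ring.inverse (1 + B * R)
  have i1' : ∀ y, J y + B (R (J y)) = y := fun y => congrArg (fun L : H →L[ℂ] H => L y) i1
  have i2' : ∀ y, J (y + B (R y)) = y := fun y => congrArg (fun L : H →L[ℂ] H => L y) i2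
  refine ⟨R * J, ?_, ?_⟩
  · rintro ⟨x, hx⟩
    obtain ⟨y, hy, hA⟩ := resolv_exists hR ⟨x, hx⟩
    rw [pmSum_apply T B x hx, hA]
    simp only at hy ⊢
    have : y + z • x + B x - z • x = y + B (R y) := by rw [hy]; abel
    rw [this]
    change R (J _) = x
    rw [i2', hy]
  · intro y
    refine ⟨resolv_S_mem hR (J y), ?_⟩
    change T ⟨R (J y), resolv_S_mem hR (J y)⟩ + B (R (J y)) - z • R (J y) = y
    rw [resolv_A_S hR]
    refine Eq.trans ?_ (i1' y)
    abel

lemma second_resolv {T : H →ₗ.[ℂ] H} {z : ℂ} {R R' B : H →L[ℂ] H} (hR : IsResolventOf T z R)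
    (hR' : IsResolventOf (pmSumCLM T B) z R') :
    R' = R - R' * B * R ∧ R' = R - R * B * R' := by
  constructor
  · ext y
    have h : R' (T ⟨R y, resolv_S_mem hR y⟩ + B (R y) - z • R y) = R y :=
      hR'.1 ⟨R y, resolv_S_mem hR y⟩
    rw [resolv_A_S hR] at h
    have : y + z • R y + B (R y) - z • R y = y + B (R y) := by abel
    rw [this, map_add] at h
    change R' y = R y - R' (B (R y))
    exact eq_sub_of_add_eq h
  · ext y
    obtain ⟨h1, h2⟩ := hR'.2 y
    have h1' : R' y ∈ T.domain := h1
    have h2' : T ⟨R' y, h1'⟩ + B (R' y) - z • R' y = y := h2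
    have h3 : R (T ⟨R' y, h1'⟩ - z • R' y) = R' y := hR.1 ⟨R' y, h1'⟩
    have : T ⟨R' y, h1'⟩ - z • R' y = y - B (R' y) := by
      rw [eq_sub_iff_add_eq]
      refine Eq.trans ?_ h2'
      abel
    rw [this, map_sub] at h3
    exact h3.symm

end Translate

section Geometry

/-- interval number `k` -/
def Dl (α : ℤ → ℝ) (k : ℤ) : Set ℝ := Set.Icc (α (2 * k - 1)) (α (2 * k))
def Ut (α : ℤ → ℝ) (ε : ℝ) (k : ℤ) : Set ℂ :=
  Metric.thickening ε (Complex.ofReal '' Set.Icc (α (2 * k - 1)) (α (2 * k)))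
def midR (α : ℤ → ℝ) (p n : ℤ) : ℝ := (α (2 * p - 1) + α (2 * n)) / 2
def mid' (α : ℤ → ℝ) (p n : ℤ) : ℂ := (midR α p n : ℝ)
def rad (α : ℤ → ℝ) (r : ℝ) (p n : ℤ) : ℝ := (α (2 * n) - α (2 * p - 1)) / 2 + r

variable {α : ℤ → ℝ} {d ε r : ℝ}

lemma mem_Ut {k : ℤ} {z : ℂ} : z ∈ Ut α ε k ↔ ∃ t ∈ Dl α k, dist z (t : ℂ) < ε := by
  simp [Ut, Dl, Metric.mem_thickening_iff]

lemma gap_le (hmono : Monotone α) (hgap : ∀ k : ℤ, d ≤ α (2 * k + 1) - α (2 * k)) {j k : ℤ} (h : j < k) :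
    α (2 * j) + d ≤ α (2 * k - 1) := by
  have h1 := hgap j
  have h2 : α (2 * j + 1) ≤ α (2 * k - 1) := hmono (by omega)
  linarith

lemma gap_dist (hmono : Monotone α) (hgap : ∀ k : ℤ, d ≤ α (2 * k + 1) - α (2 * k)) {j k : ℤ} (h : j ≠ k)
    {s t : ℝ} (hs : s ∈ Dl α j) (ht : t ∈ Dl α k) : d ≤ |s - t| := by
  rcases lt_or_gt_of_ne h with h | h
  · have := gap_le hmono hgap h
    have h1 := hs.2; have h2 := ht.1
    rw [abs_sub_comm]
    exact le_trans (by linarith) (le_abs_self _)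
  · have := gap_le hmono hgap h
    have h1 := hs.1; have h2 := ht.2
    exact le_trans (by linarith) (le_abs_self _)

lemma Ut_disj (hmono : Monotone α) (hgap : ∀ k : ℤ, d ≤ α (2 * k + 1) - α (2 * k)) (hε : ε < d / 2) {j k : ℤ}
    (h : j ≠ k) : Disjoint (Ut α ε j) (Ut α ε k) := by
  rw [Set.disjoint_left]
  intro z hz hz'
  obtain ⟨s, hs, h1⟩ := mem_Ut.1 hz
  obtain ⟨t, ht, h2⟩ := mem_Ut.1 hz'
  have := gap_dist hmono hgap h hs ht
  have h3 := dist_triangle_left (s : ℂ) (t : ℂ) z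
  rw [Complex.dist_eq (s : ℂ), ← Complex.ofReal_sub, Complex.norm_real, Real.norm_eq_abs] at h3
  linarith

lemma Dl_sub (hmono : Monotone α) {p n k : ℤ} (h1 : p ≤ k) (h2 : k ≤ n) {t : ℝ} (ht : t ∈ Dl α k) :
    |t - midR α p n| ≤ (α (2 * n) - α (2 * p - 1)) / 2 := by
  have h3 : α (2 * p - 1) ≤ α (2 * k - 1) := hmono (by omega)
  have h4 : α (2 * k) ≤ α (2 * n) := hmono (by omega)
  have h5 := ht.1; have h6 := ht.2
  rw [abs_le, midR]; constructor <;> linarith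

lemma Dl_out (hmono : Monotone α) (hgap : ∀ k : ℤ, d ≤ α (2 * k + 1) - α (2 * k)) {p n k : ℤ} (hpn : p ≤ n)
    (h : ¬ (p ≤ k ∧ k ≤ n)) {t : ℝ} (ht : t ∈ Dl α k) :
    (α (2 * n) - α (2 * p - 1)) / 2 + d ≤ |t - midR α p n| := by
  have h5 := ht.1; have h6 := ht.2
  by_cases hk : k < p
  · have := gap_le hmono hgap hk
    rw [abs_sub_comm]
    refine le_trans ?_ (le_abs_self _)
    rw [midR]; linarith
  · have := gap_le hmono hgap (show n < k by omega)
    refine le_trans ?_ (le_abs_self _)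
    rw [midR]; linarith

lemma dist_mid (t : ℝ) (p n : ℤ) : dist (t : ℂ) (mid' α p n) = |t - midR α p n| := by
  rw [mid', Complex.dist_eq, ← Complex.ofReal_sub, Complex.norm_real, Real.norm_eq_abs]

lemma geo (hmono : Monotone α) (hgap : ∀ k : ℤ, d ≤ α (2 * k + 1) - α (2 * k)) (h0 : 0 < ε) (h1 : ε < r)
    (h2 : r < d / 2) : Geo (Ut α ε) (mid' α) (rad α ε) (rad α r) where
  pos := fun p n h => by
    have : α (2 * p - 1) ≤ α (2 * n) := hmono (by omega)
    rw [rad]; linarith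
  lt := fun p n _ => by rw [rad, rad]; linarith
  inn := fun p n k z hp hn hz => by
    obtain ⟨t, ht, h⟩ := mem_Ut.1 hz
    have h3 := dist_triangle z t (mid' α p n)
    have := Dl_sub hmono hp hn ht
    rw [dist_mid] at h3
    rw [rad]; linarith
  out := fun p n k z hpn hk hz => by
    obtain ⟨t, ht, h⟩ := mem_Ut.1 hz
    have h3 := dist_triangle_left (t : ℂ) (mid' α p n) z
    have := Dl_out hmono hgap hpn hk ht
    rw [dist_mid] at h3
    rw [rad]; linarith

lemma grow_up (hmono : Monotone α) (hgap : ∀ k : ℤ, d ≤ α (2 * k + 1) - α (2 * k)) (N : ℕ) :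
    α 0 + N * d ≤ α (2 * N) := by
  induction N with
  | zero => simp
  | succ n ih =>
    have h1 := gap_le hmono hgap (show (n : ℤ) < n + 1 by omega)
    have h2 : α (2 * (n + 1 : ℤ) - 1) ≤ α (2 * (n + 1 : ℤ)) := hmono (by omega)
    push_cast
    linarith

lemma grow_dn (hmono : Monotone α) (hgap : ∀ k : ℤ, d ≤ α (2 * k + 1) - α (2 * k)) (N : ℕ) :
    α (2 * (-N : ℤ)- 1) ≤ α 0 - N * d := by
  induction N with
  | zero => simp only [Nat.cast_zero, neg_zero, mul_zero, zero_mul, sub_zero]; exact hmono (by omega)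
  | succ n ih =>
    have h1 := gap_le hmono hgap (show (-(n+1) : ℤ) < -n by omega)
    have h2 : α (2 * (-(n + 1) : ℤ) - 1) ≤ α (2 * (-(n + 1) : ℤ)) := hmono (by omega)
    push_cast
    linarith

end Geometry

section SA

lemma resolv_sa {T : H →ₗ.[ℂ] H} (hsa : IsSelfAdjoint T) {c : ℝ} {S : H →L[ℂ] H}
    (hS : IsResolventOf T (c : ℂ) S) : IsSelfAdjoint S := by
  have hsym : ∀ x y : T.domain, inner ℂ (T x) (y : H) = inner ℂ (x : H) (T y) := by
    have h := LinearPMap.adjoint_isFormalAdjoint hsa.dense_domain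
    rw [LinearPMap.isSelfAdjoint_def.1 hsa] at h
    exact h
  rw [ContinuousLinearMap.isSelfAdjoint_iff']
  symm
  rw [ContinuousLinearMap.eq_adjoint_iff]
  intro x y
  have h := hsym ⟨S x, resolv_S_mem hS x⟩ ⟨S y, resolv_S_mem hS y⟩
  rw [resolv_A_S hS, resolv_A_S hS] at h
  simp only [inner_add_left, inner_add_right, inner_smul_left, inner_smul_right,
    Complex.conj_ofReal] at h
  exact (add_right_cancel h).symm

/-- spectrum of the resolvent of `T` at `c` -/
def SpecIn (α : ℤ → ℝ) (c : ℝ) (S : H →L[ℂ] H) : Prop :=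
  ∀ s ∈ spectrum ℝ S, s = 0 ∨ ∃ k, ∃ t ∈ Dl α k, s * (t - c) = 1

lemma specIn {T : H →ₗ.[ℂ] H} {α : ℤ → ℝ} {c : ℝ} {S : H →L[ℂ] H}
    (hS : IsResolventOf T (c : ℂ) S)
    (hspec : pmSpectrum T ⊆ ⋃ k : ℤ, Complex.ofReal '' Set.Icc (α (2 * k - 1)) (α (2 * k))) :
    SpecIn α c S := by
  intro s hs
  by_cases h0 : s = 0
  · exact Or.inl h0
  right
  have h1 : ((c + 1 / s : ℝ) : ℂ) ∈ pmSpectrum T := by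
    intro hz
    have hg := (resolv_rsv hS hz).1
    rw [Gd, pcl] at hg
    refine hs ?_
    rw [spectrum.mem_resolventSet_iff]
    have e : algebraMap ℝ (H →L[ℂ] H) s - S
        = (s : ℂ) • (1 - (((c + 1 / s : ℝ) : ℂ) - c) • S) := by
      have h0' : (s : ℂ) ≠ 0 := by exact_mod_cast h0
      have e1 : (((c + 1 / s : ℝ) : ℂ) - c) = (s : ℂ)⁻¹ := by push_cast; field_simp; ring
      rw [e1, smul_sub, smul_smul, mul_inv_cancel₀ h0', one_smul, Algebra.algebraMap_eq_smul_one,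
        Complex.coe_smul]
    rw [e]
    have h0' : (s : ℂ) ≠ 0 := by exact_mod_cast h0
    exact hg.smul (Units.mk0 (s : ℂ) h0')
  obtain ⟨_, ⟨k, rfl⟩, t, ht, e⟩ := hspec h1
  refine ⟨k, t, ht, ?_⟩
  have : t = c + 1 / s := by exact_mod_cast e
  rw [this]; field_simp; ring

def dn (c : ℝ) (z : ℂ) (s : ℝ) : ℝ := (1 - (z.re - c) * s) ^ 2 + (z.im * s) ^ 2

lemma dn_eq {c s t : ℝ} (z : ℂ) (h : s * (t - c) = 1) :
    dn c z s = s ^ 2 * dist z (t : ℂ) ^ 2 := by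
  rw [Complex.dist_eq, ← Complex.normSq_eq_norm_sq, Complex.normSq_apply]
  simp only [dn, Complex.sub_re, Complex.sub_im, Complex.ofReal_re, Complex.ofReal_im]
  have : 1 - (z.re - c) * s = s * (t - z.re) := by rw [← h]; ring
  rw [this]; ring

variable {α : ℤ → ℝ} {c : ℝ} {S : H →L[ℂ] H} {ε : ℝ}

lemma quot_eq {s t : ℝ} (z : ℂ) (h : s * (t - c) = 1) :
    s ^ 2 / dn c z s = 1 / dist z (t : ℂ) ^ 2 := by
  have hs : s ≠ 0 := left_ne_zero_of_mul_eq_one h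
  rw [dn_eq z h, ← mul_one (s ^ 2), mul_assoc, one_mul]
  rw [mul_div_mul_left]
  exact pow_ne_zero 2 hs

/-- `z` at distance at least `ε` from all the intervals -/
def Far (α : ℤ → ℝ) (ε : ℝ) (z : ℂ) : Prop := ∀ k, ∀ t ∈ Dl α k, ε ≤ dist z (t : ℂ)

lemma far_iff {z : ℂ} : Far α ε z ↔ ∀ k, z ∉ Ut α ε k := by
  simp only [Far, mem_Ut, not_exists, not_and, not_lt]

lemma dn_ne (hs : SpecIn α c S) (hε : 0 < ε) {z : ℂ} (hz : Far α ε z) {s : ℝ}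
    (h : s ∈ spectrum ℝ S) : dn c z s ≠ 0 := by
  rcases hs s h with rfl | ⟨k, t, ht, e⟩
  · simp [dn]
  · rw [dn_eq z e]
    have h1 : s ≠ 0 := left_ne_zero_of_mul_eq_one e
    have h2 : dist z (t : ℂ) ≠ 0 := (hε.trans_le (hz k t ht)).ne'
    positivity

lemma quot_le (hs : SpecIn α c S) (hε : 0 < ε) {z : ℂ} (hz : Far α ε z) {s : ℝ}
    (h : s ∈ spectrum ℝ S) : s ^ 2 / dn c z s ≤ 1 / ε ^ 2 := by
  rcases hs s h with rfl | ⟨k, t, ht, e⟩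
  · simp; positivity
  · rw [quot_eq z e]
    have := hz k t ht
    gcongr

lemma quot_nonneg (z : ℂ) (s : ℝ) : 0 ≤ s ^ 2 / dn c z s := by
  rw [dn]; positivity

lemma dn_cont (z : ℂ) : Continuous (dn c z) := by unfold dn; fun_prop

lemma star_pcl (hS : IsSelfAdjoint S) (z : ℂ) :
    star (pcl S (c : ℂ) z) = pcl S (c : ℂ) (starRingEnd ℂ z) := by
  rw [pcl, pcl, star_sub, star_one, star_smul, hS.star_eq]
  simp

lemma pcl_pcl (hS : IsSelfAdjoint S) (z : ℂ) :
    star (pcl S (c : ℂ) z) * pcl S (c : ℂ) z = cfc (dn c z) S := by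
  have key : ∀ p q : ℝ, cfc (fun s : ℝ => 1 - p * s + q * s ^ 2) S
      = 1 - (p : ℂ) • S + (q : ℂ) • S ^ 2 := by
    intro p q
    have e : (fun s : ℝ => 1 - p * s + q * s ^ 2) = fun s => (Polynomial.C 1 -
        Polynomial.C p * Polynomial.X + Polynomial.C q * Polynomial.X ^ 2 : Polynomial ℝ).eval s := by
      ext s; simp
    rw [e, cfc_polynomial (R := ℝ) _ S hS]
    simp only [map_add, map_sub, map_mul, Polynomial.aeval_C, Polynomial.aeval_X, map_pow, map_one,
      Algebra.algebraMap_eq_smul_one, smul_mul_assoc, one_mul, Complex.coe_smul]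
  have e : dn c z = fun s => 1 - (2 * (z.re - c)) * s + ((z.re - c) ^ 2 + z.im ^ 2) * s ^ 2 := by
    ext s; simp [dn]; ring
  rw [e, key, star_pcl hS, pcl, pcl]
  rw [sub_mul, mul_sub, mul_sub, one_mul, mul_one, smul_mul_smul_comm, one_mul, ← pow_two]
  have e1 : ((2 * (z.re - c) : ℝ) : ℂ) = (z - c) + (starRingEnd ℂ z - c) := by
    apply Complex.ext <;> simp; ring
  have e2 : (((z.re - c) ^ 2 + z.im ^ 2 : ℝ) : ℂ) = (starRingEnd ℂ z - c) * (z - c) := by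
    apply Complex.ext
    · rw [Complex.ofReal_re]; simp; ring
    · rw [Complex.ofReal_im]; simp; ring
  rw [e1, e2]
  module

lemma star_rsv (hS : IsSelfAdjoint S) {z : ℂ} :
    star (rsv S (c : ℂ) z) = rsv S (c : ℂ) (starRingEnd ℂ z) := by
  rw [rsv, rsv, star_mul, hS.star_eq, ← Ring.inverse_star, star_pcl hS]
  exact (commute_inverse (commute_pcl (Commute.refl S) (c : ℂ) _)).eq.symm

lemma rsv_normal (hS : IsSelfAdjoint S) (z : ℂ) :
    Commute (star (rsv S (c : ℂ) z)) (rsv S (c : ℂ) z) := by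
  rw [star_rsv hS]
  exact commute_rsv (commute_rsv (Commute.refl S) _ _).symm _ _

lemma rsv_sq (hS : IsSelfAdjoint S) (hs : SpecIn α c S) (hε : 0 < ε) {z : ℂ} (hz : Far α ε z)
    (hg : Gd S (c : ℂ) z) :
    star (rsv S (c : ℂ) z) * rsv S (c : ℂ) z = cfc (fun s => s ^ 2 / dn c z s) S := by
  have hu : IsUnit (star (pcl S (c : ℂ) z) * pcl S (c : ℂ) z) := hg.star.mul hg
  refine hu.mul_right_cancel ?_
  have hne : ∀ s ∈ spectrum ℝ S, dn c z s ≠ 0 := fun s h => dn_ne hs hε hz h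
  have h1 : cfc (fun s => s ^ 2 / dn c z s) S * (star (pcl S (c : ℂ) z) * pcl S (c : ℂ) z)
      = S ^ 2 := by
    rw [pcl_pcl hS, ← cfc_mul (fun s => s ^ 2 / dn c z s) (dn c z) S
      ((continuous_pow 2).continuousOn.div (dn_cont z).continuousOn hne) (dn_cont z).continuousOn]
    rw [cfc_congr (g := fun s : ℝ => s ^ 2) (fun s hs' => div_mul_cancel₀ _ (hne s hs'))]
    rw [cfc_pow_id (R := ℝ) S 2 hS]
  rw [h1]
  have hc : Commute (rsv S (c : ℂ) z) (star (pcl S (c : ℂ) z)) := by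
    rw [star_pcl hS]
    exact (commute_rsv (commute_pcl (Commute.refl S) _ _).symm _ _).symm
  rw [mul_assoc, ← mul_assoc _ (star _), hc.eq, mul_assoc, rsv_mul_pcl hg, ← mul_assoc,
    ← star_mul, pcl_mul_rsv hg, hS.star_eq, pow_two]

lemma rsv_norm_sq (hS : IsSelfAdjoint S) (hs : SpecIn α c S) (hε : 0 < ε) {z : ℂ} (hz : Far α ε z)
    (hg : Gd S (c : ℂ) z) (f : H) :
    ‖rsv S (c : ℂ) z f‖ ^ 2 = RCLike.re (inner ℂ (cfc (fun s => s ^ 2 / dn c z s) S f) f) := by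
  rw [← rsv_sq hS hs hε hz hg, mul_apply_eq_comp, ContinuousLinearMap.star_eq_adjoint,
    ContinuousLinearMap.adjoint_inner_left, inner_self_eq_norm_sq]

lemma rsv_star_norm (hS : IsSelfAdjoint S) (z : ℂ) (f : H) :
    ‖star (rsv S (c : ℂ) z) f‖ = ‖rsv S (c : ℂ) z f‖ := by
  have h := rsv_normal (c := c) hS z
  have e : ‖star (rsv S (c : ℂ) z) f‖ ^ 2 = ‖rsv S (c : ℂ) z f‖ ^ 2 := by
    rw [← inner_self_eq_norm_sq (𝕜 := ℂ), ← inner_self_eq_norm_sq (𝕜 := ℂ),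
      ContinuousLinearMap.star_eq_adjoint,
      ContinuousLinearMap.adjoint_inner_left, ← ContinuousLinearMap.adjoint_inner_right (rsv S (c : ℂ) z)]
    rw [← ContinuousLinearMap.star_eq_adjoint, ← mul_apply_eq_comp,
      ← mul_apply_eq_comp, h.eq]
  exact (sq_eq_sq₀ (norm_nonneg _) (norm_nonneg _)).1 e

lemma cfc_quad_le (S : H →L[ℂ] H) {h : ℝ → ℝ} {C : ℝ} (hC : 0 ≤ C)
    (hh : ∀ s ∈ spectrum ℝ S, |h s| ≤ C) (f : H) :
    RCLike.re (inner ℂ (cfc h S f) f) ≤ C * ‖f‖ ^ 2 := by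
  have h1 : ‖cfc h S‖ ≤ C := norm_cfc_le hC hh
  calc RCLike.re (inner ℂ (cfc h S f) f) ≤ ‖cfc h S f‖ * ‖f‖ := re_inner_le_norm _ _
    _ ≤ (C * ‖f‖) * ‖f‖ := by
        gcongr
        exact (cfc h S).le_of_opNorm_le h1 f
    _ = C * ‖f‖ ^ 2 := by ring

lemma rsv_norm_le (hS : IsSelfAdjoint S) (hs : SpecIn α c S) (hε : 0 < ε) {z : ℂ} (hz : Far α ε z)
    (hg : Gd S (c : ℂ) z) : ‖rsv S (c : ℂ) z‖ ≤ 1 / ε := by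
  refine ContinuousLinearMap.opNorm_le_bound _ (by positivity) fun f => ?_
  refine le_of_sq_le_sq ?_ (by positivity)
  rw [rsv_norm_sq hS hs hε hz hg, mul_pow, div_pow, one_pow]
  refine cfc_quad_le S (by positivity) (fun s h => ?_) f
  rw [abs_of_nonneg (quot_nonneg z s)]
  exact quot_le hs hε hz h

end SA

section Integrals

lemma circle_dist_sq (m R t θ : ℝ) :
    dist (circleMap (m : ℂ) R θ) (t : ℂ) ^ 2
      = R ^ 2 + (t - m) ^ 2 - 2 * R * (t - m) * Real.cos θ := by
  rw [Complex.dist_eq, ← Complex.normSq_eq_norm_sq, Complex.normSq_apply]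
  simp only [circleMap, Complex.sub_re, Complex.sub_im, Complex.add_re, Complex.add_im,
    Complex.ofReal_re, Complex.ofReal_im, Complex.mul_re, Complex.mul_im,
    Complex.exp_ofReal_mul_I_re, Complex.exp_ofReal_mul_I_im]
  linear_combination (R ^ 2) * (Real.sin_sq_add_cos_sq θ)

lemma poisson_real {R w : ℝ} (h : |w| < R) :
    ∫ θ in (0 : ℝ)..2 * Real.pi, 1 / (R ^ 2 + w ^ 2 - 2 * R * w * Real.cos θ)
      = 2 * Real.pi / (R ^ 2 - w ^ 2) := by
  have hR : 0 < R := (abs_nonneg w).trans_lt h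
  have hne : R ^ 2 - w ^ 2 ≠ 0 := by
    have : w ^ 2 < R ^ 2 := by rw [← sq_abs w]; gcongr
    linarith
  have hw : (w : ℂ) ∈ ball (0 : ℂ) R := by simpa using h
  have h1 := DiffContOnCl.circleAverage_poissonKernel_smul' (E := ℂ)
    (f := fun _ => (1 : ℂ)) (c := 0) diffContOnCl_const hw
  rw [Real.circleAverage_def] at h1
  have h2 : ∀ θ : ℝ, ((‖circleMap 0 R θ - 0‖ ^ 2 - ‖(w : ℂ) - 0‖ ^ 2) /
      ‖(circleMap 0 R θ - 0) - ((w : ℂ) - 0)‖ ^ 2) • (1 : ℂ)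
      = (((R ^ 2 - w ^ 2) * (1 / (R ^ 2 + w ^ 2 - 2 * R * w * Real.cos θ)) : ℝ) : ℂ) := by
    intro θ
    have := circle_dist_sq 0 R w θ
    rw [Complex.dist_eq, sub_zero, Complex.ofReal_zero] at this
    simp only [sub_zero]
    rw [this]
    simp [mul_div_assoc, div_eq_mul_inv]
  simp only [h2] at h1
  rw [intervalIntegral.integral_ofReal, intervalIntegral.integral_const_mul] at h1
  have h3 : (2 * Real.pi)⁻¹ * ((R ^ 2 - w ^ 2) *
      ∫ θ in (0 : ℝ)..2 * Real.pi, 1 / (R ^ 2 + w ^ 2 - 2 * R * w * Real.cos θ)) = 1 := by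
    rw [Complex.real_smul] at h1
    exact_mod_cast h1
  have := Real.pi_pos
  field_simp at h3 ⊢
  linarith

lemma poisson_circle {m ρ t : ℝ} (hρ : 0 < ρ) (h : |t - m| ≠ ρ) :
    ∫ θ in (0 : ℝ)..2 * Real.pi, 1 / dist (circleMap (m : ℂ) ρ θ) (t : ℂ) ^ 2
      = 2 * Real.pi / |ρ ^ 2 - (t - m) ^ 2| := by
  simp only [circle_dist_sq]
  set a := t - m
  rcases lt_or_gt_of_ne h with h | h
  · rw [poisson_real h, abs_of_pos]
    have : a ^ 2 < ρ ^ 2 := by rw [← sq_abs a]; gcongr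
    linarith
  · have h' : ρ ^ 2 < a ^ 2 := by rw [← sq_abs a]; gcongr
    rw [abs_of_neg (by linarith), neg_sub]
    rcases lt_or_ge a 0 with ha | ha
    · rw [abs_of_neg ha] at h
      have := poisson_real (R := -a) (w := -ρ) (by rw [abs_neg, abs_of_pos hρ]; exact h)
      rw [show (-a) ^ 2 - (-ρ) ^ 2 = a ^ 2 - ρ ^ 2 by ring] at this
      rw [← this]
      congr 1; ext θ; ring
    · rw [abs_of_nonneg ha] at h
      have := poisson_real (R := a) (w := ρ) (by rw [abs_of_pos hρ]; exact h)
      rw [← this]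
      congr 1; ext θ; ring

variable {α : ℤ → ℝ} {c : ℝ} {S : H →L[ℂ] H} {ε : ℝ}

def quadL (f : H) : (H →L[ℂ] H) →L[ℝ] ℝ :=
  Complex.reCLM.comp (((innerSL ℂ f).restrictScalars ℝ).comp
    ((ContinuousLinearMap.apply ℂ H f).restrictScalars ℝ))

lemma quadL_apply (f : H) (X : H →L[ℂ] H) : quadL f X = RCLike.re (inner ℂ (X f) f) := by
  rw [inner_re_symm]; rfl

lemma int_bound {ι : Type*} (F : Finset ι) (m ρ : ι → ℝ) (hS : IsSelfAdjoint S)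
    (hs : SpecIn α c S) (hε : 0 < ε) (hρ : ∀ i ∈ F, 0 < ρ i)
    (hfar : ∀ i ∈ F, ∀ θ, Far α ε (circleMap (m i : ℂ) (ρ i) θ))
    (hreg : RegOff (Ut α ε) S (c : ℂ)) {C : ℝ} (hC0 : 0 ≤ C)
    (hC : ∀ k, ∀ t ∈ Dl α k, ∑ i ∈ F, ρ i * (2 * Real.pi / |ρ i ^ 2 - (t - m i) ^ 2|) ≤ C) (f : H) :
    ∑ i ∈ F, ∫ θ in (0 : ℝ)..2 * Real.pi, ρ i * ‖rsv S (c : ℂ) (circleMap (m i : ℂ) (ρ i) θ) f‖ ^ 2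
      ≤ C * ‖f‖ ^ 2 := by
  set z : ι → ℝ → ℂ := fun i θ => circleMap (m i : ℂ) (ρ i) θ with hz
  have hzc : ∀ i, Continuous (z i) := fun i => continuous_circleMap _ _
  set φ : ℝ → ℝ → ℝ := fun θ s => ∑ i ∈ F, ρ i * (s ^ 2 / dn c (z i θ) s) with hφ
  have hgd : ∀ i ∈ F, ∀ θ, Gd S (c : ℂ) (z i θ) := fun i hi θ => hreg _ (far_iff.1 (hfar i hi θ))
  have hjc : ∀ i ∈ F, ContinuousOn (fun q : ℝ × ℝ => ρ i * (q.2 ^ 2 / dn c (z i q.1) q.2))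
      (Set.univ ×ˢ spectrum ℝ S) := by
    intro i hi
    refine continuousOn_const.mul (ContinuousOn.div (by fun_prop) ?_ ?_)
    · have := hzc i
      unfold dn
      fun_prop
    · rintro ⟨θ, s⟩ ⟨-, h⟩
      exact dn_ne hs hε (hfar i hi θ) h
  have hjc' : ContinuousOn (Function.uncurry φ) (Set.univ ×ˢ spectrum ℝ S) := by
    have := continuousOn_finsetSum F hjc
    exact this
  have hcs : ∀ i ∈ F, ∀ θ, ContinuousOn (fun s => s ^ 2 / dn c (z i θ) s) (spectrum ℝ S) :=
    fun i hi θ => (continuous_pow 2).continuousOn.div (dn_cont _).continuousOn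
      fun s h => dn_ne hs hε (hfar i hi θ) h
  have hct : ∀ i ∈ F, ∀ s ∈ spectrum ℝ S, Continuous fun θ => ρ i * (s ^ 2 / dn c (z i θ) s) := by
    intro i hi s h
    refine continuous_const.mul (Continuous.div (by fun_prop) ?_ fun θ => dn_ne hs hε (hfar i hi θ) h)
    have := hzc i
    unfold dn
    fun_prop
  have hval : ∀ i ∈ F, ∀ θ, ρ i * ‖rsv S (c : ℂ) (z i θ) f‖ ^ 2
      = quadL f (cfc (fun s => ρ i * (s ^ 2 / dn c (z i θ) s)) S) := by
    intro i hi θ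
    rw [rsv_norm_sq hS hs hε (hfar i hi θ) (hgd i hi θ), ← quadL_apply,
      cfc_const_mul (ρ i) (fun s => s ^ 2 / dn c (z i θ) s) S (hcs i hi θ), map_smul, smul_eq_mul]
  have hsum : ∀ θ, ∑ i ∈ F, ρ i * ‖rsv S (c : ℂ) (z i θ) f‖ ^ 2 = quadL f (cfc (φ θ) S) := by
    intro θ
    have e : φ θ = ∑ i ∈ F, fun s => ρ i * (s ^ 2 / dn c (z i θ) s) := by
      ext s; simp [hφ]
    rw [e, cfc_sum (fun i => fun s => ρ i * (s ^ 2 / dn c (z i θ) s)) S F (fun i hi => continuousOn_const.mul (hcs i hi θ)), map_sum]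
    exact Finset.sum_congr rfl fun i hi => hval i hi θ
  have hpi : (0 : ℝ) ≤ 2 * Real.pi := by positivity
  have hb : ∀ᵐ θ ∂(MeasureTheory.volume.restrict (Set.Ioc 0 (2 * Real.pi))),
      ∀ s ∈ spectrum ℝ S, ‖φ θ s‖ ≤ (fun _ : ℝ => ∑ i ∈ F, ρ i * (1 / ε ^ 2)) θ := by
    refine Filter.Eventually.of_forall fun θ s h => ?_
    refine (norm_sum_le _ _).trans (Finset.sum_le_sum fun i hi => ?_)
    have := (hρ i hi).le
    rw [Real.norm_eq_abs, abs_of_nonneg (mul_nonneg this (quot_nonneg _ _))]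
    refine mul_le_mul_of_nonneg_left ?_ this
    exact quot_le hs hε (hfar i hi θ) h
  have hfin : MeasureTheory.HasFiniteIntegral (fun _ : ℝ => ∑ i ∈ F, ρ i * (1 / ε ^ 2))
      (MeasureTheory.volume.restrict (Set.Ioc 0 (2 * Real.pi))) :=
    MeasureTheory.hasFiniteIntegral_const _
  have hintg := integrableOn_cfc (μ := MeasureTheory.volume) (measurableSet_Ioc (a := 0) (b := 2 * Real.pi)) φ _ S
    (hjc'.mono (Set.prod_mono_left (Set.subset_univ _))) hb hfin hS
  have hcfc := cfc_setIntegral (μ := MeasureTheory.volume) (measurableSet_Ioc (a := 0) (b := 2 * Real.pi)) φ _ S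
    (hjc'.mono (Set.prod_mono_left (Set.subset_univ _))) hb hfin hS
  have hnc : ∀ i ∈ F, Continuous fun θ => ρ i * ‖rsv S (c : ℂ) (z i θ) f‖ ^ 2 := by
    intro i hi
    have : Continuous fun θ => rsv S (c : ℂ) (z i θ) := by
      rw [continuous_iff_continuousAt]
      intro θ
      exact ContinuousAt.comp (g := rsv S (c : ℂ)) (differentiableAt_rsv (hgd i hi θ)).continuousAt (hzc i).continuousAt
    fun_prop
  rw [← intervalIntegral.integral_finsetSum fun i hi => (hnc i hi).intervalIntegrable _ _]
  calc ∫ θ in (0 : ℝ)..2 * Real.pi, ∑ i ∈ F, ρ i * ‖rsv S (c : ℂ) (z i θ) f‖ ^ 2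
      = ∫ θ in Set.Ioc 0 (2 * Real.pi), quadL f (cfc (φ θ) S) := by
        rw [intervalIntegral.integral_of_le hpi]; simp only [hsum]
    _ = quadL f (cfc (fun s => ∫ θ in Set.Ioc 0 (2 * Real.pi), φ θ s) S) := by
        rw [hcfc]; exact ContinuousLinearMap.integral_comp_comm (quadL f) hintg
    _ ≤ C * ‖f‖ ^ 2 := by
        rw [quadL_apply]
        refine cfc_quad_le S hC0 (fun s h => ?_) f
        rw [← intervalIntegral.integral_of_le hpi]
        rw [intervalIntegral.integral_finsetSum fun i hi => (hct i hi s h).intervalIntegrable _ _]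
        rw [abs_of_nonneg]
        · rcases hs s h with rfl | ⟨k, t, ht, e⟩
          · simpa using hC0
          · refine le_trans (le_of_eq ?_) (hC k t ht)
            refine Finset.sum_congr rfl fun i hi => ?_
            rw [intervalIntegral.integral_const_mul]
            simp only [quot_eq _ e]
            rw [poisson_circle (hρ i hi)]
            intro hcon
            have h0 := hfar i hi 0 k t ht
            have hpi' := hfar i hi Real.pi k t ht
            have e0 := circle_dist_sq (m i) (ρ i) t 0
            have epi := circle_dist_sq (m i) (ρ i) t Real.pi
            rw [Real.cos_zero] at e0
            rw [Real.cos_pi] at epi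
            rcases abs_eq (hρ i hi).le |>.1 hcon with h | h
            · rw [h] at e0
              nlinarith
            · rw [h] at epi
              nlinarith
        · refine Finset.sum_nonneg fun i hi => intervalIntegral.integral_nonneg hpi fun θ _ => ?_
          exact mul_nonneg (hρ i hi).le (quot_nonneg _ _)

end Integrals

section Sums

variable {α : ℤ → ℝ} {d r : ℝ}

lemma term_eq {p n : ℤ} (t : ℝ) : rad α r p n * (2 * Real.pi / |rad α r p n ^ 2 - (t - midR α p n) ^ 2|)
    = Real.pi * (((α (2 * n) + r) - (α (2 * p - 1) - r)) /
      (|t - (α (2 * p - 1) - r)| * |(α (2 * n) + r) - t|)) := by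
  rw [← abs_mul]
  have : rad α r p n ^ 2 - (t - midR α p n) ^ 2
      = (t - (α (2 * p - 1) - r)) * ((α (2 * n) + r) - t) := by
    rw [rad, midR]; ring
  rw [this, rad]; ring

lemma g_in {a b t : ℝ} (h1 : a < t) (h2 : t < b) :
    (b - a) / (|t - a| * |b - t|) = 1 / (t - a) + 1 / (b - t) := by
  rw [abs_of_pos (by linarith), abs_of_pos (by linarith)]
  have : t - a ≠ 0 := by linarith
  have : b - t ≠ 0 := by linarith
  field_simp; ring

lemma g_lt {a b t : ℝ} (h1 : a < b) (h2 : b < t) :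
    (b - a) / (|t - a| * |b - t|) = 1 / (t - b) - 1 / (t - a) := by
  rw [abs_of_pos (by linarith), abs_of_neg (by linarith), neg_sub]
  have : t - a ≠ 0 := by linarith
  have : t - b ≠ 0 := by linarith
  field_simp; ring

lemma g_gt {a b t : ℝ} (h1 : t < a) (h2 : a < b) :
    (b - a) / (|t - a| * |b - t|) = 1 / (a - t) - 1 / (b - t) := by
  rw [abs_of_neg (by linarith), abs_of_pos (by linarith), neg_sub]
  have : a - t ≠ 0 := by linarith
  have : b - t ≠ 0 := by linarith
  field_simp; ring

/-- single discs -/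
lemma term_single (hmono : Monotone α) (hgap : ∀ k : ℤ, d ≤ α (2 * k + 1) - α (2 * k)) (hr : 0 < r)
    (hrd : r < d / 2) {p n j : ℤ} (hpn : p ≤ n) {t : ℝ} (ht : t ∈ Dl α j) :
    rad α r p n * (2 * Real.pi / |rad α r p n ^ 2 - (t - midR α p n) ^ 2|) ≤ Real.pi * (2 / r) := by
  rw [term_eq]
  refine mul_le_mul_of_nonneg_left ?_ Real.pi_pos.le
  have ht1 := ht.1; have ht2 := ht.2
  have hab : α (2 * p - 1) ≤ α (2 * n) := hmono (by omega)
  rcases lt_or_ge j p with h | h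
  · have h1 := gap_le hmono hgap h
    rw [g_gt (by linarith) (by linarith)]
    have : 1 / (α (2 * p - 1) - r - t) ≤ 1 / r := one_div_le_one_div_of_le hr (by linarith)
    have : 0 ≤ 1 / (α (2 * n) + r - t) := one_div_nonneg.2 (by linarith)
    have : 0 < 1 / r := by positivity
    have : 2 / r = 1 / r + 1 / r := by ring
    linarith
  rcases lt_or_ge n j with h' | h'
  · have h1 := gap_le hmono hgap h'
    rw [g_lt (by linarith) (by linarith)]
    have : 1 / (t - (α (2 * n) + r)) ≤ 1 / r := one_div_le_one_div_of_le hr (by linarith)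
    have : 0 ≤ 1 / (t - (α (2 * p - 1) - r)) := one_div_nonneg.2 (by linarith)
    have : 0 < 1 / r := by positivity
    have : 2 / r = 1 / r + 1 / r := by ring
    linarith
  · have h1 : α (2 * p - 1) ≤ α (2 * j - 1) := hmono (by omega)
    have h2 : α (2 * j) ≤ α (2 * n) := hmono (by omega)
    rw [g_in (by linarith) (by linarith)]
    have : 1 / (α (2 * n) + r - t) ≤ 1 / r := one_div_le_one_div_of_le hr (by linarith)
    have : 1 / (t - (α (2 * p - 1) - r)) ≤ 1 / r := one_div_le_one_div_of_le hr (by linarith)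
    have : 2 / r = 1 / r + 1 / r := by ring
    linarith

lemma telesc (u v : ℤ → ℝ) (h : ∀ k, v k ≤ u (k + 1) - u k) (p : ℤ) (N : ℕ) :
    ∑ k ∈ Finset.Ico p (p + N), v k ≤ u (p + N) - u p := by
  induction N with
  | zero => simp
  | succ n ih =>
    have e : Finset.Ico p (p + (n + 1 : ℕ)) = insert (p + n) (Finset.Ico p (p + n)) := by
      ext x; simp only [Finset.mem_Ico, Finset.mem_insert]; push_cast; omega
    rw [e, Finset.sum_insert (by simp)]
    have := h (p + n)
    push_cast
    rw [← add_assoc]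
    linarith

lemma term_sum (hmono : Monotone α) (hgap : ∀ k : ℤ, d ≤ α (2 * k + 1) - α (2 * k)) (hr : 0 < r)
    (hrd : r < d / 2) (F : Finset ℤ) {j : ℤ} {t : ℝ} (ht : t ∈ Dl α j) :
    ∑ k ∈ F, rad α r k k * (2 * Real.pi / |rad α r k k ^ 2 - (t - midR α k k) ^ 2|)
      ≤ Real.pi * (4 / r) := by
  simp only [term_eq]
  rw [← Finset.mul_sum]
  refine mul_le_mul_of_nonneg_left ?_ Real.pi_pos.le
  set v : ℤ → ℝ := fun k => ((α (2 * k) + r) - (α (2 * k - 1) - r)) /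
      (|t - (α (2 * k - 1) - r)| * |(α (2 * k) + r) - t|) with hv
  set u : ℤ → ℝ := fun k => if k ≤ j then 1 / (t - (α (2 * k - 1) - r))
    else 4 / r - 1 / (α (2 * k - 1) - r - t) with hu
  have ht1 := ht.1; have ht2 := ht.2
  have hr' : 0 < 1 / r := by positivity
  have h4 : 4 / r = 1 / r + 1 / r + 1 / r + 1 / r := by ring
  have hab : ∀ k, α (2 * k - 1) ≤ α (2 * k) := fun k => hmono (by omega)
  have hle : ∀ k, k ≤ j → r ≤ t - (α (2 * k - 1) - r) := by
    intro k hk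
    have : α (2 * k - 1) ≤ α (2 * j - 1) := hmono (by omega)
    linarith
  have hgt : ∀ k, j < k → r ≤ α (2 * k - 1) - r - t := by
    intro k hk
    have := gap_le hmono hgap hk
    linarith
  have hv0 : ∀ k, 0 ≤ v k := fun k => by
    have := hab k
    exact div_nonneg (by linarith) (by positivity)
  have hub : ∀ k, 0 ≤ u k ∧ u k ≤ 4 / r := by
    intro k
    simp only [hu]
    split_ifs with hk
    · have h1 := one_div_le_one_div_of_le hr (hle k hk)
      have h2 := one_div_nonneg.2 (hr.le.trans (hle k hk))
      constructor <;> linarith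
    · have h1 := one_div_le_one_div_of_le hr (hgt k (not_le.1 hk))
      have h2 := one_div_nonneg.2 (hr.le.trans (hgt k (not_le.1 hk)))
      constructor <;> linarith
  have hstep : ∀ k, v k ≤ u (k + 1) - u k := by
    intro k
    have hk1 := gap_le hmono hgap (show k < k + 1 by omega)
    have hk := hab k
    have hk' := hab (k + 1)
    rcases lt_trichotomy k j with h | h | h
    · have a1 := hle k h.le
      have a2 := hle (k + 1) (by omega)
      simp only [hu, hv, if_pos h.le, if_pos (show k + 1 ≤ j by omega)]
      have h6 : α (2 * k) + d ≤ α (2 * j - 1) := gap_le hmono hgap h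
      rw [g_lt (by linarith) (by linarith)]
      have : 1 / (t - (α (2 * k) + r)) ≤ 1 / (t - (α (2 * (k + 1) - 1) - r)) :=
        one_div_le_one_div_of_le (by linarith) (by linarith)
      linarith
    · subst h
      have a1 := hle k le_rfl
      have a2 := hgt (k + 1) (by omega)
      simp only [hu, hv, if_pos (le_refl k), if_neg (show ¬ (k + 1 ≤ k) by omega)]
      rw [g_in (by linarith) (by linarith)]
      have b1 := one_div_le_one_div_of_le hr a1
      have b2 := one_div_le_one_div_of_le hr a2
      have b3 : 1 / (α (2 * k) + r - t) ≤ 1 / r := one_div_le_one_div_of_le hr (by linarith)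
      linarith
    · have a1 := hgt k h
      have a2 := hgt (k + 1) (by omega)
      simp only [hu, hv, if_neg (show ¬ (k + 1 ≤ j) by omega), if_neg (not_le.2 h)]
      rw [g_gt (by linarith) (by linarith)]
      have : 1 / (α (2 * (k + 1) - 1) - r - t) ≤ 1 / (α (2 * k) + r - t) :=
        one_div_le_one_div_of_le (by linarith) (by linarith)
      linarith
  obtain ⟨M, hM⟩ := F.bddAbove
  obtain ⟨p, hp⟩ := F.bddBelow
  have hsub : F ⊆ Finset.Ico p (p + ((M + 1 - p).toNat : ℕ)) := by
    intro x hx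
    have h1 := hM hx
    have h2 := hp hx
    rw [Finset.mem_Ico]
    omega
  refine (Finset.sum_le_sum_of_subset_of_nonneg hsub fun k _ _ => hv0 k).trans ?_
  refine (telesc u v hstep p _).trans ?_
  have := (hub (p + ((M + 1 - p).toNat : ℕ))).2
  have := (hub p).1
  linarith

end Sums

section Main

lemma norm_circle_le' {E : Type*} [NormedAddCommGroup E] [NormedSpace ℂ E] {m : ℂ} {ρ : ℝ}
    (hρ : 0 < ρ) {F : ℂ → E} {G : ℝ → ℝ} (h : ∀ θ, ρ * ‖F (circleMap m ρ θ)‖ ≤ G θ)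
    (hG : Continuous G) : ‖∮ z in C(m, ρ), F z‖ ≤ ∫ θ in (0 : ℝ)..2 * Real.pi, G θ := by
  rw [circleIntegral]
  refine intervalIntegral.norm_integral_le_of_norm_le (by positivity)
    (Filter.Eventually.of_forall fun θ _ => ?_) (hG.intervalIntegrable _ _)
  rw [norm_smul, deriv_circleMap]
  refine le_trans (le_of_eq ?_) (h θ)
  simp [abs_of_pos hρ]

/-- The standing assumptions: `S`, `S'` are the resolvents at `c` of the self-adjoint operator
and of the perturbed operator. -/
structure Sys (α : ℤ → ℝ) (d ε r c κ : ℝ) (S S' B : H →L[ℂ] H) : Prop where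
  mono : Monotone α
  gap : ∀ k : ℤ, d ≤ α (2 * k + 1) - α (2 * k)
  h0 : 0 < ε
  h1 : ε < r
  h2 : r < d / 2
  sa : IsSelfAdjoint S
  sp : SpecIn α c S
  reg : RegOff (Ut α ε) S (c : ℂ)
  reg' : RegOff (Ut α ε) S' (c : ℂ)
  κ0 : 0 ≤ κ
  res : ∀ z, Far α ε z → rsv S' (c : ℂ) z - rsv S (c : ℂ) z
    = -(rsv S' (c : ℂ) z * B * rsv S (c : ℂ) z)
  kp : ∀ z, Far α ε z → ∀ f, ‖rsv S' (c : ℂ) z f‖ ≤ κ * ‖rsv S (c : ℂ) z f‖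
  ks : ∀ z, Far α ε z → ∀ f, ‖star (rsv S' (c : ℂ) z) f‖ ≤ κ * ‖rsv S (c : ℂ) z f‖
  lo : α 0 < c
  hi : c < α 1

variable {α : ℤ → ℝ} {d ε r c κ : ℝ} {S S' B : H →L[ℂ] H}

lemma Sys.geo (s : Sys α d ε r c κ S S' B) : Geo (Ut α ε) (mid' α) (rad α ε) (rad α r) :=
  _root_.geo s.mono s.gap s.h0 s.h1 s.h2

lemma Sys.r0 (s : Sys α d ε r c κ S S' B) : 0 < r := s.h0.trans s.h1

lemma Sys.far (s : Sys α d ε r c κ S S' B) {p n : ℤ} (h : p ≤ n) (θ : ℝ) :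
    Far α ε (circleMap (mid' α p n) (rad α r p n) θ) := by
  rw [far_iff]
  intro k hk
  have hd : dist (circleMap (mid' α p n) (rad α r p n) θ) (mid' α p n) = rad α r p n := by
    rw [dist_eq_norm]; simp [circleMap, abs_of_pos (s.geo.posb h)]
  by_cases hkk : p ≤ k ∧ k ≤ n
  · have := s.geo.inn p n k _ hkk.1 hkk.2 hk
    have := s.geo.lt p n h
    linarith
  · have := s.geo.out p n k _ h hkk hk
    linarith

lemma Sys.bound_single (s : Sys α d ε r c κ S S' B) {p n : ℤ} (h : p ≤ n) (f : H) :
    ∫ θ in (0 : ℝ)..2 * Real.pi,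
      rad α r p n * ‖rsv S (c : ℂ) (circleMap (mid' α p n) (rad α r p n) θ) f‖ ^ 2
      ≤ Real.pi * (2 / r) * ‖f‖ ^ 2 := by
  have hr := s.r0
  have := int_bound (Finset.univ : Finset Unit) (fun _ => midR α p n) (fun _ => rad α r p n)
    s.sa s.sp s.h0 (fun _ _ => s.geo.posb h) (fun _ _ θ => s.far h θ) s.reg
    (C := Real.pi * (2 / r)) (by positivity)
    (fun k t ht => by
      simpa using term_single s.mono s.gap s.r0 s.h2 h ht) f
  rw [Finset.univ_unique, Finset.sum_singleton] at this
  exact this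

lemma Sys.bound_sum (s : Sys α d ε r c κ S S' B) (F : Finset ℤ) (f : H) :
    ∑ k ∈ F, ∫ θ in (0 : ℝ)..2 * Real.pi,
      rad α r k k * ‖rsv S (c : ℂ) (circleMap (mid' α k k) (rad α r k k) θ) f‖ ^ 2
      ≤ Real.pi * (4 / r) * ‖f‖ ^ 2 := by
  have hr := s.r0
  exact int_bound F (fun k => midR α k k) (fun k => rad α r k k)
    s.sa s.sp s.h0 (fun _ _ => s.geo.posb le_rfl) (fun _ _ θ => s.far le_rfl θ) s.reg
    (C := Real.pi * (4 / r)) (by positivity)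
    (fun k t ht => term_sum s.mono s.gap s.r0 s.h2 F ht) f

lemma Sys.cont (s : Sys α d ε r c κ S S' B) {p n : ℤ} (h : p ≤ n) (f : H) :
    Continuous fun θ => rad α r p n *
      ‖rsv S (c : ℂ) (circleMap (mid' α p n) (rad α r p n) θ) f‖ ^ 2 := by
  have : Continuous fun θ => rsv S (c : ℂ) (circleMap (mid' α p n) (rad α r p n) θ) := by
    rw [continuous_iff_continuousAt]
    intro θ
    exact ContinuousAt.comp (g := rsv S (c : ℂ))
      (differentiableAt_rsv (s.reg _ (far_iff.1 (s.far h θ)))).continuousAt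
      (continuous_circleMap _ _).continuousAt
  fun_prop

lemma norm_two_pi_I_inv : ‖(2 * Real.pi * Complex.I : ℂ)⁻¹‖ = 1 / (2 * Real.pi) := by
  simp [abs_of_pos Real.pi_pos]

lemma Sys.diff_le (s : Sys α d ε r c κ S S' B) (k : ℤ) (f g : H) :
    ‖inner ℂ g ((Qd (mid' α) (rad α r) S' (c : ℂ) k k - Qd (mid' α) (rad α r) S (c : ℂ) k k) f)‖
      ≤ ‖B‖ * κ / (4 * Real.pi) * ((∫ θ in (0 : ℝ)..2 * Real.pi,
      rad α r k k * ‖rsv S (c : ℂ) (circleMap (mid' α k k) (rad α r k k) θ) f‖ ^ 2) +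
      ∫ θ in (0 : ℝ)..2 * Real.pi,
      rad α r k k * ‖rsv S (c : ℂ) (circleMap (mid' α k k) (rad α r k k) θ) g‖ ^ 2) := by
  have hρ := s.geo.posb (le_refl k)
  set ρ := rad α r k k
  set m := mid' α k k with hm
  have i1 := circleIntegrable_w hρ (s.geo.gds s.reg (le_refl k)) (g := fun _ => 1) continuousOn_const
  have i2 := circleIntegrable_w hρ (s.geo.gds s.reg' (le_refl k)) (g := fun _ => 1) continuousOn_const
  have e : Qd (mid' α) (rad α r) S' (c : ℂ) k k - Qd (mid' α) (rad α r) S (c : ℂ) k k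
      = -((2 * Real.pi * Complex.I : ℂ)⁻¹ • ∮ z in C(m, ρ), ((1 : ℂ) • rsv S' (c : ℂ) z
        - (1 : ℂ) • rsv S (c : ℂ) z)) := by
    rw [circleIntegral.integral_sub i2 i1, Qd, Qd, rzQ, rzQ, rzW, rzW, smul_sub]
    abel
  set L : (H →L[ℂ] H) →L[ℂ] ℂ := (innerSL ℂ g).comp (ContinuousLinearMap.apply ℂ H f) with hL
  have hLa : ∀ X : H →L[ℂ] H, L X = inner ℂ g (X f) := fun X => rfl
  rw [← hLa, e, map_neg, norm_neg, map_smul, norm_smul, norm_two_pi_I_inv]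
  have hLc : (∮ z in C(m, ρ), L ((1 : ℂ) • rsv S' (c : ℂ) z - (1 : ℂ) • rsv S (c : ℂ) z))
      = L (∮ z in C(m, ρ), ((1 : ℂ) • rsv S' (c : ℂ) z - (1 : ℂ) • rsv S (c : ℂ) z)) :=
    clm_circleIntegral L (i2.sub i1)
  rw [← hLc]
  have hbd : ‖∮ z in C(m, ρ), L ((1 : ℂ) • rsv S' (c : ℂ) z - (1 : ℂ) • rsv S (c : ℂ) z)‖
      ≤ ∫ θ in (0 : ℝ)..2 * Real.pi, ‖B‖ * κ / 2 *
      (ρ * ‖rsv S (c : ℂ) (circleMap m ρ θ) f‖ ^ 2 +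
      ρ * ‖rsv S (c : ℂ) (circleMap m ρ θ) g‖ ^ 2) := by
    refine norm_circle_le' hρ (fun θ => ?_)
      (continuous_const.mul ((s.cont le_rfl f).add (s.cont le_rfl g)))
    have hz := s.far (le_refl k) θ
    set z := circleMap m ρ θ
    rw [one_smul, one_smul, s.res z hz, hLa]
    set R := rsv S (c : ℂ) z
    set R' := rsv S' (c : ℂ) z
    have e1 : inner ℂ g ((-(R' * B * R)) f) = - inner ℂ (star R' g) (B (R f)) := by
      rw [ContinuousLinearMap.star_eq_adjoint, ContinuousLinearMap.adjoint_inner_left,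
        ← inner_neg_right]
      rfl
    rw [e1, norm_neg]
    have e2 : ‖inner ℂ (star R' g) (B (R f))‖ ≤ (κ * ‖R g‖) * (‖B‖ * ‖R f‖) := by
      refine (norm_inner_le_norm _ _).trans ?_
      exact mul_le_mul (s.ks z hz g) (B.le_opNorm _) (norm_nonneg _)
        (mul_nonneg s.κ0 (norm_nonneg _))
    have e3 : ‖R g‖ * ‖R f‖ ≤ (‖R f‖ ^ 2 + ‖R g‖ ^ 2) / 2 := by
      nlinarith [sq_nonneg (‖R f‖ - ‖R g‖)]
    calc ρ * ‖inner ℂ (star R' g) (B (R f))‖ ≤ ρ * ((κ * ‖R g‖) * (‖B‖ * ‖R f‖)) := by gcongr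
      _ = (ρ * (‖B‖ * κ)) * (‖R g‖ * ‖R f‖) := by ring
      _ ≤ (ρ * (‖B‖ * κ)) * ((‖R f‖ ^ 2 + ‖R g‖ ^ 2) / 2) := by
        have := s.κ0
        gcongr
      _ = _ := by ring
  rw [intervalIntegral.integral_const_mul, intervalIntegral.integral_add
    ((s.cont le_rfl f).intervalIntegrable _ _) ((s.cont le_rfl g).intervalIntegrable _ _)] at hbd
  refine (mul_le_mul_of_nonneg_left hbd (by positivity)).trans (le_of_eq ?_)
  have := Real.pi_pos
  field_simp
  ring

lemma opNorm_of_quad {X : H →L[ℂ] H} {K : ℝ} (hK : 0 ≤ K)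
    (h : ∀ f g, ‖inner ℂ g (X f)‖ ≤ K * (‖f‖ ^ 2 + ‖g‖ ^ 2)) : ‖X‖ ≤ 2 * K := by
  refine X.opNorm_le_bound (by positivity) fun f => ?_
  by_cases hX : X f = 0
  · rw [hX, norm_zero]; positivity
  have hf : 0 < ‖f‖ := by
    rw [norm_pos_iff]; rintro rfl; exact hX (map_zero _)
  have hXp : 0 < ‖X f‖ := norm_pos_iff.2 hX
  have h1 := h f (((‖f‖ / ‖X f‖ : ℝ) : ℂ) • X f)
  rw [inner_smul_left, norm_mul, inner_self_eq_norm_sq_to_K, norm_smul] at h1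
  simp only [Complex.conj_ofReal, Complex.norm_real, norm_div, norm_norm, norm_pow,
    RCLike.norm_ofReal, abs_norm] at h1
  rw [div_mul_cancel₀ _ hXp.ne'] at h1
  have e : ‖f‖ / ‖X f‖ * ‖X f‖ ^ 2 = ‖f‖ * ‖X f‖ := by field_simp
  rw [e] at h1
  have : ‖f‖ * ‖X f‖ ≤ ‖f‖ * (2 * K * ‖f‖) := by linarith
  exact le_of_mul_le_mul_left this hf

lemma Sys.proj_le (s : Sys α d ε r c κ S S' B) (F : Finset ℤ) :
    ‖∑ k ∈ F, Qd (mid' α) (rad α r) S (c : ℂ) k k‖ ≤ 1 := by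
  set P := ∑ k ∈ F, Qd (mid' α) (rad α r) S (c : ℂ) k k with hP
  have hPP : P * P = P := s.geo.sum_idem s.reg F
  have hcomm : ∀ X, Commute X S → Commute X P := fun X hX =>
    Commute.sum_right _ _ _ fun k _ => s.geo.comm s.reg le_rfl hX
  have hPS : Commute P S := (hcomm S (Commute.refl S)).symm
  have hsP : Commute (star P) S := by
    have := hPS.star_star
    rwa [s.sa.star_eq] at this
  have hn : IsStarNormal P := ⟨hcomm _ hsP⟩
  have hsa : IsSelfAdjoint P :=
    (ContinuousLinearMap.IsIdempotentElem.isSelfAdjoint_iff_isStarNormal hPP).2 hn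
  have h1 : ‖P‖ = ‖P‖ * ‖P‖ := by
    nth_rewrite 1 [← hPP]
    nth_rewrite 1 [← hsa.star_eq]
    exact CStarRing.norm_star_mul_self
  by_contra hc
  push Not at hc
  nlinarith

lemma Sys.sum_le (s : Sys α d ε r c κ S S' B) : ∃ M, 0 ≤ M ∧ ∀ F : Finset ℤ,
    ‖∑ k ∈ F, Qd (mid' α) (rad α r) S' (c : ℂ) k k‖ ≤ M := by
  have hr := s.r0
  have hκ := s.κ0
  have hpi := Real.pi_pos
  refine ⟨1 + 2 * (‖B‖ * κ / r), by positivity, fun F => ?_⟩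
  set Q := fun k => Qd (mid' α) (rad α r) S' (c : ℂ) k k
  set P := fun k => Qd (mid' α) (rad α r) S (c : ℂ) k k
  have h1 : ‖∑ k ∈ F, (Q k - P k)‖ ≤ 2 * (‖B‖ * κ / r) := by
    refine opNorm_of_quad (by positivity) fun f g => ?_
    rw [_root_.sum_apply, inner_sum]
    refine (norm_sum_le _ _).trans ((Finset.sum_le_sum fun k _ => s.diff_le k f g).trans ?_)
    rw [← Finset.mul_sum, Finset.sum_add_distrib]
    have e : ‖B‖ * κ / r * (‖f‖ ^ 2 + ‖g‖ ^ 2) = ‖B‖ * κ / (4 * Real.pi) *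
        (Real.pi * (4 / r) * ‖f‖ ^ 2 + Real.pi * (4 / r) * ‖g‖ ^ 2) := by
      field_simp
    rw [e]
    gcongr
    · exact s.bound_sum F f
    · exact s.bound_sum F g
  have e : ∑ k ∈ F, Q k = ∑ k ∈ F, P k + ∑ k ∈ F, (Q k - P k) := by
    rw [Finset.sum_sub_distrib]; abel
  rw [e]
  exact (norm_add_le _ _).trans (add_le_add (s.proj_le F) h1)

end Main

section Compl

variable {α : ℤ → ℝ} {d ε r c κ : ℝ} {S S' B : H →L[ℂ] H}

/-- the decaying quantity -/
def Jn (α : ℤ → ℝ) (r c : ℝ) (p n : ℤ) : ℝ :=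
  1 / (c - (α (2 * p - 1) - r)) + 1 / (α (2 * n) + r - c)

lemma Sys.ends (s : Sys α d ε r c κ S S' B) {p n : ℤ} (hp : p ≤ 0) (hn : 1 ≤ n) :
    α (2 * p - 1) - r < c ∧ c < α (2 * n) + r := by
  have hr := s.r0
  have h1 : α (2 * p - 1) ≤ α 0 := s.mono (by omega)
  have h2 : α 1 ≤ α (2 * n) := s.mono (by omega)
  have := s.lo
  have := s.hi
  constructor <;> linarith

lemma Sys.rzK_le (s : Sys α d ε r c κ S S' B) {p n : ℤ} (hp : p ≤ 0) (hn : 1 ≤ n) (g : H) :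
    ‖rzK S' (c : ℂ) (mid' α p n) (rad α r p n) (c : ℂ) g‖ ≤
      κ / 4 * Real.sqrt (Jn α r c p n) * (1 + 2 / r * ‖g‖ ^ 2) := by
  have hpn : p ≤ n := by omega
  obtain ⟨e1, e2⟩ := s.ends hp hn
  have hJ : 0 < Jn α r c p n := by
    unfold Jn
    have : 0 < c - (α (2 * p - 1) - r) := by linarith
    have : 0 < α (2 * n) + r - c := by linarith
    positivity
  set J := Jn α r c p n with hJd
  set δ := Real.sqrt J with hδ
  have hδ0 : 0 < δ := Real.sqrt_pos.2 hJ
  have hρ := s.geo.posb hpn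
  have habs : |c - midR α p n| < rad α r p n := by
    rw [abs_lt, midR, rad]; constructor <;> linarith
  have hcb : (c : ℂ) ∈ ball (mid' α p n) (rad α r p n) := by
    rw [mem_ball, mid', Complex.dist_eq, ← Complex.ofReal_sub, Complex.norm_real]
    exact habs
  have hcs : (c : ℂ) ∉ sphere (mid' α p n) (rad α r p n) := fun h => by
    rw [mem_sphere] at h; rw [mem_ball] at hcb; linarith
  have hI : ∫ θ in (0 : ℝ)..2 * Real.pi, rad α r p n *
      (1 / dist (circleMap (mid' α p n) (rad α r p n) θ) (c : ℂ) ^ 2) = Real.pi * J := by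
    rw [intervalIntegral.integral_const_mul]
    have := poisson_circle (m := midR α p n) (ρ := rad α r p n) (t := c) hρ habs.ne
    rw [mid', this, term_eq, g_in e1 e2, hJd, Jn]
  have hi := circleIntegrable_w hρ (s.geo.gds s.reg' hpn) (contOn_inv hcs)
  have hB := s.bound_single hpn g
  have hcont := s.cont hpn g
  have hfar := fun θ => s.far hpn θ
  have hne : ∀ θ, dist (circleMap (mid' α p n) (rad α r p n) θ) (c : ℂ) ^ 2 ≠ 0 := by
    intro θ h
    have h0 : circleMap (mid' α p n) (rad α r p n) θ = c := dist_eq_zero.1 (pow_eq_zero_iff two_ne_zero |>.1 h)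
    apply hcs; rw [← h0]; exact circleMap_mem_sphere _ hρ.le _
  set ρ := rad α r p n
  set m := mid' α p n
  have hcont2 : Continuous fun θ => ρ * (1 / dist (circleMap m ρ θ) (c : ℂ) ^ 2) := by
    refine continuous_const.mul (continuous_const.div ?_ hne)
    exact ((continuous_circleMap _ _).dist continuous_const).pow 2
  have hL : (∮ z in C(m, ρ), ((z - c)⁻¹ • rsv S' (c : ℂ) z) g)
      = (∮ z in C(m, ρ), (z - c)⁻¹ • rsv S' (c : ℂ) z) g :=
    clm_circleIntegral (ContinuousLinearMap.apply ℂ H g) hi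
  have hbd : ‖∮ z in C(m, ρ), ((z - c)⁻¹ • rsv S' (c : ℂ) z) g‖ ≤
      ∫ θ in (0 : ℝ)..2 * Real.pi, (κ / 2 / δ * (ρ * (1 / dist (circleMap m ρ θ) (c : ℂ) ^ 2)) +
        κ / 2 * δ * (ρ * ‖rsv S (c : ℂ) (circleMap m ρ θ) g‖ ^ 2)) := by
    refine norm_circle_le' hρ (fun θ => ?_)
      ((continuous_const.mul hcont2).add (continuous_const.mul hcont))
    have hk := s.kp _ (hfar θ) g
    set z := circleMap m ρ θ
    have e3 : ((z - c)⁻¹ • rsv S' (c : ℂ) z) g = (z - c)⁻¹ • rsv S' (c : ℂ) z g := rfl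
    rw [e3, norm_smul, norm_inv, ← dist_eq_norm]
    set D := dist z (c : ℂ)
    set y := ‖rsv S (c : ℂ) z g‖
    have hD : 0 ≤ D⁻¹ := inv_nonneg.2 dist_nonneg
    have hκ := s.κ0
    have e4 : D⁻¹ * y ≤ (1 / δ * (D⁻¹) ^ 2 + δ * y ^ 2) / 2 := by
      have := sq_nonneg (D⁻¹ - δ * y)
      have h5 : 0 ≤ (D⁻¹ - δ * y) ^ 2 / δ := by positivity
      have h6 : (D⁻¹ - δ * y) ^ 2 / δ = 1 / δ * (D⁻¹) ^ 2 + δ * y ^ 2 - 2 * (D⁻¹ * y) := by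
        field_simp; ring
      linarith
    calc ρ * (D⁻¹ * ‖rsv S' (c : ℂ) z g‖) ≤ ρ * (D⁻¹ * (κ * y)) := by gcongr
      _ = ρ * κ * (D⁻¹ * y) := by ring
      _ ≤ ρ * κ * ((1 / δ * (D⁻¹) ^ 2 + δ * y ^ 2) / 2) := by gcongr
      _ = _ := by rw [inv_pow]; ring
  have c1 : Continuous fun θ => κ / 2 / δ * (ρ * (1 / dist (circleMap m ρ θ) (c : ℂ) ^ 2)) :=
    continuous_const.mul hcont2
  have c2 : Continuous fun θ => κ / 2 * δ * (ρ * ‖rsv S (c : ℂ) (circleMap m ρ θ) g‖ ^ 2) :=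
    continuous_const.mul hcont
  rw [intervalIntegral.integral_add (c1.intervalIntegrable _ _)
    (c2.intervalIntegrable _ _), intervalIntegral.integral_const_mul (κ / 2 / δ),
    intervalIntegral.integral_const_mul (κ / 2 * δ), hI] at hbd
  have e5 : rzK S' (c : ℂ) m ρ (c : ℂ) g = -((2 * Real.pi * Complex.I : ℂ)⁻¹ •
      ∮ z in C(m, ρ), ((z - c)⁻¹ • rsv S' (c : ℂ) z) g) := by
    rw [hL]; rfl
  rw [e5, norm_neg, norm_smul, norm_two_pi_I_inv]
  have hpi := Real.pi_pos
  have hκ := s.κ0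
  have hr := s.r0
  have hδδ : J = δ * δ := (Real.mul_self_sqrt hJ.le).symm
  calc _ ≤ 1 / (2 * Real.pi) * (κ / 2 / δ * (Real.pi * J) + κ / 2 * δ * (Real.pi * (2 / r) * ‖g‖ ^ 2)) := by
        refine mul_le_mul_of_nonneg_left (hbd.trans ?_) (by positivity)
        gcongr
    _ = _ := by
      rw [hδδ]; field_simp; ring

lemma Sys.Jn_tendsto (s : Sys α d ε r c κ S S' B) :
    Filter.Tendsto (fun N : ℕ => Jn α r c (-(N : ℤ)) N) Filter.atTop (nhds 0) := by
  have hd : 0 < d := by have := s.r0; have := s.h2; linarith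
  have hN : Filter.Tendsto (fun N : ℕ => (N : ℝ) * d) Filter.atTop Filter.atTop :=
    tendsto_natCast_atTop_atTop.atTop_mul_const hd
  have h1 : Filter.Tendsto (fun N : ℕ => c - (α (2 * (-(N : ℤ)) - 1) - r)) Filter.atTop Filter.atTop := by
    refine Filter.tendsto_atTop_mono (fun N => ?_) (Filter.tendsto_atTop_add_const_right _ (c - α 0 + r) hN)
    have := grow_dn s.mono s.gap N
    linarith
  have h2 : Filter.Tendsto (fun N : ℕ => α (2 * (N : ℤ)) + r - c) Filter.atTop Filter.atTop := by
    refine Filter.tendsto_atTop_mono (fun N => ?_) (Filter.tendsto_atTop_add_const_right _ (α 0 + r - c) hN)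
    have := grow_up s.mono s.gap N
    linarith
  have := (h1.inv_tendsto_atTop).add (h2.inv_tendsto_atTop)
  simpa [Jn, one_div] using this

lemma Sys.E_tendsto (s : Sys α d ε r c κ S S' B) (g : H) :
    Filter.Tendsto (fun N : ℕ => Qd (mid' α) (rad α r) S' (c : ℂ) (-(N : ℤ)) N (S' g))
      Filter.atTop (nhds (S' g)) := by
  rw [tendsto_iff_norm_sub_tendsto_zero]
  have h := (s.Jn_tendsto.sqrt.const_mul (κ / 4)).mul_const (1 + 2 / r * ‖g‖ ^ 2)
  simp only [Real.sqrt_zero, mul_zero, zero_mul] at h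
  refine squeeze_zero' (Filter.Eventually.of_forall fun _ => norm_nonneg _) ?_ h
  filter_upwards [Filter.eventually_ge_atTop 1] with N hN
  have hp : (-(N : ℤ)) ≤ 0 := by omega
  have hn : (1 : ℤ) ≤ N := by omega
  have hpn : (-(N : ℤ)) ≤ N := by omega
  refine le_trans (le_of_eq ?_) (s.rzK_le hp hn g)
  obtain ⟨e1, e2⟩ := s.ends hp hn
  have hcb : (c : ℂ) ∈ ball (mid' α (-(N : ℤ)) N) (rad α r (-(N : ℤ)) N) := by
    rw [mem_ball, mid', Complex.dist_eq, ← Complex.ofReal_sub, Complex.norm_real,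
      Real.norm_eq_abs, abs_lt, midR, rad]
    constructor <;> linarith
  have h3 := pcl_rzK_in (s.geo.posb hpn) (s.geo.gds s.reg' hpn) hcb
  rw [pcl, sub_self, zero_smul, sub_zero, one_mul] at h3
  rw [h3]
  have h4 := (s.geo.commS s.reg' hpn).eq
  have h5 : S' * (rzQ S' (c : ℂ) (mid' α (-(N : ℤ)) N) (rad α r (-(N : ℤ)) N) - 1)
      = Qd (mid' α) (rad α r) S' (c : ℂ) (-(N : ℤ)) N * S' - S' := by
    rw [h4, mul_sub, mul_one, Qd]
  rw [h5]; rfl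

lemma Sys.hasSum (s : Sys α d ε r c κ S S' B) (hd : DenseRange S') (x : H) :
    HasSum (fun k => Qd (mid' α) (rad α r) S' (c : ℂ) k k x) x := by
  obtain ⟨M, hM0, hM⟩ := s.sum_le
  rw [HasSum, SummationFilter.unconditional_filter, Metric.tendsto_atTop]
  intro η hη
  have hη' : 0 < η / (2 * (M + 1)) := by positivity
  obtain ⟨g, hg⟩ := hd.exists_dist_lt x hη'
  obtain ⟨N, hN⟩ := (Metric.tendsto_atTop.1 (s.E_tendsto g)) _ hη'
  have hN := hN N le_rfl
  have hpn : (-(N : ℤ)) ≤ N := by omega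
  set E := Qd (mid' α) (rad α r) S' (c : ℂ) (-(N : ℤ)) N with hE
  refine ⟨Finset.Icc (-(N : ℤ)) N, fun F hF => ?_⟩
  set P := ∑ k ∈ F, Qd (mid' α) (rad α r) S' (c : ℂ) k k with hP
  have hPE : P * E = E := by
    rw [hE, ← s.geo.sum_eq s.reg' hpn, Finset.mul_sum]
    refine Finset.sum_congr rfl fun i hi => ?_
    rw [s.geo.sum_mul s.reg', if_pos (hF hi)]
  have hPx : ∑ k ∈ F, Qd (mid' α) (rad α r) S' (c : ℂ) k k x = P x := by
    rw [hP, _root_.sum_apply]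
  rw [hPx]
  set y := E (S' g)
  have hy : P y = y := by
    change (P * E) (S' g) = _
    rw [hPE]
  have hxy : ‖x - y‖ < η / (M + 1) := by
    rw [← dist_eq_norm]
    have := dist_triangle x (S' g) y
    rw [dist_comm (S' g) y] at this
    have e : η / (M + 1) = η / (2 * (M + 1)) + η / (2 * (M + 1)) := by field_simp; ring
    linarith
  rw [dist_eq_norm]
  have e : P x - x = P (x - y) - (x - y) := by rw [map_sub, hy]; abel
  rw [e]
  have h1 : ‖P (x - y)‖ ≤ M * ‖x - y‖ := (P.le_opNorm _).trans (by gcongr; exact hM F)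
  calc _ ≤ ‖P (x - y)‖ + ‖x - y‖ := norm_sub_le _ _
    _ ≤ (M + 1) * ‖x - y‖ := by linarith
    _ < (M + 1) * (η / (M + 1)) := by gcongr
    _ = η := by field_simp

end Compl

section Final

lemma far_resolv {T : H →ₗ.[ℂ] H} {α : ℤ → ℝ} {ε : ℝ} (hε : 0 < ε)
    (hspec : pmSpectrum T ⊆ ⋃ k : ℤ, Complex.ofReal '' Set.Icc (α (2 * k - 1)) (α (2 * k)))
    {z : ℂ} (hz : Far α ε z) : z ∈ pmResolventSet T := by
  by_contra hc
  obtain ⟨k, t, ht, e⟩ := Set.mem_iUnion.1 (hspec hc)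
  have := hz k t ht
  rw [← e, dist_self] at this
  linarith

lemma unit_one_add {X R : H →L[ℂ] H} {ε : ℝ} (hε : 0 < ε) (hX : ‖X‖ < ε) (hR : ‖R‖ ≤ 1 / ε) :
    IsUnit (1 + X * R) := by
  have h : ‖-(X * R)‖ < 1 := by
    rw [norm_neg]
    calc ‖X * R‖ ≤ ‖X‖ * ‖R‖ := norm_mul_le _ _
      _ ≤ ‖X‖ * (1 / ε) := by gcongr
      _ < ε * (1 / ε) := by gcongr
      _ = 1 := by field_simp
  have := isUnit_one_sub_of_norm_lt_one h
  rwa [sub_neg_eq_add] at this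

lemma kappa_le {b ε u v : ℝ} (hε : 0 < ε) (hb : b < ε) (h : u ≤ v + 1 / ε * b * u) :
    u ≤ 1 / (1 - b / ε) * v := by
  have h1 : 0 < 1 - b / ε := by
    rw [sub_pos, div_lt_one hε]; exact hb
  rw [one_div, ← div_eq_inv_mul, le_div_iff₀ h1]
  have : 1 / ε * b * u = u * (b / ε) := by ring
  linarith

lemma dense_resolv {A : H →ₗ.[ℂ] H} {z : ℂ} {R : H →L[ℂ] H} (hA : Dense (A.domain : Set H))
    (hR : IsResolventOf A z R) : DenseRange R := by
  refine hA.mono fun x hx => ?_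
  exact ⟨_, hR.1 ⟨x, hx⟩⟩

lemma mk_sys {T : H →ₗ.[ℂ] H} (hsa : IsSelfAdjoint T)
    {α : ℤ → ℝ} (hmono : Monotone α) {d : ℝ} (hgap : ∀ k : ℤ, d ≤ α (2 * k + 1) - α (2 * k))
    (hspec : pmSpectrum T ⊆ ⋃ k : ℤ, Complex.ofReal '' Set.Icc (α (2 * k - 1)) (α (2 * k)))
    {B : H →L[ℂ] H} {ε : ℝ} (hε0 : 0 < ε) (hBε : ‖B‖ < ε) (hεd : ε < d / 2) :
    (∀ z, Far α ε z → z ∈ pmResolventSet (pmSumCLM T B)) ∧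
    ∃ (r c κ : ℝ) (S S' : H →L[ℂ] H), IsResolventOf (pmSumCLM T B) (c : ℂ) S' ∧
      Sys α d ε r c κ S S' B := by
  set c : ℝ := (α 0 + α 1) / 2 with hc
  have hg0 : d ≤ α 1 - α 0 := by simpa using hgap 0
  have hcfar : Far α ε (c : ℂ) := by
    intro k t ht
    rw [Complex.dist_eq, ← Complex.ofReal_sub, Complex.norm_real, Real.norm_eq_abs]
    rcases le_or_gt k 0 with h | h
    · have h1 : α (2 * k) ≤ α 0 := hmono (by omega)
      have h2 := ht.2
      exact le_trans (by linarith) (le_abs_self _)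
    · have h1 : α 1 ≤ α (2 * k - 1) := hmono (by omega)
      have h2 := ht.1
      exact le_trans (by linarith) (neg_le_abs _)
  obtain ⟨S, hS⟩ := far_resolv hε0 hspec hcfar
  have hSsa := resolv_sa hsa hS
  have hSp := specIn hS hspec
  have hT : ∀ z, Far α ε z → Gd S (c : ℂ) z ∧ IsResolventOf T z (rsv S (c : ℂ) z) :=
    fun z hz => resolv_rsv hS (far_resolv hε0 hspec hz)
  have hn : ∀ z, Far α ε z → ‖rsv S (c : ℂ) z‖ ≤ 1 / ε :=
    fun z hz => rsv_norm_le hSsa hSp hε0 hz (hT z hz).1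
  have hA : ∀ z, Far α ε z → z ∈ pmResolventSet (pmSumCLM T B) :=
    fun z hz => resolv_sum (hT z hz).2 B (unit_one_add hε0 hBε (hn z hz))
  obtain ⟨S', hS'⟩ := hA _ hcfar
  have hT' : ∀ z, Far α ε z → Gd S' (c : ℂ) z ∧ IsResolventOf (pmSumCLM T B) z (rsv S' (c : ℂ) z) :=
    fun z hz => resolv_rsv hS' (hA z hz)
  have hκ : 0 < 1 - ‖B‖ / ε := by
    rw [sub_pos, div_lt_one hε0]; exact hBε
  refine ⟨hA, (ε + d / 2) / 2, c, 1 / (1 - ‖B‖ / ε), S, S', hS', ?_⟩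
  refine ⟨hmono, hgap, hε0, by linarith, by linarith, hSsa, hSp,
    fun z hz => (hT z (far_iff.2 hz)).1, fun z hz => (hT' z (far_iff.2 hz)).1,
    by positivity, ?_, ?_, ?_, by linarith, by linarith⟩
  · intro z hz
    have h := (second_resolv (hT z hz).2 (hT' z hz).2).1
    nth_rewrite 1 [h]
    abel
  · intro z hz f
    have h := (second_resolv (hT z hz).2 (hT' z hz).2).2
    have hN := hn z hz
    set R := rsv S (c : ℂ) z
    set R' := rsv S' (c : ℂ) z
    refine kappa_le hε0 hBε ?_
    have hf : R' f = R f - R (B (R' f)) := congrArg (fun L : H →L[ℂ] H => L f) h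
    calc ‖R' f‖ = ‖R f - R (B (R' f))‖ := by rw [← hf]
      _ ≤ ‖R f‖ + ‖R (B (R' f))‖ := norm_sub_le _ _
      _ ≤ ‖R f‖ + ‖R‖ * (‖B‖ * ‖R' f‖) := by
        gcongr
        exact (R.le_opNorm _).trans (by gcongr; exact B.le_opNorm _)
      _ ≤ ‖R f‖ + 1 / ε * (‖B‖ * ‖R' f‖) := by gcongr
      _ = _ := by ring
  · intro z hz f
    have h := (second_resolv (hT z hz).2 (hT' z hz).2).1
    have hN := hn z hz
    rw [← rsv_star_norm hSsa z f]
    set R := rsv S (c : ℂ) z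
    set R' := rsv S' (c : ℂ) z
    refine kappa_le hε0 hBε ?_
    have h2 : star R' = star R - star R * (star B * star R') := by
      have := congrArg star h
      rwa [star_sub, star_mul, star_mul] at this
    have hf : star R' f = star R f - star R (star B (star R' f)) :=
      congrArg (fun L : H →L[ℂ] H => L f) h2
    have n1 : ‖star R‖ = ‖R‖ := norm_star R
    have n2 : ‖star B‖ = ‖B‖ := norm_star B
    calc ‖star R' f‖ = ‖star R f - star R (star B (star R' f))‖ := by rw [← hf]
      _ ≤ ‖star R f‖ + ‖star R (star B (star R' f))‖ := norm_sub_le _ _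
      _ ≤ ‖star R f‖ + ‖star R‖ * (‖star B‖ * ‖star R' f‖) := by
        gcongr
        exact ((star R).le_opNorm _).trans (by gcongr; exact (star B).le_opNorm _)
      _ = ‖star R f‖ + ‖R‖ * (‖B‖ * ‖star R' f‖) := by rw [n1, n2]
      _ ≤ ‖star R f‖ + 1 / ε * (‖B‖ * ‖star R' f‖) := by gcongr
      _ = _ := by ring

lemma Sys.uniq {α : ℤ → ℝ} {d ε r c κ : ℝ} {S S' B : H →L[ℂ] H} (s : Sys α d ε r c κ S S' B)
    (hd : DenseRange S') {k : ℤ} {X : H →L[ℂ] H} (hX : RProj S' (c : ℂ) (Ut α ε k) X) :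
    X = Qd (mid' α) (rad α r) S' (c : ℂ) k k := by
  ext x
  have h1 := s.hasSum hd (X x)
  have h2 : HasSum (fun j => Qd (mid' α) (rad α r) S' (c : ℂ) j j (X x))
      (Qd (mid' α) (rad α r) S' (c : ℂ) k k (X x)) := by
    refine hasSum_single k fun j hj => ?_
    exact congrArg (fun L : H →L[ℂ] H => L x) (s.geo.uniq_ne s.reg' hj hX)
  rw [h1.unique h2]
  exact congrArg (fun L : H →L[ℂ] H => L x) (s.geo.uniq_eq s.reg' hX)

end Final

/-- Theorem C. Let `T` be self-adjoint with spectrum inside the pairwise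
disjoint intervals `Δ_k = [α_{2k−1}, α_{2k}]`, `k ∈ ℤ`, with `inf_k (α_{2k+1} − α_{2k}) = d > 0`,
and let `B` be a bounded operator with `‖B‖ = b* < d/2`.  Then for every `ε ∈ (b*, d/2)` the
spectrum of `A = T + B` lies in the union of the mutually disjoint `ε`-neighborhoods
`U_ε(Δ_k)`, and the Riesz projections `Q_k` of `A` for `U_ε(Δ_k)` exist and the subspaces
`L_k = Q_k(H)`, `k ∈ ℤ`, form an unconditional basis of subspaces of `H` (the family is
minimal and `Σ_k Q_k x` converges unconditionally to `x` for every `x`). -/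
theorem stmt3 (T : H →ₗ.[ℂ] H) (hsa : IsSelfAdjoint T)
    (α : ℤ → ℝ) (hmono : Monotone α) (d : ℝ) (hd : 0 < d)
    (hglb : IsGLB (Set.range fun k : ℤ => α (2 * k + 1) - α (2 * k)) d)
    (hspec : pmSpectrum T ⊆ ⋃ k : ℤ, Complex.ofReal '' Set.Icc (α (2 * k - 1)) (α (2 * k)))
    (B : H →L[ℂ] H) (bstar : ℝ) (hB : ‖B‖ = bstar) (hbd : bstar < d / 2) :
    ∀ ε : ℝ, bstar < ε → ε < d / 2 →
      (∀ k l : ℤ, k ≠ l →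
        Disjoint
          (Metric.thickening ε (Complex.ofReal '' Set.Icc (α (2 * k - 1)) (α (2 * k))))
          (Metric.thickening ε (Complex.ofReal '' Set.Icc (α (2 * l - 1)) (α (2 * l))))) ∧
      (pmSpectrum (pmSumCLM T B) ⊆
        ⋃ k : ℤ, Metric.thickening ε (Complex.ofReal '' Set.Icc (α (2 * k - 1)) (α (2 * k)))) ∧
      (∃ Q : ℤ → H →L[ℂ] H, ∀ k : ℤ,
        IsRieszProjFor (pmSumCLM T B)
          (Metric.thickening ε (Complex.ofReal '' Set.Icc (α (2 * k - 1)) (α (2 * k))))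
          (Q k)) ∧
      ∀ Q : ℤ → H →L[ℂ] H,
        (∀ k : ℤ,
          IsRieszProjFor (pmSumCLM T B)
            (Metric.thickening ε (Complex.ofReal '' Set.Icc (α (2 * k - 1)) (α (2 * k))))
            (Q k)) →
        (∀ j k : ℤ, (Q j).comp (Q k) = if j = k then Q j else 0) ∧
        ∀ x : H, HasSum (fun k : ℤ => Q k x) x := by
  intro ε hbε hεd
  have hgap : ∀ k : ℤ, d ≤ α (2 * k + 1) - α (2 * k) := fun k => hglb.1 ⟨k, rfl⟩
  have hBε : ‖B‖ < ε := hB ▸ hbε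
  have hε0 : 0 < ε := (norm_nonneg B).trans_lt hBε
  obtain ⟨hA, r, c, κ, S, S', hS', s⟩ := mk_sys hsa hmono hgap hspec hε0 hBε hεd
  have hdr : DenseRange S' := dense_resolv (A := pmSumCLM T B) hsa.dense_domain hS'
  refine ⟨fun k l hkl => Ut_disj hmono hgap hεd hkl, ?_, ?_, ?_⟩
  · intro z hz
    by_contra hc
    refine hz (hA z (far_iff.2 fun k hk => hc ?_))
    exact Set.mem_iUnion.2 ⟨k, hk⟩
  · exact ⟨fun k => Qd (mid' α) (rad α r) S' (c : ℂ) k k, fun k =>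
      (rproj_iff hS' (Ut α ε k) _).1 (s.geo.rproj s.reg' k)⟩
  · intro Q hQ
    have hQe : ∀ k, Q k = Qd (mid' α) (rad α r) S' (c : ℂ) k k := fun k =>
      s.uniq hdr ((rproj_iff hS' (Ut α ε k) _).2 (hQ k))
    refine ⟨fun j k => ?_, fun x => ?_⟩
    · split_ifs with h
      · subst h
        exact (hQ j).1
      · rw [hQe, hQe]
        exact s.geo.orth s.reg' h
    · simp only [hQe]
      exact s.hasSum hdr x
end
end

section
/- For every τ ∈ (0,1) and every ratio ρ = a/c > 0 there exists a constant C > 0, depending only on τ and ρ, with the following property. Let f be a holomorphic and bounded function, not identically zero, on the rectangle Π = {λ ∈ ℂ : |Re λ| < a, |Im λ| < c} with a/c = ρ, and let Π' = {λ : |Re λ| < a(1−τ), |Im λ| < c(1−τ)}. Set M = sup_{λ∈Π} |f(λ)| and M' = sup_{λ∈Π'} |f(λ)|. Then the number of zeros of f in the rectangle Π', counted with multiplicity, is at most C·(ln M − ln M'). -/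
open Metric Set

lemma zc_factor_bound {r s : ℝ} (hr : 0 < r) (hrs : r < s) (hs : s ≤ 1) {w v : ℂ}
    (hw : ‖w‖ < r) (hv : ‖v‖ < r) :
    s * ‖w - v‖ ≤ Real.sqrt (1 - (s ^ 2 - r ^ 2) ^ 2 / 4) * ‖(s : ℂ) ^ 2 - (starRingEnd ℂ) v * w‖ := by
  have hid : ‖(s : ℂ) ^ 2 - (starRingEnd ℂ) v * w‖ ^ 2 - (s * ‖w - v‖) ^ 2
      = (s ^ 2 - ‖w‖ ^ 2) * (s ^ 2 - ‖v‖ ^ 2) := by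
    rw [mul_pow]
    simp only [← Complex.normSq_eq_norm_sq, Complex.normSq_apply]
    simp [pow_two]
    ring
  have hwn := norm_nonneg w
  have hvn := norm_nonneg v
  have h2 : ‖(s : ℂ) ^ 2 - (starRingEnd ℂ) v * w‖ ≤ 2 := by
    refine (norm_sub_le _ _).trans ?_
    have : ‖(s : ℂ) ^ 2‖ = s ^ 2 := by
      rw [norm_pow, Complex.norm_real, Real.norm_eq_abs, sq_abs]
    rw [this, norm_mul, RCLike.norm_conj]
    nlinarith
  have hr2 : 0 < s ^ 2 - r ^ 2 := by nlinarith
  have h3 : (s ^ 2 - r ^ 2) ^ 2 ≤ (s ^ 2 - ‖w‖ ^ 2) * (s ^ 2 - ‖v‖ ^ 2) := by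
    rw [pow_two (s ^ 2 - r ^ 2)]
    apply mul_le_mul <;> nlinarith
  have h4 : 0 ≤ 1 - (s ^ 2 - r ^ 2) ^ 2 / 4 := by
    have : s ^ 2 - r ^ 2 ≤ 1 := by nlinarith
    nlinarith
  have hn := norm_nonneg ((s : ℂ) ^ 2 - (starRingEnd ℂ) v * w)
  refine (pow_le_pow_iff_left₀ (mul_nonneg (by linarith) (norm_nonneg _)) (by positivity) two_ne_zero).1 ?_
  rw [mul_pow (Real.sqrt _), Real.sq_sqrt h4]
  have h5 : ‖(s : ℂ) ^ 2 - (starRingEnd ℂ) v * w‖ ^ 2 ≤ 4 := by nlinarith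
  nlinarith [sq_nonneg (s ^ 2 - r ^ 2)]

lemma zc_sphere {s : ℝ} {u v : ℂ} (hu : ‖u‖ = s) :
    ‖(s : ℂ) ^ 2 - (starRingEnd ℂ) v * u‖ = s * ‖u - v‖ := by
  have : (s : ℂ) ^ 2 - (starRingEnd ℂ) v * u = u * (starRingEnd ℂ) (u - v) := by
    rw [map_sub, mul_sub, Complex.mul_conj, Complex.normSq_eq_norm_sq, hu]
    push_cast; ring
  rw [this, norm_mul, RCLike.norm_conj, hu]

lemma zc_disc {r s R : ℝ} (hr : 0 < r) (hrs : r < s) (hsR : s < R) (hR : R ≤ 1) (N : ℕ) :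
    ∀ (F : ℂ → ℂ) (M : ℝ), DifferentiableOn ℂ F (ball 0 R) →
      (∀ u ∈ sphere (0 : ℂ) s, ‖F u‖ ≤ M) →
      ∀ (W : Finset ℂ) (n : ℂ → ℕ), (∀ w ∈ W, w ∈ ball (0 : ℂ) r ∧ (n w : ℕ∞) ≤ analyticOrderAt F w) →
      ∑ w ∈ W, n w = N →
      ∀ w ∈ ball (0 : ℂ) r, ‖F w‖ ≤ M * Real.sqrt (1 - (s ^ 2 - r ^ 2) ^ 2 / 4) ^ N := by
  induction N with
  | zero =>
    intro F M hF hM W n _ _ w hw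
    simp only [pow_zero, mul_one]
    have hs : s ≠ 0 := by linarith
    apply Complex.norm_le_of_forall_mem_frontier_norm_le (U := ball (0 : ℂ) s) isBounded_ball
    · apply DifferentiableOn.diffContOnCl
      rw [closure_ball _ hs]
      exact hF.mono (closedBall_subset_ball hsR)
    · rw [frontier_ball _ hs]; exact hM
    · exact subset_closure (ball_subset_ball hrs.le hw)
  | succ N ih =>
    intro F M hF hM W n hW hN w hw
    have hs : 0 < s := by linarith
    obtain ⟨v, hvW, hnv⟩ : ∃ v ∈ W, n v ≠ 0 := by
      by_contra! h
      rw [Finset.sum_eq_zero h] at hN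
      omega
    obtain ⟨hvr, hvn⟩ := hW v hvW
    have hvR : v ∈ ball (0 : ℂ) R := ball_subset_ball (by linarith) hvr
    have hFv : F v = 0 := by
      apply apply_eq_zero_of_analyticOrderAt_ne_zero
      intro h
      rw [h] at hvn
      simp at hvn
      exact hnv hvn
    set H := dslope F v with hH
    have hHd : DifferentiableOn ℂ H (ball 0 R) :=
      (Complex.differentiableOn_dslope (isOpen_ball.mem_nhds hvR)).2 hF
    have hFH : ∀ u, F u = (u - v) * H u := by
      intro u
      have := sub_smul_dslope F v u
      rw [hFv, sub_zero, smul_eq_mul] at this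
      exact this.symm
    set G : ℂ → ℂ := fun u => (((s : ℂ) ^ 2 - (starRingEnd ℂ) v * u) / s) * H u with hG
    have hGd : DifferentiableOn ℂ G (ball 0 R) := by
      apply DifferentiableOn.mul _ hHd
      fun_prop
    have hGM : ∀ u ∈ sphere (0 : ℂ) s, ‖G u‖ ≤ M := by
      intro u hu
      have h1 := hM u hu
      rw [mem_sphere_zero_iff_norm] at hu
      rw [hFH, norm_mul] at h1
      simp only [hG, norm_mul, norm_div, zc_sphere hu, Complex.norm_real, Real.norm_eq_abs, abs_of_pos hs]
      rwa [mul_div_cancel_left₀ _ hs.ne']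
    have hsum : ∑ w ∈ W, (Function.update n v (n v - 1)) w = N := by
      have h1 : n v + ∑ x ∈ W.erase v, n x = ∑ x ∈ W, n x := Finset.add_sum_erase W n hvW
      have h2 := Finset.add_sum_erase W (Function.update n v (n v - 1)) hvW
      rw [← h2, Function.update_self, Finset.sum_congr rfl (g := n)]
      · change n v - 1 + ∑ x ∈ W.erase v, n x = N
        omega
      · intro x hx
        rw [Function.update_of_ne (Finset.ne_of_mem_erase hx)]
    have key := ih G M hGd hGM W (Function.update n v (n v - 1)) ?_ hsum w hw
    · have hfac := zc_factor_bound hr hrs (by linarith) (mem_ball_zero_iff.1 hw) (mem_ball_zero_iff.1 hvr)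
      set q := Real.sqrt (1 - (s ^ 2 - r ^ 2) ^ 2 / 4)
      have hq : 0 ≤ q := Real.sqrt_nonneg _
      rw [hFH, norm_mul, pow_succ, ← mul_assoc]
      refine le_trans ?_ (mul_le_mul_of_nonneg_right key hq)
      simp only [hG, norm_mul, norm_div, Complex.norm_real, Real.norm_eq_abs, abs_of_pos hs]
      have : ‖w - v‖ ≤ q * ‖(s : ℂ) ^ 2 - (starRingEnd ℂ) v * w‖ / s := by
        rw [le_div_iff₀ hs]; linarith
      calc ‖w - v‖ * ‖H w‖ ≤ (q * ‖(s : ℂ) ^ 2 - (starRingEnd ℂ) v * w‖ / s) * ‖H w‖ := by gcongr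
        _ = _ := by ring
    · intro x hx
      obtain ⟨hxr, hxn⟩ := hW x hx
      refine ⟨hxr, ?_⟩
      have hxR : x ∈ ball (0 : ℂ) R := ball_subset_ball (by linarith) hxr
      have hHa : AnalyticAt ℂ H x := hHd.analyticAt (isOpen_ball.mem_nhds hxR)
      have ho : analyticOrderAt H x ≤ analyticOrderAt G x := by
        have : G = (fun u => (((s : ℂ) ^ 2 - (starRingEnd ℂ) v * u) / s)) * H := rfl
        rw [this, analyticOrderAt_mul (by fun_prop) hHa]
        exact le_add_self
      refine le_trans ?_ ho
      have hF' : F = (fun u => u - v) * H := funext hFH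
      rw [hF', analyticOrderAt_mul (by fun_prop) hHa] at hxn
      by_cases hxv : x = v
      · subst hxv
        rw [Function.update_self]
        rw [analyticOrderAt_id_sub_const_self] at hxn
        have : (n x : ℕ∞) = 1 + ((n x - 1 : ℕ) : ℕ∞) := by
          norm_cast; omega
        rw [this] at hxn
        exact (ENat.add_le_add_iff_left (by simp)).1 hxn
      · rw [Function.update_of_ne hxv]
        rwa [analyticOrderAt_id_sub_const_of_ne hxv, zero_add] at hxn

lemma zc_rad (L : ℝ) (hL : 0 < L) : ∃ t : ℝ, 0 < t ∧ t < 1 ∧ Real.log (1 + t) - Real.log (1 - t) = L := by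
  have h1 : 1 < Real.exp L := Real.one_lt_exp_iff.2 hL
  refine ⟨(Real.exp L - 1) / (Real.exp L + 1), by apply div_pos <;> linarith, ?_, ?_⟩
  · rw [div_lt_one (by linarith)]; linarith
  · have e1 : 1 + (Real.exp L - 1) / (Real.exp L + 1) = Real.exp L * (2 / (Real.exp L + 1)) := by
      field_simp; ring
    have e2 : 1 - (Real.exp L - 1) / (Real.exp L + 1) = 2 / (Real.exp L + 1) := by
      field_simp; ring
    rw [e1, e2, Real.log_mul (by positivity) (by positivity), Real.log_exp]
    ring

lemma zc_logmap_re {t : ℝ} (ht1 : t < 1) {w : ℂ} (hw : ‖w‖ < t) :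
    |(Complex.log (1 + w) - Complex.log (1 - w)).re| ≤ Real.log (1 + t) - Real.log (1 - t) := by
  have ht : 0 < t := (norm_nonneg w).trans_lt hw
  have a1 : ‖1 + w‖ ≤ 1 + t := (norm_add_le _ _).trans (by simpa using hw.le)
  have a2 : ‖1 - w‖ ≤ 1 + t := (norm_sub_le _ _).trans (by simpa using hw.le)
  have b1 : 1 - t ≤ ‖1 + w‖ := by
    have := norm_sub_norm_le (1 : ℂ) (-w)
    simp at this
    linarith
  have b2 : 1 - t ≤ ‖1 - w‖ := by
    have := norm_sub_norm_le (1 : ℂ) w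
    simp at this
    linarith
  rw [Complex.sub_re, Complex.log_re, Complex.log_re, abs_le]
  have c1 := Real.log_le_log (by linarith) a1
  have c2 := Real.log_le_log (by linarith) a2
  have c3 := Real.log_le_log (by linarith) b1
  have c4 := Real.log_le_log (by linarith) b2
  constructor <;> linarith

lemma zc_logmap_im (w : ℂ) :
    |(Complex.log (1 + w) - Complex.log (1 - w)).im| ≤ 2 * Real.pi := by
  rw [Complex.sub_im, Complex.log_im, Complex.log_im]
  have h1 := Complex.abs_arg_le_pi (1 + w)
  have h2 := Complex.abs_arg_le_pi (1 - w)
  exact (abs_sub _ _).trans (by linarith)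

lemma zc_map {U : Set ℂ} (hU : IsOpen U) {p p' : ℂ} (hne : p ≠ p') (hseg : segment ℝ p p' ⊆ U) :
    ∃ (φ : ℂ → ℂ) (r s R : ℝ), 0 < r ∧ r < s ∧ s < R ∧ R ≤ 1 ∧ DifferentiableOn ℂ φ (ball 0 R) ∧
      MapsTo φ (ball 0 R) U ∧ IsOpen (φ '' ball 0 r) ∧ p ∈ φ '' ball 0 r ∧ p' ∈ φ '' ball 0 r := by
  have hcomp : IsCompact (segment ℝ p p') := by
    rw [segment_eq_image]
    exact isCompact_Icc.image (by fun_prop)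
  obtain ⟨δ, hδ, hthick⟩ := hcomp.exists_thickening_subset_open hU hseg
  set d : ℂ := (p' - p) / 2 with hd
  set m : ℂ := (p + p') / 2 with hm
  have hπ := Real.pi_pos
  set L : ℝ := ‖d‖ * (1 + 2 * Real.pi) / δ + 1 with hL
  have hL0 : 0 < L := by positivity
  have hLδ : ‖d‖ * (1 + 2 * Real.pi) / L < δ := by
    rw [div_lt_iff₀ hL0, hL, mul_add δ, mul_div_cancel₀ _ hδ.ne']
    linarith
  obtain ⟨t, ht0, ht1, htL⟩ := zc_rad L hL0
  obtain ⟨R, hR0, hR1, hRL⟩ := zc_rad (L + 1) (by linarith)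
  have htR : t < R := by
    by_contra! h
    have c1 := Real.log_le_log (by linarith) (by linarith : 1 + R ≤ 1 + t)
    have c2 := Real.log_le_log (by linarith) (by linarith : 1 - t ≤ 1 - R)
    linarith
  set Λ : ℂ → ℂ := fun w => Complex.log (1 + w) - Complex.log (1 - w) with hΛ
  set φ : ℂ → ℂ := fun w => m + d * (Λ w / L) with hφ
  have hΛd : DifferentiableOn ℂ Λ (ball 0 R) := by
    intro w hw
    rw [mem_ball_zero_iff] at hw
    have hre := (abs_le.1 (Complex.abs_re_le_norm w))
    apply DifferentiableAt.differentiableWithinAt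
    apply DifferentiableAt.sub
    · apply DifferentiableAt.clog (by fun_prop)
      left; simp; linarith
    · apply DifferentiableAt.clog (by fun_prop)
      left; simp; linarith
  have hφd : DifferentiableOn ℂ φ (ball 0 R) := by
    simp only [hφ]
    exact ((hΛd.div_const _).const_mul _).const_add _
  have hΛt : Λ t = L := by
    simp only [hΛ]
    rw [← htL]
    push_cast
    rw [Complex.ofReal_log (by linarith), Complex.ofReal_log (by linarith)]
    push_cast; ring
  have hΛt' : Λ (-t) = -L := by
    rw [← hΛt]; simp only [hΛ]
    rw [sub_neg_eq_add, ← sub_eq_add_neg]; ring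
  have hLc : (L : ℂ) ≠ 0 := by exact_mod_cast hL0.ne'
  have hφt : φ t = p' := by
    simp only [hφ, hΛt, div_self hLc, hm, hd]; ring
  have hφt' : φ (-t) = p := by
    simp only [hφ, hΛt', neg_div, div_self hLc, hm, hd]; ring
  refine ⟨φ, (2 * t + R) / 3, (t + 2 * R) / 3, R, by linarith, by linarith, by linarith, hR1.le, hφd, ?_, ?_, ?_, ?_⟩
  · intro w hw
    rw [mem_ball_zero_iff] at hw
    apply hthick
    rw [mem_thickening_iff]
    have hre := zc_logmap_re hR1 hw
    have him := zc_logmap_im w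
    rw [hRL] at hre
    change |(Λ w).re| ≤ L + 1 at hre
    change |(Λ w).im| ≤ 2 * Real.pi at him
    set x := (Λ w).re
    set y := (Λ w).im
    have hxy : Λ w = x + y * Complex.I := (Complex.re_add_im _).symm
    have hre' := abs_le.1 hre
    refine ⟨m + d * ((x / (L + 1) : ℝ) : ℂ), ?_, ?_⟩
    · refine ⟨(1 - x / (L + 1)) / 2, (1 + x / (L + 1)) / 2, ?_, ?_, by ring, ?_⟩
      · have : x / (L + 1) ≤ 1 := by rw [div_le_one (by linarith)]; linarith
        linarith
      · have : -1 ≤ x / (L + 1) := by rw [le_div_iff₀ (by linarith)]; linarith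
        linarith
      · simp only [Complex.real_smul, hm, hd]
        push_cast
        ring
    · rw [dist_eq_norm]
      have : φ w - (m + d * ((x / (L + 1) : ℝ) : ℂ))
          = d * (((x / (L + 1) / L : ℝ) : ℂ) + ((y / L : ℝ) : ℂ) * Complex.I) := by
        simp only [hφ, hxy]
        have : (L : ℂ) + 1 ≠ 0 := by exact_mod_cast (by linarith : L + 1 ≠ 0)
        push_cast
        field_simp
        ring
      rw [this, norm_mul]
      refine lt_of_le_of_lt ?_ hLδ
      rw [mul_div_assoc]
      apply mul_le_mul_of_nonneg_left _ (norm_nonneg d)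
      refine (norm_add_le _ _).trans ?_
      rw [norm_mul, Complex.norm_I, mul_one, Complex.norm_real, Complex.norm_real, Real.norm_eq_abs,
        Real.norm_eq_abs, abs_div, abs_div, abs_div, abs_of_pos hL0, abs_of_pos (by linarith : 0 < L + 1), ← add_div]
      apply div_le_div_of_nonneg_right _ hL0.le
      have : |x| / (L + 1) ≤ 1 := by rw [div_le_one (by linarith)]; linarith
      linarith
  · have han : AnalyticOnNhd ℂ φ (ball 0 R) := hφd.analyticOnNhd isOpen_ball
    rcases han.is_constant_or_isOpen (convex_ball _ _).isPreconnected with ⟨c, hc⟩ | h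
    · exfalso
      apply hne
      rw [← hφt, ← hφt', hc, hc] <;> simp [abs_of_pos ht0, htR]
    · exact h _ (ball_subset_ball (by linarith)) isOpen_ball
  · exact ⟨-t, by simp [abs_of_pos ht0]; linarith, hφt'⟩
  · exact ⟨t, by simp [abs_of_pos ht0]; linarith, hφt⟩

lemma zc_local {U : Set ℂ} (hU : IsOpen U) (hc : Convex ℝ U) {p p' : ℂ} (hp : p ∈ U) (hp' : p' ∈ U) :
    ∃ V : Set ℂ, IsOpen V ∧ p ∈ V ∧ p' ∈ V ∧ ∃ κ : ℝ, 0 < κ ∧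
      ∀ (f : ℂ → ℂ) (M : ℝ), DifferentiableOn ℂ f U → (∀ z ∈ U, ‖f z‖ ≤ M) →
      ∀ (n : ℂ → ℕ) (Z : Finset ℂ) (z₀ : ℂ), z₀ ∈ V →
        (∀ z ∈ Z, z ∈ V ∧ (n z : ℕ∞) ≤ analyticOrderAt f z) →
        ‖f z₀‖ ≤ M * Real.exp (-(κ * (∑ z ∈ Z, n z : ℕ))) := by
  wlog hne : p ≠ p' generalizing p p'
  · push Not at hne
    subst hne
    obtain ⟨ε, hε, hball⟩ := Metric.isOpen_iff.1 hU p hp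
    have hq : p + (ε / 2 : ℝ) ∈ U := hball (by simp [abs_of_pos hε]; linarith)
    obtain ⟨V, h1, h2, -, h3⟩ := this hp hq (by
      intro h
      have : ((ε / 2 : ℝ) : ℂ) = 0 := by linear_combination -h
      rw [Complex.ofReal_eq_zero] at this
      linarith)
    exact ⟨V, h1, h2, h2, h3⟩
  obtain ⟨φ, r, s, R, hr, hrs, hsR, hR, hφ, hmap, hopen, hpV, hpV'⟩ :=
    zc_map hU hne (hc.segment_subset hp hp')
  refine ⟨φ '' ball 0 r, hopen, hpV, hpV', ?_⟩
  set q := Real.sqrt (1 - (s ^ 2 - r ^ 2) ^ 2 / 4) with hq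
  have h0 : 0 < s ^ 2 - r ^ 2 := by nlinarith
  have h1 : s ^ 2 - r ^ 2 < 1 := by nlinarith
  have hq0 : 0 < q := Real.sqrt_pos.2 (by nlinarith)
  have hq1 : q < 1 := by
    rw [hq, Real.sqrt_lt' one_pos]
    have : 0 < (s ^ 2 - r ^ 2) ^ 2 := by positivity
    linarith
  refine ⟨-Real.log q, by have := Real.log_neg hq0 hq1; linarith, ?_⟩
  intro f M hf hM n Z z₀ hz₀ hZ
  have hexp : Real.exp (-(-Real.log q * (∑ z ∈ Z, n z : ℕ))) = q ^ (∑ z ∈ Z, n z) := by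
    rw [neg_mul, neg_neg, mul_comm, Real.exp_nat_mul, Real.exp_log hq0]
  rw [hexp]
  obtain ⟨w₀, hw₀, rfl⟩ := hz₀
  have hex : ∀ z : ℂ, ∃ w : ℂ, z ∈ Z → w ∈ ball (0 : ℂ) r ∧ φ w = z := by
    intro z
    by_cases hz : z ∈ Z
    · obtain ⟨w, hw, h⟩ := (hZ z hz).1
      exact ⟨w, fun _ => ⟨hw, h⟩⟩
    · exact ⟨0, fun h => absurd h hz⟩
  choose ω hω using hex
  have hF : DifferentiableOn ℂ (f ∘ φ) (ball 0 R) := hf.comp hφ hmap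
  refine zc_disc hr hrs hsR hR _ (f ∘ φ) M hF ?_ (Z.image ω) (n ∘ φ) ?_ ?_ w₀ hw₀
  · intro u hu
    exact hM _ (hmap (sphere_subset_closedBall.trans (closedBall_subset_ball hsR) hu))
  · intro w hw
    obtain ⟨z, hz, rfl⟩ := Finset.mem_image.1 hw
    obtain ⟨hw1, hw2⟩ := hω z hz
    refine ⟨hw1, ?_⟩
    have hwR : ω z ∈ ball (0 : ℂ) R := ball_subset_ball (by linarith) hw1
    have hφa : AnalyticAt ℂ φ (ω z) := hφ.analyticAt (isOpen_ball.mem_nhds hwR)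
    have hfa : AnalyticAt ℂ f (φ (ω z)) := hf.analyticAt (hU.mem_nhds (hmap hwR))
    rw [hfa.analyticOrderAt_comp hφa, Function.comp_apply, hw2]
    refine (hZ z hz).2.trans (le_mul_of_one_le_right zero_le ?_)
    rw [Order.one_le_iff_ne_zero, analyticOrderAt_ne_zero]
    exact ⟨hφa.sub analyticAt_const, by simp [hw2]⟩
  · rw [Finset.sum_image]
    · exact Finset.sum_congr rfl fun z hz => by simp [(hω z hz).2]
    · intro a ha b hb hab
      rw [← (hω a ha).2, ← (hω b hb).2, hab]

lemma zc_global {U K : Set ℂ} (hU : IsOpen U) (hc : Convex ℝ U) (hK : IsCompact K) (hKU : K ⊆ U) :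
    ∃ κ : ℝ, 0 < κ ∧
      ∀ (f : ℂ → ℂ) (M : ℝ), DifferentiableOn ℂ f U → (∀ z ∈ U, ‖f z‖ ≤ M) →
      ∀ (n : ℂ → ℕ) (Z : Finset ℂ) (z₀ : ℂ), z₀ ∈ K →
        (∀ z ∈ Z, z ∈ K ∧ (n z : ℕ∞) ≤ analyticOrderAt f z) →
        ‖f z₀‖ ≤ M * Real.exp (-(κ * (∑ z ∈ Z, n z : ℕ))) := by
  classical
  have main : ∃ κ : ℝ, 0 < κ ∧
      ∀ (f : ℂ → ℂ) (M : ℝ), DifferentiableOn ℂ f U → (∀ z ∈ U, ‖f z‖ ≤ M) →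
      ∀ (n : ℂ → ℕ) (Z : Finset ℂ) (z₀ : ℂ), z₀ ∈ U →
        (∀ z ∈ Z, (z₀, z) ∈ K ×ˢ K ∧ (n z : ℕ∞) ≤ analyticOrderAt f z) →
        ‖f z₀‖ ≤ M * Real.exp (-(κ * (∑ z ∈ Z, n z : ℕ))) := by
    refine (hK.prod hK).induction_on (p := fun S => ∃ κ : ℝ, 0 < κ ∧
      ∀ (f : ℂ → ℂ) (M : ℝ), DifferentiableOn ℂ f U → (∀ z ∈ U, ‖f z‖ ≤ M) →
      ∀ (n : ℂ → ℕ) (Z : Finset ℂ) (z₀ : ℂ), z₀ ∈ U →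
        (∀ z ∈ Z, (z₀, z) ∈ S ∧ (n z : ℕ∞) ≤ analyticOrderAt f z) →
        ‖f z₀‖ ≤ M * Real.exp (-(κ * (∑ z ∈ Z, n z : ℕ)))) ?_ ?_ ?_ ?_
    · refine ⟨1, one_pos, ?_⟩
      intro f M _ hM n Z z₀ hz₀ hZ
      have : Z = ∅ := by
        apply Finset.eq_empty_of_forall_notMem
        intro z hz
        exact (hZ z hz).1
      subst this
      simpa using hM z₀ hz₀
    · rintro S T hST ⟨κ, hκ, h⟩
      exact ⟨κ, hκ, fun f M hf hM n Z z₀ hz₀ hZ =>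
        h f M hf hM n Z z₀ hz₀ fun z hz => ⟨hST (hZ z hz).1, (hZ z hz).2⟩⟩
    · rintro S T ⟨κ₁, hκ₁, h₁⟩ ⟨κ₂, hκ₂, h₂⟩
      refine ⟨min κ₁ κ₂ / 2, by positivity, ?_⟩
      intro f M hf hM n Z z₀ hz₀ hZ
      have hM0 : 0 ≤ M := (norm_nonneg _).trans (hM z₀ hz₀)
      have a₁ := h₁ f M hf hM n (Z.filter fun z => (z₀, z) ∈ S) z₀ hz₀ (by
        intro z hz
        rw [Finset.mem_filter] at hz
        exact ⟨hz.2, (hZ z hz.1).2⟩)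
      have a₂ := h₂ f M hf hM n (Z.filter fun z => ¬ (z₀, z) ∈ S) z₀ hz₀ (by
        intro z hz
        rw [Finset.mem_filter] at hz
        exact ⟨(hZ z hz.1).1.resolve_left hz.2, (hZ z hz.1).2⟩)
      have hs := Finset.sum_filter_add_sum_filter_not Z (fun z => (z₀, z) ∈ S) n
      rw [← hs]
      set N₁ := ∑ z ∈ Z.filter (fun z => (z₀, z) ∈ S), n z
      set N₂ := ∑ z ∈ Z.filter (fun z => ¬ (z₀, z) ∈ S), n z
      have hm1 := min_le_left κ₁ κ₂
      have hm2 := min_le_right κ₁ κ₂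
      have hm0 : 0 < min κ₁ κ₂ := lt_min hκ₁ hκ₂
      set k := min κ₁ κ₂
      have hn1 : (0 : ℝ) ≤ N₁ := Nat.cast_nonneg _
      have hn2 : (0 : ℝ) ≤ N₂ := Nat.cast_nonneg _
      rcases le_total (N₁ : ℝ) N₂ with h | h
      · refine a₂.trans (mul_le_mul_of_nonneg_left (Real.exp_le_exp.2 ?_) hM0)
        push_cast
        nlinarith
      · refine a₁.trans (mul_le_mul_of_nonneg_left (Real.exp_le_exp.2 ?_) hM0)
        push_cast
        nlinarith
    · rintro ⟨p, p'⟩ ⟨hp, hp'⟩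
      obtain ⟨V, hV, hpV, hpV', κ, hκ, h⟩ := zc_local hU hc (hKU hp) (hKU hp')
      refine ⟨V ×ˢ V, mem_nhdsWithin_of_mem_nhds ((hV.prod hV).mem_nhds ⟨hpV, hpV'⟩), κ, hκ, ?_⟩
      intro f M hf hM n Z z₀ hz₀ hZ
      rcases Z.eq_empty_or_nonempty with rfl | ⟨z, hz⟩
      · simpa using hM z₀ hz₀
      · exact h f M hf hM n Z z₀ (hZ z hz).1.1 fun z hz => ⟨(hZ z hz).1.2, (hZ z hz).2⟩
  obtain ⟨κ, hκ, h⟩ := main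
  exact ⟨κ, hκ, fun f M hf hM n Z z₀ hz₀ hZ => h f M hf hM n Z z₀ (hKU hz₀) fun z hz =>
    ⟨⟨hz₀, (hZ z hz).1⟩, (hZ z hz).2⟩⟩

lemma zc_open (a c : ℝ) : IsOpen {z : ℂ | |z.re| < a ∧ |z.im| < c} :=
  (isOpen_lt Complex.continuous_re.abs continuous_const).inter
    (isOpen_lt Complex.continuous_im.abs continuous_const)

lemma zc_convex (a c : ℝ) : Convex ℝ {z : ℂ | |z.re| < a ∧ |z.im| < c} := by
  have : {z : ℂ | |z.re| < a ∧ |z.im| < c} =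
      Complex.reLm ⁻¹' (ball 0 a) ∩ Complex.imLm ⁻¹' (ball 0 c) := by
    ext z; simp
  rw [this]
  exact ((convex_ball _ _).linear_preimage _).inter ((convex_ball _ _).linear_preimage _)

lemma zc_compact (a c : ℝ) : IsCompact {z : ℂ | |z.re| ≤ a ∧ |z.im| ≤ c} := by
  apply Metric.isCompact_of_isClosed_isBounded
  · exact (isClosed_le Complex.continuous_re.abs continuous_const).inter
        (isClosed_le Complex.continuous_im.abs continuous_const)
  · refine (isBounded_iff_forall_norm_le).2 ⟨a + c, ?_⟩
    rintro z ⟨h1, h2⟩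
    exact (Complex.norm_le_abs_re_add_abs_im z).trans (by linarith)


/-- zero-counting estimate. For every `τ ∈ (0,1)` and aspect ratio `ρ > 0`
there is a constant `C > 0`, depending only on `τ` and `ρ`, such that for every pair of
rectangles `Π = {|Re z| < a, |Im z| < c}`, `Π' = {|Re z| < a(1−τ), |Im z| < c(1−τ)}` with
`a = ρ·c`, and every bounded holomorphic `f` on `Π` which is not identically zero, the number
of zeros of `f` in `Π'`, counted with multiplicity, is at most `C(ln M − ln M')`, where
`M = sup_Π |f|` and `M' = sup_{Π'} |f|`.  (Multiplicities are recorded by any function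
`ord` such that `f(w) = (w − z)^{ord z} g(w)` with `g` analytic and nonvanishing at `z`;
the number of zeros counted with multiplicity is the supremum over finite sets of zeros
of the sums of their orders.) -/
theorem stmt6 (τ ρ : ℝ) (hτ : τ ∈ Set.Ioo (0 : ℝ) 1) (hρ : 0 < ρ) :
    ∃ C : ℝ, 0 < C ∧
      ∀ a c : ℝ, 0 < c → a = ρ * c →
      ∀ f : ℂ → ℂ,
        DifferentiableOn ℂ f {z : ℂ | |z.re| < a ∧ |z.im| < c} →
        BddAbove ((fun z => ‖f z‖) '' {z : ℂ | |z.re| < a ∧ |z.im| < c}) →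
        (∃ z₀ : ℂ, (|z₀.re| < a ∧ |z₀.im| < c) ∧ f z₀ ≠ 0) →
        ∀ ord : ℂ → ℕ,
          (∀ z : ℂ, (|z.re| < a * (1 - τ) ∧ |z.im| < c * (1 - τ)) → f z = 0 →
            1 ≤ ord z ∧ ∃ g : ℂ → ℂ, AnalyticAt ℂ g z ∧ g z ≠ 0 ∧
              ∀ᶠ w in nhds z, f w = (w - z) ^ ord z * g w) →
          ∀ Z : Finset ℂ,
            (∀ z ∈ Z, (|z.re| < a * (1 - τ) ∧ |z.im| < c * (1 - τ)) ∧ f z = 0) →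
            (∑ z ∈ Z, (ord z : ℝ)) ≤
              C * (Real.log (sSup ((fun z => ‖f z‖) '' {z : ℂ | |z.re| < a ∧ |z.im| < c})) -
                Real.log (sSup ((fun z => ‖f z‖) ''
                  {z : ℂ | |z.re| < a * (1 - τ) ∧ |z.im| < c * (1 - τ)}))) := by

  obtain ⟨hτ0, hτ1⟩ := hτ
  have hKU : {z : ℂ | |z.re| ≤ ρ * (1 - τ) ∧ |z.im| ≤ 1 - τ} ⊆ {z : ℂ | |z.re| < ρ ∧ |z.im| < 1} := by
    rintro z ⟨h1, h2⟩
    exact ⟨by nlinarith, by linarith⟩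
  obtain ⟨κ, hκ, hmain⟩ := zc_global (zc_open ρ 1) (zc_convex ρ 1) (zc_compact (ρ * (1 - τ)) (1 - τ)) hKU
  refine ⟨κ⁻¹, inv_pos.2 hκ, ?_⟩
  rintro a c hc rfl f hf hbdd ⟨z₁, hz₁, hfz₁⟩ ord hord Z hZ
  set U := {z : ℂ | |z.re| < ρ * c ∧ |z.im| < c} with hU
  set U' := {z : ℂ | |z.re| < ρ * c * (1 - τ) ∧ |z.im| < c * (1 - τ)} with hU'
  set M := sSup ((fun z => ‖f z‖) '' U) with hM
  set M' := sSup ((fun z => ‖f z‖) '' U') with hM'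
  have hUo : IsOpen U := zc_open _ _
  have hU'o : IsOpen U' := zc_open _ _
  have hU'U : U' ⊆ U := by
    rintro z ⟨h1, h2⟩
    have : 0 < ρ * c := mul_pos hρ hc
    exact ⟨by nlinarith, by nlinarith⟩
  have h0U' : (0 : ℂ) ∈ U' := by
    have h1 : 0 < 1 - τ := by linarith
    refine ⟨?_, ?_⟩ <;> simp only [Complex.zero_re, Complex.zero_im, abs_zero] <;> positivity
  have hfM : ∀ z ∈ U, ‖f z‖ ≤ M := fun z hz => le_csSup hbdd ⟨z, hz, rfl⟩
  have hbdd' : BddAbove ((fun z => ‖f z‖) '' U') := hbdd.mono (image_mono hU'U)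
  have hfan : AnalyticOnNhd ℂ f U := hf.analyticOnNhd hUo
  have hM0 : 0 < M := (norm_pos_iff.2 hfz₁).trans_le (hfM z₁ hz₁)
  have hM'0 : 0 < M' := by
    by_contra! h
    have hz : ∀ z ∈ U', f z = 0 := by
      intro z hz
      have h1 : ‖f z‖ ≤ M' := le_csSup hbdd' ⟨z, hz, rfl⟩
      exact norm_le_zero_iff.1 (h1.trans h)
    have := hfan.eqOn_zero_of_preconnected_of_eventuallyEq_zero (zc_convex _ _).isPreconnected
      (hU'U h0U') (Filter.eventually_of_mem (hU'o.mem_nhds h0U') hz)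
    exact hfz₁ (this hz₁)
  have hcc : (c : ℂ) ≠ 0 := by exact_mod_cast hc.ne'
  have hsc : ∀ z : ℂ, |z.re| < ρ ∧ |z.im| < 1 → (c : ℂ) * z ∈ U := by
    rintro z ⟨h1, h2⟩
    refine ⟨?_, ?_⟩
    · rw [Complex.re_ofReal_mul, abs_mul, abs_of_pos hc]; nlinarith
    · rw [Complex.im_ofReal_mul, abs_mul, abs_of_pos hc]; nlinarith
  have hsc' : ∀ z ∈ U', |(z / (c : ℂ)).re| ≤ ρ * (1 - τ) ∧ |(z / (c : ℂ)).im| ≤ 1 - τ := by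
    rintro z ⟨h1, h2⟩
    rw [Complex.div_ofReal_re, Complex.div_ofReal_im, abs_div, abs_div, abs_of_pos hc,
      div_le_iff₀ hc, div_le_iff₀ hc]
    exact ⟨by linarith, by linarith⟩
  have key : ∀ z₀ ∈ U', ‖f z₀‖ ≤ M * Real.exp (-(κ * (∑ z ∈ Z, ord z : ℕ))) := by
    intro z₀ hz₀
    have := hmain (fun z => f (c * z)) M
      (hf.comp (by fun_prop) hsc) (fun z hz => hfM _ (hsc z hz)) (fun z => ord (c * z))
      (Z.image (fun z => z / (c : ℂ))) (z₀ / c) (hsc' z₀ hz₀) ?_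
    · rw [mul_div_cancel₀ _ hcc, Finset.sum_image] at this
      · simpa only [mul_div_cancel₀ _ hcc] using this
      · intro x _ y _ hxy
        exact (div_left_inj' hcc).1 hxy
    · intro w hw
      obtain ⟨z, hz, rfl⟩ := Finset.mem_image.1 hw
      obtain ⟨hzU, hfz⟩ := hZ z hz
      refine ⟨hsc' z hzU, ?_⟩
      obtain ⟨-, g, hg, hgz, hfg⟩ := hord z hzU hfz
      have e : (c : ℂ) * (z / c) = z := mul_div_cancel₀ _ hcc
      have hfa : AnalyticAt ℂ f z := hfan z (hU'U hzU)
      have h1 : analyticOrderAt f z = ord z := by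
        rw [hfa.analyticOrderAt_eq_natCast]
        exact ⟨g, hg, hgz, by simpa using hfg⟩
      have h2 := AnalyticAt.analyticOrderAt_comp (f := f) (g := fun w : ℂ => (c : ℂ) * w) (z₀ := z / c)
        (by simpa only [e] using hfa) (by fun_prop)
      change _ ≤ analyticOrderAt (f ∘ fun w : ℂ => (c : ℂ) * w) (z / c)
      rw [h2, e, h1]
      refine le_mul_of_one_le_right zero_le ?_
      rw [Order.one_le_iff_ne_zero, analyticOrderAt_ne_zero]
      exact ⟨by fun_prop, by simp [e]⟩
  have hle : M' ≤ M * Real.exp (-(κ * (∑ z ∈ Z, ord z : ℕ))) := by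
    apply csSup_le (Set.Nonempty.image _ ⟨0, h0U'⟩)
    rintro _ ⟨z, hz, rfl⟩
    exact key z hz
  have hlog := Real.log_le_log hM'0 hle
  rw [Real.log_mul hM0.ne' (Real.exp_pos _).ne', Real.log_exp] at hlog
  push_cast at hlog
  rw [inv_mul_eq_div, le_div_iff₀ hκ]
  linarith
end

section
/- Let p ∈ (0,1) and h > 0. Then the function F₁(t) = ∫₁^∞ ξ^p / ((t − ξ)² + h²ξ^{2p}) dξ is well defined (the improper integral converges) for every t ≥ 0, and F₁ is bounded on [0, ∞). -/
open MeasureTheory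

lemma aux_bound (p h : ℝ) (hp : p ∈ Set.Ioo (0 : ℝ) 1) (hh : 0 < h) (t : ℝ) (ht : 0 ≤ t)
    (x : ℝ) (hx : 1 ≤ x) :
    x ^ p / ((t - x) ^ 2 + h ^ 2 * x ^ (2 * p)) ≤ 4 * x ^ (p - 2) +
      (2 * t ^ p / (h * t ^ p / 2) ^ 2) * (1 + ((x - t) / (h * t ^ p / 2)) ^ 2)⁻¹ := by
  have hx0 : 0 < x := by linarith
  have hxp : 0 < x ^ p := Real.rpow_pos_of_pos hx0 p
  have h2 : x ^ (2 * p) = (x ^ p) ^ 2 := by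
    rw [mul_comm, Real.rpow_mul hx0.le]; norm_cast
  have hsub : x ^ (p - 2) = x ^ p / x ^ 2 := by
    rw [Real.rpow_sub hx0]; norm_cast
  have hta : 0 ≤ t ^ p := Real.rpow_nonneg ht p
  rw [h2, hsub]
  by_cases hc : x / 2 ≤ |t - x|
  · have h3 : (x / 2) ^ 2 ≤ (t - x) ^ 2 := by
      rw [← sq_abs (t - x)]; gcongr
    have h4 : x ^ p / ((t - x) ^ 2 + h ^ 2 * (x ^ p) ^ 2) ≤ x ^ p / (x / 2) ^ 2 := by
      gcongr
      nlinarith [sq_nonneg (h * x ^ p)]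
    have h5 : x ^ p / (x / 2) ^ 2 = 4 * (x ^ p / x ^ 2) := by
      field_simp; norm_num
    have h6 : 0 ≤ (2 * t ^ p / (h * t ^ p / 2) ^ 2) *
        (1 + ((x - t) / (h * t ^ p / 2)) ^ 2)⁻¹ := by positivity
    linarith
  · push Not at hc
    rw [abs_lt] at hc
    have ht0 : 0 < t := by linarith
    have htp : 0 < t ^ p := Real.rpow_pos_of_pos ht0 p
    have h2p : (2 : ℝ) ^ p ≤ 2 := by
      have := Real.rpow_le_rpow_of_exponent_le (x := 2) (by norm_num) hp.2.le
      simpa using this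
    have hA : x ^ p ≤ 2 * t ^ p := by
      calc x ^ p ≤ (2 * t) ^ p := Real.rpow_le_rpow hx0.le (by linarith) hp.1.le
        _ = 2 ^ p * t ^ p := Real.mul_rpow (by norm_num) ht
        _ ≤ _ := by gcongr
    have hB : t ^ p ≤ 2 * x ^ p := by
      calc t ^ p ≤ (2 * x) ^ p := Real.rpow_le_rpow ht (by linarith) hp.1.le
        _ = 2 ^ p * x ^ p := Real.mul_rpow (by norm_num) hx0.le
        _ ≤ _ := by gcongr
    have h7 : x ^ p / ((t - x) ^ 2 + h ^ 2 * (x ^ p) ^ 2) ≤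
        2 * t ^ p / ((t - x) ^ 2 + h ^ 2 * (t ^ p / 2) ^ 2) := by
      gcongr
      linarith
    have h8 : 2 * t ^ p / ((t - x) ^ 2 + h ^ 2 * (t ^ p / 2) ^ 2) =
        (2 * t ^ p / (h * t ^ p / 2) ^ 2) * (1 + ((x - t) / (h * t ^ p / 2)) ^ 2)⁻¹ := by
      have : 0 < h * t ^ p / 2 := by positivity
      have e : (t - x) ^ 2 + h ^ 2 * (t ^ p / 2) ^ 2 =
        (h * t ^ p / 2) ^ 2 * (1 + ((x - t) / (h * t ^ p / 2)) ^ 2) := by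
        field_simp; ring
      rw [e, ← div_div, div_eq_mul_inv (2 * t ^ p / (h * t ^ p / 2) ^ 2)]
    have h9 : 0 ≤ 4 * (x ^ p / x ^ 2) := by positivity
    linarith

lemma aux_int (a b t : ℝ) (hb : b ≠ 0) :
    Integrable (fun x : ℝ => a * (1 + ((x - t) / b) ^ 2)⁻¹) ∧
    ∫ x : ℝ, a * (1 + ((x - t) / b) ^ 2)⁻¹ = a * (|b| * Real.pi) := by
  constructor
  · exact ((integrable_inv_one_add_sq.comp_div hb).comp_sub_right t).const_mul a
  · rw [integral_const_mul, integral_sub_right_eq_self (fun x : ℝ => (1 + (x / b) ^ 2)⁻¹) t,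
      Measure.integral_comp_div (fun x : ℝ => (1 + x ^ 2)⁻¹) b, integral_univ_inv_one_add_sq,
      smul_eq_mul]

lemma aux_g (p h : ℝ) (hh : 0 < h) (t : ℝ) (ht : 0 ≤ t) :
    Integrable (fun x : ℝ => (2 * t ^ p / (h * t ^ p / 2) ^ 2) *
      (1 + ((x - t) / (h * t ^ p / 2)) ^ 2)⁻¹) ∧
    ∫ x : ℝ, (2 * t ^ p / (h * t ^ p / 2) ^ 2) *
      (1 + ((x - t) / (h * t ^ p / 2)) ^ 2)⁻¹ ≤ 4 * Real.pi / h := by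
  rcases (Real.rpow_nonneg ht p).eq_or_lt with h0 | h0
  · rw [← h0]; simp; positivity
  · have hb : 0 < h * t ^ p / 2 := by positivity
    obtain ⟨h1, h2⟩ := aux_int (2 * t ^ p / (h * t ^ p / 2) ^ 2) _ t hb.ne'
    refine ⟨h1, ?_⟩
    rw [h2, abs_of_pos hb]
    apply le_of_eq
    field_simp
    norm_num

/-- For `p ∈ (0,1)` and `h > 0`, the function
`F₁(t) = ∫₁^∞ ξ^p / ((t − ξ)² + h²ξ^{2p}) dξ` is well defined (the integrand is
integrable on `[1, ∞)`) for every `t ≥ 0`, and `F₁` is bounded on `[0, ∞)`. -/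
theorem stmt10 (p h : ℝ) (hp : p ∈ Set.Ioo (0 : ℝ) 1) (hh : 0 < h) :
    (∀ t : ℝ, 0 ≤ t →
      IntegrableOn (fun ξ : ℝ => ξ ^ p / ((t - ξ) ^ 2 + h ^ 2 * ξ ^ (2 * p)))
        (Set.Ici (1 : ℝ))) ∧
    ∃ C : ℝ, ∀ t : ℝ, 0 ≤ t →
      (∫ ξ in Set.Ici (1 : ℝ), ξ ^ p / ((t - ξ) ^ 2 + h ^ 2 * ξ ^ (2 * p))) ≤ C := by
  have hI1 : IntegrableOn (fun x : ℝ => 4 * x ^ (p - 2)) (Set.Ici (1 : ℝ)) := by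
    rw [integrableOn_Ici_iff_integrableOn_Ioi]
    exact (integrableOn_Ioi_rpow_of_lt (by linarith [hp.2]) one_pos).const_mul 4
  have key : ∀ t : ℝ, 0 ≤ t →
      IntegrableOn (fun ξ : ℝ => ξ ^ p / ((t - ξ) ^ 2 + h ^ 2 * ξ ^ (2 * p)))
        (Set.Ici (1 : ℝ)) := by
    intro t ht
    refine Integrable.mono' (hI1.add (aux_g p h hh t ht).1.integrableOn)
      (Measurable.aestronglyMeasurable (by fun_prop)) ?_
    filter_upwards [ae_restrict_mem measurableSet_Ici] with x hx
    have hx0 : (0 : ℝ) < x := lt_of_lt_of_le one_pos hx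
    rw [Real.norm_of_nonneg (by positivity)]
    exact aux_bound p h hp hh t ht x hx
  refine ⟨key, (∫ x in Set.Ici (1 : ℝ), 4 * x ^ (p - 2)) + 4 * Real.pi / h, fun t ht => ?_⟩
  obtain ⟨g1, g2⟩ := aux_g p h hh t ht
  calc _ ≤ ∫ x in Set.Ici (1 : ℝ), (4 * x ^ (p - 2) +
      (2 * t ^ p / (h * t ^ p / 2) ^ 2) * (1 + ((x - t) / (h * t ^ p / 2)) ^ 2)⁻¹) :=
        setIntegral_mono_on (key t ht) (hI1.add g1.integrableOn) measurableSet_Ici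
          (fun x hx => aux_bound p h hp hh t ht x hx)
    _ = _ := integral_add hI1 g1.integrableOn
    _ ≤ _ := by
      refine add_le_add le_rfl (le_trans (setIntegral_le_integral g1 ?_) g2)
      refine Filter.Eventually.of_forall fun x => ?_
      have := Real.rpow_nonneg ht p
      simp only [Pi.zero_apply]
      positivity
end

section
/- Let p ∈ (0,1) and h > 0. Then the function F₂(t) = ∫₁^∞ t² ξ^{p−2} / ((t − ξ)² + h²ξ^{2p}) dξ is well defined (the improper integral converges) for every t ≥ 0, and F₂ is bounded on [0, ∞). Moreover, for every t ≥ 2^{1/(1−p)} one has ∫₁^t t² ξ^{p−2} / ((t − ξ)² + h²ξ^{2p}) dξ ≤ 4/(1−p) + 4 + 4^p/h². -/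
open MeasureTheory

lemma aux_pos (p h t x : ℝ) (hh : 0 < h) (hx : 1 ≤ x) :
    0 < (t - x) ^ 2 + h ^ 2 * x ^ (2 * p) := by
  have : 0 < x ^ (2 * p) := Real.rpow_pos_of_pos (by linarith) _
  positivity

lemma aux_nonneg (p h t x : ℝ) (hh : 0 < h) (hx : 1 ≤ x) :
    0 ≤ t ^ 2 * x ^ (p - 2) / ((t - x) ^ 2 + h ^ 2 * x ^ (2 * p)) := by
  have := aux_pos p h t x hh hx
  have : 0 ≤ x ^ (p - 2) := Real.rpow_nonneg (by linarith) _
  positivity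

lemma aux_le1 (p h t x : ℝ) (hh : 0 < h) (hx : 1 ≤ x) :
    t ^ 2 * x ^ (p - 2) / ((t - x) ^ 2 + h ^ 2 * x ^ (2 * p)) ≤ t ^ 2 / h ^ 2 * x ^ (-p - 2) := by
  have hD := aux_pos p h t x hh hx
  have hx0 : 0 < x := by linarith
  have e : x ^ (p - 2) = x ^ (-p - 2) * x ^ (2 * p) := by
    rw [← Real.rpow_add hx0]; congr 1; ring
  rw [div_le_iff₀ hD, e]
  have h1 : 0 ≤ x ^ (-p - 2) := Real.rpow_nonneg hx0.le _
  have : t ^ 2 / h ^ 2 * x ^ (-p - 2) * ((t - x) ^ 2 + h ^ 2 * x ^ (2 * p))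
      = t ^ 2 / h ^ 2 * x ^ (-p - 2) * (t - x) ^ 2 + t ^ 2 * (x ^ (-p - 2) * x ^ (2 * p)) := by
    field_simp
  rw [this]
  have : 0 ≤ t ^ 2 / h ^ 2 * x ^ (-p - 2) * (t - x) ^ 2 := by positivity
  linarith

lemma aux_le2 (p h t x : ℝ) (hx : 1 ≤ x) (hxt : x ≠ t) :
    t ^ 2 * x ^ (p - 2) / ((t - x) ^ 2 + h ^ 2 * x ^ (2 * p)) ≤
      t ^ 2 * x ^ (p - 2) / (t - x) ^ 2 := by
  have hx0 : 0 < x := by linarith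
  have h1 : 0 ≤ x ^ (p - 2) := Real.rpow_nonneg hx0.le _
  have h2 : 0 ≤ x ^ (2 * p) := Real.rpow_nonneg hx0.le _
  have h3 : 0 < (t - x) ^ 2 := by
    have : t - x ≠ 0 := fun h => hxt (by linarith)
    positivity
  apply div_le_div_of_nonneg_left (by positivity) h3
  have : 0 ≤ h ^ 2 * x ^ (2 * p) := by positivity
  linarith

lemma aux_cont (p h t : ℝ) (hh : 0 < h) :
    ContinuousOn (fun x : ℝ => t ^ 2 * x ^ (p - 2) / ((t - x) ^ 2 + h ^ 2 * x ^ (2 * p)))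
      (Set.Ici (1 : ℝ)) := by
  intro x hx
  have hx' : (1 : ℝ) ≤ x := hx
  have hx0 : x ≠ 0 := by linarith
  apply ContinuousAt.continuousWithinAt
  refine ContinuousAt.div ?_ ?_ (aux_pos p h t x hh hx).ne'
  · exact continuousAt_const.mul (Real.continuousAt_rpow_const _ _ (Or.inl hx0))
  · exact ((continuousAt_const.sub continuousAt_id).pow 2).add
      (continuousAt_const.mul (Real.continuousAt_rpow_const _ _ (Or.inl hx0)))

lemma aux_int_s11 (p h t : ℝ) (hp : p ∈ Set.Ioo (0 : ℝ) 1) (hh : 0 < h) :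
    IntegrableOn (fun ξ : ℝ => t ^ 2 * ξ ^ (p - 2) / ((t - ξ) ^ 2 + h ^ 2 * ξ ^ (2 * p)))
        (Set.Ici (1 : ℝ)) := by
  have hi : IntegrableOn (fun ξ : ℝ => t ^ 2 / h ^ 2 * ξ ^ (-p - 2)) (Set.Ici (1 : ℝ)) := by
    rw [integrableOn_Ici_iff_integrableOn_Ioi]
    exact (integrableOn_Ioi_rpow_of_lt (by linarith [hp.1]) one_pos).const_mul _
  refine Integrable.mono' hi ((aux_cont p h t hh).aestronglyMeasurable measurableSet_Ici) ?_
  refine (ae_restrict_iff' measurableSet_Ici).2 (Filter.Eventually.of_forall fun x hx => ?_)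
  rw [Real.norm_of_nonneg (aux_nonneg p h t x hh hx)]
  exact aux_le1 p h t x hh hx

lemma aux_ii (p h t a b : ℝ) (hh : 0 < h) (ha : 1 ≤ a) (hab : a ≤ b) :
    IntervalIntegrable (fun ξ : ℝ => t ^ 2 * ξ ^ (p - 2) / ((t - ξ) ^ 2 + h ^ 2 * ξ ^ (2 * p)))
      volume a b := by
  apply ContinuousOn.intervalIntegrable
  rw [Set.uIcc_of_le hab]
  exact (aux_cont p h t hh).mono fun x hx => ha.trans hx.1

lemma aux_t (p t : ℝ) (hp : p ∈ Set.Ioo (0 : ℝ) 1) (ht : (2 : ℝ) ^ (1 / (1 - p)) ≤ t) :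
    2 ≤ t ∧ t ^ p ≤ t / 2 := by
  obtain ⟨hp0, hp1⟩ := hp
  have h1 : 0 < 1 - p := by linarith
  have h2 : (2 : ℝ) ≤ t := by
    refine le_trans ?_ ht
    have : (1 : ℝ) ≤ 1 / (1 - p) := by rw [le_div_iff₀ h1]; linarith
    simpa using Real.rpow_le_rpow_of_exponent_le (x := 2) (by norm_num) this
  refine ⟨h2, ?_⟩
  have ht0 : 0 < t := by linarith
  have h3 : (2 : ℝ) ≤ t ^ (1 - p) := by
    have := Real.rpow_le_rpow (by positivity) ht h1.le
    rwa [← Real.rpow_mul (by norm_num), one_div_mul_cancel h1.ne', Real.rpow_one] at this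
  have h4 : t ^ (1 - p) * t ^ p = t := by
    rw [← Real.rpow_add ht0]; simp
  have := Real.rpow_pos_of_pos ht0 p
  nlinarith

lemma aux_C (p h : ℝ) (hp : p ∈ Set.Ioo (0 : ℝ) 1) (hh : 0 < h) (t : ℝ)
    (ht : (2 : ℝ) ^ (1 / (1 - p)) ≤ t) :
      (∫ ξ in (1 : ℝ)..t, t ^ 2 * ξ ^ (p - 2) / ((t - ξ) ^ 2 + h ^ 2 * ξ ^ (2 * p)))
        ≤ 4 / (1 - p) + 4 + 4 ^ p / h ^ 2 := by
  obtain ⟨h2, htp⟩ := aux_t p t hp ht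
  obtain ⟨hp0, hp1⟩ := hp
  have ht0 : 0 < t := by linarith
  have htp0 : 0 < t ^ p := Real.rpow_pos_of_pos ht0 p
  obtain ⟨a, ha⟩ : ∃ a, a = t - t ^ p / 2 := ⟨_, rfl⟩
  have ha1 : 1 ≤ a := by linarith
  have ha34 : 3 / 4 * t ≤ a := by linarith
  have hat : a < t := by linarith
  have i1 := aux_ii p h t 1 a hh le_rfl ha1
  have i2 := aux_ii p h t a t hh ha1 hat.le
  rw [← intervalIntegral.integral_add_adjacent_intervals i1 i2]
  have hc : ContinuousOn (fun x : ℝ => 2 * x ^ (p - 2) + 2 * t ^ p / (t - x) ^ 2)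
      (Set.uIcc 1 a) := by
    rw [Set.uIcc_of_le ha1]
    intro x hx
    apply ContinuousAt.continuousWithinAt
    have hx0 : x ≠ 0 := by linarith [hx.1]
    have hx1 : (t - x) ^ 2 ≠ 0 := pow_ne_zero _ (by linarith [hx.2])
    exact (continuousAt_const.mul (Real.continuousAt_rpow_const _ _ (Or.inl hx0))).add
      (continuousAt_const.div ((continuousAt_const.sub continuousAt_id).pow 2) hx1)
  have b1 : (∫ ξ in (1 : ℝ)..a, t ^ 2 * ξ ^ (p - 2) / ((t - ξ) ^ 2 + h ^ 2 * ξ ^ (2 * p)))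
      ≤ ∫ x in (1 : ℝ)..a, (2 * x ^ (p - 2) + 2 * t ^ p / (t - x) ^ 2) := by
    apply intervalIntegral.integral_mono_on ha1 i1 hc.intervalIntegrable
    intro x hx
    have hx0 : 0 < x := by linarith [hx.1]
    have hd : 0 < t - x := by linarith [hx.2]
    refine (aux_le2 p h t x hx.1 (by linarith)).trans ?_
    rw [div_le_iff₀ (by positivity), add_mul, div_mul_cancel₀ _ (by positivity)]
    have e : x ^ (p - 2) * x ^ 2 = x ^ p := by
      rw [← Real.rpow_natCast x 2, ← Real.rpow_add hx0]; congr 1; push_cast; ring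
    have e2 : x ^ p ≤ t ^ p := Real.rpow_le_rpow hx0.le (by linarith) hp0.le
    have e3 : 0 ≤ x ^ (p - 2) := Real.rpow_nonneg hx0.le _
    have e4 : 0 ≤ x ^ (p - 2) * (t - 2 * x) ^ 2 := by positivity
    nlinarith
  have b2 : (∫ x in (1 : ℝ)..a, (2 * x ^ (p - 2) + 2 * t ^ p / (t - x) ^ 2)) =
      (2 / (p - 1) * a ^ (p - 1) + 2 * t ^ p / (t - a)) -
      (2 / (p - 1) * 1 ^ (p - 1) + 2 * t ^ p / (t - 1)) := by
    apply intervalIntegral.integral_eq_sub_of_hasDerivAt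
      (f := fun x : ℝ => 2 / (p - 1) * x ^ (p - 1) + 2 * t ^ p / (t - x)) _ hc.intervalIntegrable
    intro x hx
    rw [Set.uIcc_of_le ha1] at hx
    have hx0 : x ≠ 0 := by linarith [hx.1]
    have hx1 : t - x ≠ 0 := by linarith [hx.2]
    have d1 := (Real.hasDerivAt_rpow_const (x := x) (p := p - 1) (Or.inl hx0)).const_mul
      (2 / (p - 1))
    have d2 := (((hasDerivAt_id x).const_sub t).inv hx1).const_mul (2 * t ^ p)
    refine (d1.add d2).congr_deriv ?_
    have hpp : p - 1 ≠ 0 := by linarith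
    have e : p - 1 - 1 = p - 2 := by ring
    rw [e]
    simp only [id]
    field_simp
  have b3 : (2 / (p - 1) * a ^ (p - 1) + 2 * t ^ p / (t - a)) -
      (2 / (p - 1) * 1 ^ (p - 1) + 2 * t ^ p / (t - 1)) ≤ 4 / (1 - p) + 4 := by
    have q1 : 2 / (p - 1) = - (2 / (1 - p)) := by
      rw [← neg_sub 1 p, div_neg]
    have q2 : 2 * t ^ p / (t - a) = 4 := by
      rw [show t - a = t ^ p / 2 by linarith]; field_simp; norm_num
    have q3 : 0 ≤ 2 * t ^ p / (t - 1) := div_nonneg (by positivity) (by linarith)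
    have q4 : 0 ≤ 2 / (1 - p) := div_nonneg (by norm_num) (by linarith)
    have q5 : 0 ≤ a ^ (p - 1) := Real.rpow_nonneg (by linarith) _
    have q6 : 4 / (1 - p) = 2 * (2 / (1 - p)) := by ring
    rw [q1, q2, q6, Real.one_rpow]
    nlinarith [mul_nonneg q4 q5]
  have b4 : (∫ ξ in a..t, t ^ 2 * ξ ^ (p - 2) / ((t - ξ) ^ 2 + h ^ 2 * ξ ^ (2 * p)))
      ≤ ∫ x in a..t, t ^ 2 / h ^ 2 * (3 / 4 * t) ^ (-p - 2) := by
    apply intervalIntegral.integral_mono_on hat.le i2 (by simp)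
    intro x hx
    refine (aux_le1 p h t x hh (ha1.trans hx.1)).trans ?_
    apply mul_le_mul_of_nonneg_left _ (by positivity)
    exact Real.rpow_le_rpow_of_nonpos (by positivity) (ha34.trans hx.1) (by linarith)
  have b5 : (∫ x in a..t, t ^ 2 / h ^ 2 * (3 / 4 * t) ^ (-p - 2)) ≤ 4 ^ p / h ^ 2 := by
    rw [intervalIntegral.integral_const, smul_eq_mul, Real.mul_rpow (by norm_num) ht0.le]
    have e1 : t ^ (-p - 2) = (t ^ p)⁻¹ * (t ^ 2)⁻¹ := by
      rw [Real.rpow_sub ht0, Real.rpow_neg ht0.le, ← Real.rpow_natCast t 2]; rfl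
    have e2 : (3 / 4 : ℝ) ^ (-p - 2) = (4 / 3 : ℝ) ^ p * (16 / 9) := by
      rw [Real.rpow_sub (by norm_num), Real.rpow_neg (by norm_num),
        ← Real.inv_rpow (by norm_num)]
      norm_num
      ring
    have e3 : t - a = t ^ p / 2 := by linarith
    have e4 : (4 / 3 : ℝ) ^ p ≤ 4 ^ p := Real.rpow_le_rpow (by norm_num) (by norm_num) hp0.le
    have e5 : 0 ≤ (4 / 3 : ℝ) ^ p := by positivity
    rw [e1, e2, e3]
    have : t ^ p / 2 * (t ^ 2 / h ^ 2 * ((4 / 3 : ℝ) ^ p * (16 / 9) * ((t ^ p)⁻¹ * (t ^ 2)⁻¹)))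
        = ((4 / 3 : ℝ) ^ p * (8 / 9)) / h ^ 2 := by
      field_simp; ring
    rw [this]
    apply div_le_div_of_nonneg_right _ (by positivity)
    linarith
  linarith

lemma aux_tail (t b : ℝ) (hb : t < b) (c : ℝ) (hc : 0 ≤ c) :
    IntegrableOn (fun x : ℝ => c / (x - t) ^ 2) (Set.Ioi b) ∧
    (∫ x in Set.Ioi b, c / (x - t) ^ 2) = c / (b - t) := by
  have hd : ∀ x ∈ Set.Ici b, HasDerivAt (fun x : ℝ => - (c * (x - t)⁻¹)) (c / (x - t) ^ 2) x := by
    intro x hx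
    have hx' : b ≤ x := hx
    have hx1 : x - t ≠ 0 := by linarith
    have d2 := ((((hasDerivAt_id x).sub_const t).inv hx1).const_mul c).neg
    refine d2.congr_deriv ?_
    simp only [id]
    field_simp
  have hl : Filter.Tendsto (fun x : ℝ => - (c * (x - t)⁻¹)) Filter.atTop (nhds 0) := by
    have : Filter.Tendsto (fun x : ℝ => x - t) Filter.atTop Filter.atTop :=
      Filter.tendsto_atTop_add_const_right _ (-t) Filter.tendsto_id
    simpa using ((tendsto_inv_atTop_zero.comp this).const_mul c).neg
  have hn : ∀ x ∈ Set.Ioi b, 0 ≤ c / (x - t) ^ 2 := fun x _ => by positivity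
  refine ⟨integrableOn_Ioi_deriv_of_nonneg' hd hn hl, ?_⟩
  rw [integral_Ioi_of_hasDerivAt_of_nonneg' hd hn hl]
  simp [div_eq_mul_inv]

lemma aux_B (p h : ℝ) (hp : p ∈ Set.Ioo (0 : ℝ) 1) (hh : 0 < h) (t : ℝ)
    (ht : (2 : ℝ) ^ (1 / (1 - p)) ≤ t) :
      (∫ ξ in Set.Ici (1 : ℝ), t ^ 2 * ξ ^ (p - 2) / ((t - ξ) ^ 2 + h ^ 2 * ξ ^ (2 * p)))
        ≤ 4 / (1 - p) + 4 + 4 ^ p / h ^ 2 + 1 / h ^ 2 + 1 := by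
  have hC := aux_C p h hp hh t ht
  have hI := aux_int_s11 p h t hp hh
  obtain ⟨h2, htp⟩ := aux_t p t hp ht
  obtain ⟨hp0, hp1⟩ := hp
  have ht0 : 0 < t := by linarith
  have htp0 : 0 < t ^ p := Real.rpow_pos_of_pos ht0 p
  obtain ⟨b, hb⟩ : ∃ b, b = t + t ^ p := ⟨_, rfl⟩
  have htb : t < b := by linarith
  have i1 := aux_ii p h t 1 t hh le_rfl (by linarith)
  have i2 := aux_ii p h t t b hh (by linarith) htb.le
  have hIb := hI.mono_set (Set.Ioi_subset_Ici (show (1 : ℝ) ≤ b by linarith))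
  have hI1 := hI.mono_set (Set.Ioi_subset_Ici (le_refl (1 : ℝ)))
  have hsplit := intervalIntegral.integral_interval_add_Ioi hI1 hIb
  rw [integral_Ici_eq_integral_Ioi, ← hsplit,
    ← intervalIntegral.integral_add_adjacent_intervals i1 i2]
  have e1 : t ^ 2 * t ^ (-p - 2) = (t ^ p)⁻¹ := by
    rw [← Real.rpow_natCast t 2, ← Real.rpow_add ht0, ← Real.rpow_neg ht0.le]
    congr 1; push_cast; ring
  have b4 : (∫ ξ in t..b, t ^ 2 * ξ ^ (p - 2) / ((t - ξ) ^ 2 + h ^ 2 * ξ ^ (2 * p)))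
      ≤ ∫ x in t..b, (t ^ p)⁻¹ / h ^ 2 := by
    apply intervalIntegral.integral_mono_on htb.le i2 (by simp)
    intro x hx
    refine (aux_le1 p h t x hh (by linarith [hx.1])).trans ?_
    rw [← e1, mul_div_right_comm]
    apply mul_le_mul_of_nonneg_left _ (by positivity)
    exact Real.rpow_le_rpow_of_nonpos (by positivity) hx.1 (by linarith)
  have b5 : (∫ x in t..b, (t ^ p)⁻¹ / h ^ 2) = 1 / h ^ 2 := by
    rw [intervalIntegral.integral_const, smul_eq_mul, hb]
    field_simp; ring
  obtain ⟨j1, j2⟩ := aux_tail t b htb (t ^ p) htp0.le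
  have b6 : (∫ ξ in Set.Ioi b, t ^ 2 * ξ ^ (p - 2) / ((t - ξ) ^ 2 + h ^ 2 * ξ ^ (2 * p)))
      ≤ ∫ x in Set.Ioi b, t ^ p / (x - t) ^ 2 := by
    apply setIntegral_mono_on hIb j1 measurableSet_Ioi
    intro x hx
    have hx' : b < x := hx
    refine (aux_le2 p h t x (by linarith) (by linarith)).trans ?_
    have e2 : t ^ 2 * t ^ (p - 2) = t ^ p := by
      rw [← Real.rpow_natCast t 2, ← Real.rpow_add ht0]
      congr 1; push_cast; ring
    rw [← e2, show (t - x) ^ 2 = (x - t) ^ 2 by ring]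
    apply div_le_div_of_nonneg_right _ (by positivity)
    apply mul_le_mul_of_nonneg_left _ (by positivity)
    exact Real.rpow_le_rpow_of_nonpos (by positivity) (by linarith) (by linarith)
  have b7 : t ^ p / (b - t) = 1 := by
    rw [show b - t = t ^ p by linarith]; exact div_self htp0.ne'
  linarith

lemma aux_A (p h : ℝ) (hp : p ∈ Set.Ioo (0 : ℝ) 1) (hh : 0 < h) (t T : ℝ) (ht0 : 0 ≤ t)
    (ht : t ≤ T) :
      (∫ ξ in Set.Ici (1 : ℝ), t ^ 2 * ξ ^ (p - 2) / ((t - ξ) ^ 2 + h ^ 2 * ξ ^ (2 * p)))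
        ≤ ∫ ξ in Set.Ici (1 : ℝ), T ^ 2 / h ^ 2 * ξ ^ (-p - 2) := by
  have hi : IntegrableOn (fun ξ : ℝ => T ^ 2 / h ^ 2 * ξ ^ (-p - 2)) (Set.Ici (1 : ℝ)) := by
    rw [integrableOn_Ici_iff_integrableOn_Ioi]
    exact (integrableOn_Ioi_rpow_of_lt (by linarith [hp.1]) one_pos).const_mul _
  apply setIntegral_mono_on (aux_int_s11 p h t hp hh) hi measurableSet_Ici
  intro x hx
  refine (aux_le1 p h t x hh hx).trans ?_
  have hx' : (1 : ℝ) ≤ x := hx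
  have : 0 ≤ x ^ (-p - 2) := Real.rpow_nonneg (by linarith) _
  gcongr

/-- For `p ∈ (0,1)` and `h > 0`, the function
`F₂(t) = ∫₁^∞ t²ξ^{p−2} / ((t − ξ)² + h²ξ^{2p}) dξ` is well defined for every `t ≥ 0`,
and `F₂` is bounded on `[0, ∞)`.  Moreover, for every `t ≥ 2^{1/(1−p)}` one has
`∫₁^t t²ξ^{p−2} / ((t − ξ)² + h²ξ^{2p}) dξ ≤ 4/(1−p) + 4 + 4^p/h²`. -/
theorem stmt11 (p h : ℝ) (hp : p ∈ Set.Ioo (0 : ℝ) 1) (hh : 0 < h) :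
    (∀ t : ℝ, 0 ≤ t →
      IntegrableOn (fun ξ : ℝ => t ^ 2 * ξ ^ (p - 2) / ((t - ξ) ^ 2 + h ^ 2 * ξ ^ (2 * p)))
        (Set.Ici (1 : ℝ))) ∧
    (∃ C : ℝ, ∀ t : ℝ, 0 ≤ t →
      (∫ ξ in Set.Ici (1 : ℝ), t ^ 2 * ξ ^ (p - 2) / ((t - ξ) ^ 2 + h ^ 2 * ξ ^ (2 * p))) ≤ C) ∧
    ∀ t : ℝ, (2 : ℝ) ^ (1 / (1 - p)) ≤ t →
      (∫ ξ in (1 : ℝ)..t, t ^ 2 * ξ ^ (p - 2) / ((t - ξ) ^ 2 + h ^ 2 * ξ ^ (2 * p)))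
        ≤ 4 / (1 - p) + 4 + 4 ^ p / h ^ 2 := by
  refine ⟨fun t _ => aux_int_s11 p h t hp hh, ⟨max
    (∫ ξ in Set.Ici (1 : ℝ), ((2 : ℝ) ^ (1 / (1 - p))) ^ 2 / h ^ 2 * ξ ^ (-p - 2))
    (4 / (1 - p) + 4 + 4 ^ p / h ^ 2 + 1 / h ^ 2 + 1), fun t ht => ?_⟩,
    fun t ht => aux_C p h hp hh t ht⟩
  rcases le_total t ((2 : ℝ) ^ (1 / (1 - p))) with h1 | h1
  · exact (aux_A p h hp hh t _ ht h1).trans (le_max_left _ _)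
  · exact (aux_B p h hp hh t h1).trans (le_max_right _ _)
end

section
/- Let p ∈ (0,1), h > 0, and let μ be a finite Borel measure on [0, ∞). Then the double integrals ∫₁^∞ ∫_{[0,∞)} ξ^p / ((t − ξ)² + h²ξ^{2p}) dμ(t) dξ and ∫₁^∞ ∫_{[0,∞)} t² ξ^{p−2} / ((t − ξ)² + h²ξ^{2p}) dμ(t) dξ are both finite. -/
open MeasureTheory

lemma aux_rpow {p x y : ℝ} (hp : p ∈ Set.Ioo (0 : ℝ) 1) (hx : 0 ≤ x) (hy : 0 ≤ y)
    (hxy : x ≤ 2 * y) : x ^ p ≤ 2 * y ^ p := by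
  have h1 : x ^ p ≤ (2 * y) ^ p := Real.rpow_le_rpow hx hxy hp.1.le
  rw [Real.mul_rpow (by norm_num) hy] at h1
  have h2 : (2 : ℝ) ^ p ≤ 2 ^ (1 : ℝ) :=
    Real.rpow_le_rpow_of_exponent_le (by norm_num) hp.2.le
  rw [Real.rpow_one] at h2
  have h3 : 0 ≤ y ^ p := Real.rpow_nonneg hy p
  nlinarith

lemma aux_point {p h t ξ w : ℝ} (hp : p ∈ Set.Ioo (0 : ℝ) 1) (hh : 0 < h) (ht : 0 ≤ t)
    (hξ : 1 ≤ ξ) (hw : 0 ≤ w) (hA : ξ / 2 ≤ |t - ξ| → w * ξ ^ 2 ≤ 9 * (t - ξ) ^ 2)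
    (hB : |t - ξ| < ξ / 2 → w ≤ 9 / 4) :
    w * ξ ^ p / ((t - ξ) ^ 2 + h ^ 2 * ξ ^ (2 * p)) ≤
      9 * ξ ^ (p - 2) + 9 * Real.pi / h *
        ProbabilityTheory.cauchyPDFReal t (Real.toNNReal (h * t ^ p / 2)) ξ := by
  have hξ0 : 0 < ξ := by linarith
  have hq : 0 < ξ ^ p := Real.rpow_pos_of_pos hξ0 p
  have hs : 0 ≤ t ^ p := Real.rpow_nonneg ht p
  have e1 : ξ ^ (2 * p) = (ξ ^ p) ^ 2 := by
    rw [mul_comm, Real.rpow_mul hξ0.le]; norm_num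
  have e2 : ξ ^ (p - 2) = ξ ^ p / ξ ^ 2 := by
    rw [Real.rpow_sub hξ0]; norm_num
  have hpi := Real.pi_pos
  have e3 : 9 * Real.pi / h *
        ProbabilityTheory.cauchyPDFReal t (Real.toNNReal (h * t ^ p / 2)) ξ
      = 9 / 2 * t ^ p / ((t - ξ) ^ 2 + (h * t ^ p / 2) ^ 2) := by
    rw [ProbabilityTheory.cauchyPDFReal_def, Real.coe_toNNReal _ (by positivity),
      show (ξ - t) ^ 2 = (t - ξ) ^ 2 by ring, div_eq_mul_inv (9 / 2 * t ^ p)]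
    generalize ((t - ξ) ^ 2 + (h * t ^ p / 2) ^ 2)⁻¹ = z
    field_simp
  rw [e1, e2, e3]
  generalize hqd : ξ ^ p = q at *
  have hD : 0 < (t - ξ) ^ 2 + h ^ 2 * q ^ 2 := by positivity
  by_cases hc : ξ / 2 ≤ |t - ξ|
  · have hA := hA hc
    have : w * q / ((t - ξ) ^ 2 + h ^ 2 * q ^ 2) ≤ 9 * (q / ξ ^ 2) := by
      rw [← mul_div_assoc, div_le_div_iff₀ hD (by positivity)]
      have : 0 ≤ h ^ 2 * q ^ 2 := by positivity
      nlinarith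
    have : 0 ≤ 9 / 2 * t ^ p / ((t - ξ) ^ 2 + (h * t ^ p / 2) ^ 2) := by positivity
    linarith
  · push Not at hc
    have hB := hB hc
    rw [abs_lt] at hc
    have ht0 : 0 < t := by linarith
    have hs0 : 0 < t ^ p := Real.rpow_pos_of_pos ht0 p
    have h1 : q ≤ 2 * t ^ p := hqd ▸ aux_rpow hp hξ0.le ht (by linarith)
    have h2 : t ^ p ≤ 2 * q := hqd ▸ aux_rpow hp ht hξ0.le (by linarith)
    have : w * q / ((t - ξ) ^ 2 + h ^ 2 * q ^ 2) ≤
        9 / 2 * t ^ p / ((t - ξ) ^ 2 + (h * t ^ p / 2) ^ 2) := by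
      apply div_le_div₀ (by positivity) _ (by positivity) _
      · nlinarith
      · have : (h * t ^ p / 2) ^ 2 ≤ (h * q) ^ 2 := by
          apply pow_le_pow_left₀ (by positivity)
          nlinarith
        nlinarith
    have : 0 ≤ 9 * (q / ξ ^ 2) := by positivity
    linarith

lemma aux_lint {p h : ℝ} (hp : p ∈ Set.Ioo (0 : ℝ) 1)
    (μ : Measure ℝ) [IsFiniteMeasure μ] (hμ : μ (Set.Iio 0) = 0) (K : ℝ → ℝ → ℝ)
    (hK : Measurable (Function.uncurry K))
    (hb : ∀ t ξ, 0 ≤ t → 1 ≤ ξ → K ξ t ≤ 9 * ξ ^ (p - 2) + 9 * Real.pi / h *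
        ProbabilityTheory.cauchyPDFReal t (Real.toNNReal (h * t ^ p / 2)) ξ) (hh : 0 < h) :
    (∫⁻ ξ in Set.Ici (1 : ℝ), ∫⁻ t, ENNReal.ofReal (K ξ t) ∂μ) < ⊤ := by
  have hpi := Real.pi_pos
  rw [lintegral_lintegral_swap (by
    have : Measurable (fun x : ℝ × ℝ => ENNReal.ofReal (K x.1 x.2)) :=
      ENNReal.measurable_ofReal.comp hK
    exact this.aemeasurable)]
  have hI : (∫⁻ ξ in Set.Ici (1 : ℝ), ENNReal.ofReal (9 * ξ ^ (p - 2))) < ⊤ := by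
    apply IntegrableOn.setLIntegral_lt_top
    rw [integrableOn_Ici_iff_integrableOn_Ioi]
    exact (integrableOn_Ioi_rpow_of_lt (by linarith [hp.2]) one_pos).const_mul 9
  set C := ∫⁻ ξ in Set.Ici (1 : ℝ), ENNReal.ofReal (9 * ξ ^ (p - 2)) with hC
  have hae : ∀ᵐ t ∂μ, (∫⁻ ξ in Set.Ici (1 : ℝ), ENNReal.ofReal (K ξ t)) ≤
      C + ENNReal.ofReal (9 * Real.pi / h) := by
    have : ∀ᵐ t ∂μ, 0 ≤ t := by
      rw [ae_iff]; simpa [Set.Iio] using hμ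
    filter_upwards [this] with t ht
    set γ := Real.toNNReal (h * t ^ p / 2)
    calc (∫⁻ ξ in Set.Ici (1 : ℝ), ENNReal.ofReal (K ξ t))
        ≤ ∫⁻ ξ in Set.Ici (1 : ℝ), (ENNReal.ofReal (9 * ξ ^ (p - 2)) +
            ENNReal.ofReal (9 * Real.pi / h) * ProbabilityTheory.cauchyPDF t γ ξ) := by
          apply setLIntegral_mono' measurableSet_Ici
          intro ξ hξ
          rw [ProbabilityTheory.cauchyPDF_def, ← ENNReal.ofReal_mul (by positivity)]
          exact (ENNReal.ofReal_le_ofReal (hb t ξ ht hξ)).trans ENNReal.ofReal_add_le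
      _ = C + ENNReal.ofReal (9 * Real.pi / h) *
            ∫⁻ ξ in Set.Ici (1 : ℝ), ProbabilityTheory.cauchyPDF t γ ξ := by
          rw [lintegral_add_left (by fun_prop), lintegral_const_mul _ (by fun_prop)]
      _ ≤ C + ENNReal.ofReal (9 * Real.pi / h) * 1 := by
          gcongr
          refine (setLIntegral_le_lintegral _ _).trans ?_
          by_cases hγ : γ = 0
          · simp [hγ]
          · rw [ProbabilityTheory.lintegral_cauchyPDF_eq_one t hγ]
      _ = _ := by rw [mul_one]
  refine (lintegral_mono_ae hae).trans_lt ?_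
  rw [lintegral_const]
  exact ENNReal.mul_lt_top (ENNReal.add_lt_top.2 ⟨hI, ENNReal.ofReal_lt_top⟩)
    (measure_lt_top _ _)

/-- For `p ∈ (0,1)`, `h > 0` and a finite Borel measure `μ` on `[0,∞)`
(formalized as a finite measure on `ℝ` vanishing on `(-∞,0)`), the double integrals
`∫₁^∞ ∫ ξ^p / ((t−ξ)² + h²ξ^{2p}) dμ(t) dξ` and
`∫₁^∞ ∫ t²ξ^{p−2} / ((t−ξ)² + h²ξ^{2p}) dμ(t) dξ` are both finite. -/
theorem stmt12 (p h : ℝ) (hp : p ∈ Set.Ioo (0 : ℝ) 1) (hh : 0 < h)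
    (μ : Measure ℝ) [IsFiniteMeasure μ] (hμ : μ (Set.Iio 0) = 0) :
    (∫⁻ ξ in Set.Ici (1 : ℝ), ∫⁻ t,
        ENNReal.ofReal (ξ ^ p / ((t - ξ) ^ 2 + h ^ 2 * ξ ^ (2 * p))) ∂μ) < ⊤ ∧
    (∫⁻ ξ in Set.Ici (1 : ℝ), ∫⁻ t,
        ENNReal.ofReal (t ^ 2 * ξ ^ (p - 2) / ((t - ξ) ^ 2 + h ^ 2 * ξ ^ (2 * p))) ∂μ) < ⊤ := by
  constructor
  · refine aux_lint hp μ hμ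
      (fun ξ t => ξ ^ p / ((t - ξ) ^ 2 + h ^ 2 * ξ ^ (2 * p))) ?_ ?_ hh
    · unfold Function.uncurry
      fun_prop
    · intro t ξ ht hξ
      have := aux_point (w := 1) hp hh ht hξ zero_le_one ?_ ?_
      · rwa [one_mul] at this
      · intro hc
        have := pow_le_pow_left₀ (by linarith) hc 2
        rw [sq_abs] at this
        nlinarith
      · intro _
        norm_num
  · refine aux_lint hp μ hμ
      (fun ξ t => t ^ 2 * ξ ^ (p - 2) / ((t - ξ) ^ 2 + h ^ 2 * ξ ^ (2 * p))) ?_ ?_ hh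
    · unfold Function.uncurry
      fun_prop
    · intro t ξ ht hξ
      have hξ0 : 0 < ξ := by linarith
      have e2 : t ^ 2 * ξ ^ (p - 2) = t ^ 2 / ξ ^ 2 * ξ ^ p := by
        rw [Real.rpow_sub hξ0]
        norm_num
        ring
      have := aux_point (w := t ^ 2 / ξ ^ 2) hp hh ht hξ (by positivity) ?_ ?_
      · simpa only [e2] using this
      · intro hc
        rw [div_mul_cancel₀ _ (by positivity)]
        have h3 : t ≤ 3 * |t - ξ| := by
          rcases abs_cases (t - ξ) with h | h <;> linarith
        have := pow_le_pow_left₀ ht h3 2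
        rw [mul_pow, sq_abs] at this
        linarith
      · intro hc
        rw [abs_lt] at hc
        rw [div_le_iff₀ (by positivity)]
        nlinarith
end

section
/- Let p ∈ [0,1), b₁ > 0, and let (r_n)_{n≥1} be an increasing sequence of positive real numbers satisfying r_{n+1} ≥ r_n + b₁(r_n^p + r_{n+1}^p) for all n. Set c = b₁(1−p). Then there exists n₀ ∈ ℕ such that |r_j − r_n| ≥ c · max(r_j^p, r_n^p) · |j − n| for all j, n ≥ n₀. -/
/-- Let `p ∈ [0,1)`, `b₁ > 0`, and let `(r_n)` be an increasing sequence of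
positive reals with `r_{n+1} ≥ r_n + b₁(r_n^p + r_{n+1}^p)`.  With `c = b₁(1−p)`, there is `n₀`
such that `|r_j − r_n| ≥ c · max(r_j^p, r_n^p) · |j − n|` for all `j, n ≥ n₀`. -/
theorem stmt14 (p b₁ : ℝ) (hp : p ∈ Set.Ico (0 : ℝ) 1) (hb₁ : 0 < b₁)
    (r : ℕ → ℝ) (hpos : ∀ n, 0 < r n) (hmono : StrictMono r)
    (hsep : ∀ n, r n + b₁ * (r n ^ p + r (n + 1) ^ p) ≤ r (n + 1)) :
    ∃ n₀ : ℕ, ∀ j n : ℕ, n₀ ≤ j → n₀ ≤ n →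
      b₁ * (1 - p) * max (r j ^ p) (r n ^ p) * |(j : ℝ) - (n : ℝ)| ≤ |r j - r n| := by
  obtain ⟨hp0, hp1⟩ := hp
  have hq : 0 < 1 - p := by linarith
  have split : ∀ n, r n ^ p * r n ^ (1 - p) = r n := by
    intro n
    rw [← Real.rpow_add (hpos n)]
    simp
  have step : ∀ n, b₁ * (1 - p) ≤ r (n + 1) ^ (1 - p) - r n ^ (1 - p) := by
    intro n
    have h1 := Real.geom_mean_le_arith_mean2_weighted hp0 hq.le (hpos (n + 1)).le (hpos n).le
      (by ring)
    have h2 := split (n + 1)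
    have hy : 0 < r (n + 1) ^ p := Real.rpow_pos_of_pos (hpos _) _
    have hx : 0 < r n ^ p := Real.rpow_pos_of_pos (hpos _) _
    have h3 := hsep n
    have h4 : b₁ * r (n + 1) ^ p ≤ r (n + 1) - r n := by nlinarith
    have h5 := mul_le_mul_of_nonneg_left h4 hq.le
    refine le_of_mul_le_mul_left ?_ hy
    linarith
  have tele : ∀ n k : ℕ, b₁ * (1 - p) * k ≤ r (n + k) ^ (1 - p) - r n ^ (1 - p) := by
    intro n k
    induction k with
    | zero => simp
    | succ k ih =>
      have := step (n + k)
      rw [← add_assoc]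
      push_cast
      linarith
  have key : ∀ n k : ℕ, b₁ * (1 - p) * r (n + k) ^ p * k ≤ r (n + k) - r n := by
    intro n k
    have hy : 0 < r (n + k) ^ p := Real.rpow_pos_of_pos (hpos _) _
    have h1 := mul_le_mul_of_nonneg_left (tele n k) hy.le
    have h2 := split (n + k)
    have h3 := split n
    have hle : r n ^ p ≤ r (n + k) ^ p :=
      Real.rpow_le_rpow (hpos n).le (hmono.monotone (Nat.le_add_right n k)) hp0
    have h4 := mul_le_mul_of_nonneg_right hle (Real.rpow_pos_of_pos (hpos n) (1 - p)).le
    linarith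
  have fin : ∀ n k : ℕ, b₁ * (1 - p) * max (r (n + k) ^ p) (r n ^ p) *
      |((n + k : ℕ) : ℝ) - (n : ℝ)| ≤ |r (n + k) - r n| := by
    intro n k
    have hr := hmono.monotone (Nat.le_add_right n k)
    have hle : r n ^ p ≤ r (n + k) ^ p := Real.rpow_le_rpow (hpos n).le hr hp0
    rw [max_eq_left hle, abs_of_nonneg (sub_nonneg.2 hr)]
    have : ((n + k : ℕ) : ℝ) - (n : ℝ) = k := by push_cast; ring
    rw [this, abs_of_nonneg (Nat.cast_nonneg k)]
    exact key n k
  refine ⟨0, fun j n _ _ => ?_⟩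
  rcases le_total n j with h | h
  · obtain ⟨k, rfl⟩ := Nat.exists_eq_add_of_le h
    exact fin n k
  · obtain ⟨k, rfl⟩ := Nat.exists_eq_add_of_le h
    rw [max_comm, abs_sub_comm, abs_sub_comm (r j)]
    exact fin j k
end
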